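/- arXiv:1807.08933 — 3 statements merged into one kernel-verified Lean document; each statement's English description precedes it below -/
import Mathlib

section
/- If G is a 4-connected plane triangulation and v is a vertex of G with a chosen neighbour n(v), then the set N(v) \ {n(v)} induces a path in G. -/
/-- A combinatorial plane triangulation: a simple graph together with its set of
triangular faces, each edge on exactly two faces, satisfying Euler's formula. -/
structure PlaneTriangulation (V : Type*) [Fintype V] [DecidableEq V] where
  G : SimpleGraph V
  faces : Finset (Finset V)
  face_card : ∀ f ∈ faces, f.card = 3
  face_clique : ∀ f ∈ faces, ∀ a ∈ f, ∀ b ∈ f, a ≠ b → G.Adj a b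
  edge_two_faces : ∀ a b : V, G.Adj a b → (faces.filter (fun f => a ∈ f ∧ b ∈ f)).card = 2
  euler : (Fintype.card V : ℤ) - (G.edgeSet.ncard : ℤ) + (faces.card : ℤ) = 2

/-- The degree of a vertex. -/
noncomputable def PlaneTriangulation.deg {V : Type*} [Fintype V] [DecidableEq V]
    (T : PlaneTriangulation V) (v : V) : ℕ := (T.G.neighborSet v).ncard

/-- Membership in the family `E(4)`, witnessed by a proper `3`-colouring
`{B, W, R}` in which every red vertex has degree `4`. -/
def PlaneTriangulation.IsE4Coloring {V : Type*} [Fintype V] [DecidableEq V]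
    (T : PlaneTriangulation V) (B W R : Set V) : Prop :=
  B ∪ W ∪ R = Set.univ ∧ Disjoint B W ∧ Disjoint B R ∧ Disjoint W R ∧
  (∀ a ∈ B, ∀ b ∈ B, ¬ T.G.Adj a b) ∧
  (∀ a ∈ W, ∀ b ∈ W, ¬ T.G.Adj a b) ∧
  (∀ a ∈ R, ∀ b ∈ R, ¬ T.G.Adj a b) ∧
  (∀ v ∈ R, T.deg v = 4)

def FourConnected {V : Type*} [Fintype V] (G : SimpleGraph V) : Prop :=
  5 ≤ Fintype.card V ∧ ∀ S : Set V, S.ncard ≤ 3 → (G.induce Sᶜ).Connected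

/-- A graph is a path graph: a nonempty tree in which every vertex has degree at most 2. -/
def IsPathGraph {α : Type*} (H : SimpleGraph α) : Prop :=
  H.IsTree ∧ ∀ u : α, (H.neighborSet u).ncard ≤ 2

/-!
Split every vertex `v` into one copy, a corner, for each component of its link; this turns the face
complex into a closed surface with the same edges and faces. If it has `k` components, then over
`ℤ/2` the face-edge and edge-corner incidence matrices have corank at most `k` and product zero, so
Euler's formula gives `#corners + 2 ≤ #V + 2k`. At most `2(#corners - #V) ≤ 4k - 4` corners share
their vertex with another, so some component contains at most three of them. Deleting these at most
three vertices would separate this component from the others, so 4-connectedness forces `k = 1`.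
Hence all links are connected and every mod `2` cycle is a sum of faces. If a triangle is the sum of
the faces in a set `x`, then `x` is constant across all edges that leave the triangle; since the
triangle does not separate the graph, `x` would be constant altogether unless the triangle is itself
a face. So the graph induced on `N(v)` is the link of `v`, which is connected and `2`-regular.
-/

open Matrix Module

theorem card_setOf_not_injective_at_add_le {α β : Type*} [Finite α] {φ : α → β}
    (hφ : Function.Surjective φ) :
    {a | ∃ a', a' ≠ a ∧ φ a' = φ a}.ncard + 2 * Nat.card β ≤ 2 * Nat.card α := by
  -- If `a` is in the range of the section `s`, the other point `a'` of its fibre is not.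
  obtain ⟨s, hs⟩ := hφ.hasRightInverse
  have hsub : {a | ∃ a', a' ≠ a ∧ φ a' = φ a} ⊆ (Set.range s)ᶜ ∪ (s ∘ φ) '' (Set.range s)ᶜ := by
    rintro a ⟨a', hne, haa⟩
    by_cases ha : a ∈ Set.range s
    · obtain ⟨b, rfl⟩ := ha
      rw [hs b] at haa
      refine Or.inr ⟨a', ?_, by simp [haa]⟩
      rintro ⟨b', rfl⟩
      exact hne (by rw [← haa, hs b'])
    · exact Or.inl ha
  have hrange : (Set.range s).ncard = Nat.card β := by
    rw [← Set.image_univ, Set.ncard_image_of_injective _ hs.injective, Set.ncard_univ]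
  have hcompl := Set.ncard_add_ncard_compl (Set.range s)
  have hbound := (Set.ncard_le_ncard hsub).trans (Set.ncard_union_le _ _)
  have himage := Set.ncard_image_le (f := s ∘ φ) (Set.toFinite (Set.range s)ᶜ)
  omega

theorem card_le_rank_add_card_of_ker {m n C K : Type*} [Field K] [Fintype n]
    [Fintype C] (A : Matrix m n K) (π : n → C)
    (h : ∀ x, A *ᵥ x = 0 → ∀ i j, π i = π j → x i = x j) :
    Fintype.card n ≤ A.rank + Fintype.card C := by
  have hker : LinearMap.ker A.mulVecLin ≤ LinearMap.range (LinearMap.funLeft K K π) := by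
    intro x hx
    have hfactors : Function.FactorsThrough x π := fun i j hij => h x (by simpa using hx) i j hij
    exact ⟨Function.extend π x 0, funext fun i => hfactors.extend_apply 0 i⟩
  calc Fintype.card n
      = A.rank + finrank K (LinearMap.ker A.mulVecLin) := by
        rw [Matrix.rank, LinearMap.finrank_range_add_finrank_ker, finrank_fintype_fun_eq_card]
    _ ≤ A.rank + finrank K (LinearMap.range (LinearMap.funLeft K K π)) := by
        gcongr
        exact Submodule.finrank_mono hker
    _ ≤ A.rank + Fintype.card C := by
        gcongr
        exact (LinearMap.finrank_range_le _).trans_eq (finrank_fintype_fun_eq_card K)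

theorem finrank_range_vecMulLinear {m n K : Type*} [Field K] [Fintype m] [Fintype n]
    (A : Matrix m n K) : finrank K (LinearMap.range A.vecMulLinear) = A.rank := by
  rw [← Matrix.rank_transpose, Matrix.rank, Matrix.mulVecLin_transpose]

theorem exists_vecMul_eq_of_mul_eq_zero {l m n K : Type*} [Field K] [Fintype l] [Fintype m]
    [Fintype n] {A : Matrix l m K} {B : Matrix m n K} (hAB : A * B = 0)
    (hrank : Fintype.card m ≤ A.rank + B.rank) {z : m → K} (hz : z ᵥ* B = 0) :
    ∃ x, x ᵥ* A = z := by
  have hle : LinearMap.range A.vecMulLinear ≤ LinearMap.ker B.vecMulLinear := by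
    rintro _ ⟨x, rfl⟩
    simp [Matrix.vecMul_vecMul, hAB]
  have hker : finrank K (LinearMap.ker B.vecMulLinear) ≤
      finrank K (LinearMap.range A.vecMulLinear) := by
    have := LinearMap.finrank_range_add_finrank_ker B.vecMulLinear
    rw [finrank_range_vecMulLinear, finrank_fintype_fun_eq_card] at this
    rw [finrank_range_vecMulLinear]
    omega
  exact (Submodule.eq_of_le_of_finrank_le hle hker).ge hz

section Graph

variable {α β R : Type*} {H : SimpleGraph α}

theorem imp_of_reachable {p : α → Prop} (hp : ∀ a b, H.Adj a b → p a → p b) {a b : α}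
    (hab : H.Reachable a b) : p a → p b := by
  obtain ⟨w⟩ := hab
  induction w with
  | nil => exact id
  | cons h _ ih => exact fun ha => ih (hp _ _ h ha)

theorem eq_of_reachable_of_adj_inter_nonempty {S : α → Set β} {x : β → R}
    (hconst : ∀ a, ∀ k ∈ S a, ∀ l ∈ S a, x k = x l)
    (hadj : ∀ a b, H.Adj a b → (S a ∩ S b).Nonempty) {a b : α} (hab : H.Reachable a b)
    {k l : β} (hk : k ∈ S a) (hl : l ∈ S b) : x k = x l := by
  refine imp_of_reachable (p := fun c => ∀ m ∈ S c, x k = x m) (fun c d hcd hc m hm => ?_) hab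
    (hconst a k hk) l hl
  obtain ⟨n, hnc, hnd⟩ := hadj c d hcd
  exact (hc n hnc).trans (hconst d n hnd m hm)

theorem two_mul_card_edgeSet {d : ℕ} [Finite α] (hdeg : ∀ a, (H.neighborSet a).ncard = d) :
    2 * Nat.card H.edgeSet = d * Nat.card α := by
  classical
  have := Fintype.ofFinite α
  have hsum := H.sum_degrees_eq_twice_card_edges
  simp only [← SimpleGraph.card_neighborSet_eq_degree, Fintype.card_eq_nat_card,
    Nat.card_coe_set_eq, hdeg, Finset.sum_const, smul_eq_mul] at hsum
  rw [Nat.card_eq_fintype_card, Nat.card_eq_fintype_card, ← SimpleGraph.edgeFinset_card, ← hsum,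
    Finset.card_univ, mul_comm]

theorem isTree_deleteEdges_of_forall_ncard_neighborSet_eq_two [Finite α] (hH : H.Connected)
    (hdeg : ∀ a, (H.neighborSet a).ncard = 2) {a b : α} (hab : H.Adj a b) :
    (H.deleteEdges {s(a, b)}).IsTree := by
  have hcycles : H.IsCycles := fun v _ => hdeg v
  refine SimpleGraph.isTree_iff_connected_and_card.2
    ⟨hH.connected_delete_edge_of_not_isBridge ?_, ?_⟩
  · rw [SimpleGraph.isBridge_iff]
    simpa using hcycles.reachable_deleteEdges hab
  · rw [SimpleGraph.edgeSet_deleteEdges, Nat.card_coe_set_eq,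
      Set.ncard_sdiff_singleton_add_one (H.mem_edgeSet.2 hab) (Set.toFinite _),
      ← Nat.card_coe_set_eq]
    have := two_mul_card_edgeSet hdeg
    omega

theorem isPathGraph_induce_compl_singleton [Finite α] (hH : H.Preconnected)
    (hdeg : ∀ a, (H.neighborSet a).ncard = 2) (a : α) : IsPathGraph (H.induce {a}ᶜ) := by
  classical
  have := Fintype.ofFinite α
  have : Nonempty α := ⟨a⟩
  obtain ⟨b, c, hbc, hN⟩ := Set.ncard_eq_two.1 (hdeg a)
  have hab : H.Adj a b := hN.ge (by simp)
  have htree := isTree_deleteEdges_of_forall_ncard_neighborSet_eq_two ⟨hH⟩ hdeg hab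
  have hleaf : (H.deleteEdges {s(a, b)}).degree a = 1 := by
    rw [← SimpleGraph.card_neighborSet_eq_degree, Fintype.card_eq_nat_card, Nat.card_coe_set_eq,
      Set.ncard_eq_one]
    refine ⟨c, ?_⟩
    ext w
    have hw : H.Adj a w ↔ w = b ∨ w = c := Set.ext_iff.1 hN w
    simp only [SimpleGraph.mem_neighborSet, SimpleGraph.deleteEdges_adj, hw,
      Set.mem_singleton_iff]
    grind
  have hinduce : (H.deleteEdges {s(a, b)}).induce {a}ᶜ = H.induce {a}ᶜ := by
    ext ⟨u, hu⟩ ⟨w, hw⟩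
    simp only [SimpleGraph.induce_adj, SimpleGraph.deleteEdges_adj]
    grind
  refine ⟨?_, fun u => ?_⟩
  · rw [← hinduce]
    exact ⟨htree.connected.induce_compl_singleton_of_degree_eq_one hleaf,
      htree.isAcyclic.induce _⟩
  · rw [← hdeg u, ← Set.ncard_image_of_injective _ Subtype.val_injective]
    exact Set.ncard_le_ncard (by rintro _ ⟨w, hw, rfl⟩; exact hw)

theorem IsPathGraph.of_iso {K : SimpleGraph β} (e : H ≃g K) (hH : IsPathGraph H) :
    IsPathGraph K := by
  refine ⟨e.isTree_iff.1 hH.1, fun u => ?_⟩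
  rw [← Nat.card_coe_set_eq, Nat.card_congr (e.symm.mapNeighborSet u), Nat.card_coe_set_eq]
  exact hH.2 _

theorem isPathGraph_induce_sdiff_singleton {s : Set α} [Finite s]
    (hs : (H.induce s).Preconnected)
    (hdeg : ∀ a, ((H.induce s).neighborSet a).ncard = 2) {a : α} (ha : a ∈ s) :
    IsPathGraph (H.induce (s \ {a})) :=
  (isPathGraph_induce_compl_singleton hs hdeg ⟨a, ha⟩).of_iso
    { toFun x := ⟨x.1.1, x.1.2, fun h => x.2 (Subtype.ext h)⟩
      invFun x := ⟨⟨x, x.2.1⟩, fun h => x.2.2 (congrArg Subtype.val h)⟩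
      left_inv _ := rfl
      right_inv _ := rfl
      map_rel_iff' := Iff.rfl }

end Graph

namespace FourConnected

variable {V : Type*} [Fintype V] {G : SimpleGraph V}

theorem preconnected_induce_compl (hG : FourConnected G) {t : Set V} (ht : t.ncard ≤ 3) :
    (G.induce tᶜ).Preconnected :=
  (hG.2 t ht).preconnected

theorem preconnected (hG : FourConnected G) : G.Preconnected := by
  have hempty := (hG.2 ∅ (by simp)).preconnected
  rw [Set.compl_empty] at hempty
  exact (SimpleGraph.induceUnivIso G).preconnected_iff.1 hempty

theorem exists_adj (hG : FourConnected G) (v : V) : ∃ w, G.Adj v w :=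
  have : Nontrivial V := Fintype.one_lt_card_iff_nontrivial.1 (by linarith [hG.1])
  hG.preconnected.exists_adj_of_nontrivial v

variable {C : Type*} [Finite C] {S : SimpleGraph C} {φ : C → V}

theorem preconnected_of_component (hG : FourConnected G)
    (hadj : ∀ a b, G.Adj a b → ∃ c d, φ c = a ∧ φ d = b ∧ S.Adj c d)
    (hcomp : ∀ K : S.ConnectedComponent, 4 ≤ (φ '' K.supp).ncard) (K : S.ConnectedComponent)
    (hK : {c | S.connectedComponentMk c = K ∧ ∃ d, d ≠ c ∧ φ d = φ c}.ncard ≤ 3) :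
    S.Preconnected := by
  set t : Set V := φ '' {c | S.connectedComponentMk c = K ∧ ∃ d, d ≠ c ∧ φ d = φ c}
  have htcard : t.ncard ≤ 3 := (Set.ncard_image_le (Set.toFinite _)).trans hK
  have hunique : ∀ c ∈ K.supp, φ c ∉ t → ∀ d, φ d = φ c → d = c := by
    intro c hc hct d hd
    by_contra hne
    exact hct ⟨c, ⟨hc, d, hne, hd⟩, rfl⟩
  have hmeets : ∀ L : S.ConnectedComponent, ∃ c ∈ L.supp, φ c ∉ t := by
    intro L
    obtain ⟨_, ⟨c, hc, rfl⟩, hct⟩ :=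
      Set.exists_mem_notMem_of_ncard_lt_ncard (htcard.trans_lt (hcomp L))
    exact ⟨c, hc, hct⟩
  have hstep : ∀ a b : ↥tᶜ, (G.induce tᶜ).Adj a b → a.1 ∈ φ '' K.supp → b.1 ∈ φ '' K.supp := by
    rintro ⟨a, ha⟩ ⟨b, hb⟩ hab ⟨c, hc, hca⟩
    obtain ⟨c', d, hc', rfl, hcd⟩ := hadj a b hab
    obtain rfl : c' = c := hunique c hc (hca ▸ ha) c' (hc'.trans hca.symm)
    exact ⟨d, (SimpleGraph.ConnectedComponent.sound hcd.reachable.symm).trans hc, rfl⟩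
  have hall : ∀ L, L = K := by
    intro L
    obtain ⟨c, hcK, hc⟩ := hmeets K
    obtain ⟨d, hdL, hd⟩ := hmeets L
    obtain ⟨d', hd'K, hd'⟩ := imp_of_reachable (p := fun a => a.1 ∈ φ '' K.supp) hstep
      (hG.preconnected_induce_compl htcard ⟨φ c, hc⟩ ⟨φ d, hd⟩) ⟨c, hcK, rfl⟩
    have hdd' : d = d' := hunique d' hd'K (hd' ▸ hd) d hd'.symm
    exact hdL.symm.trans (hdd' ▸ hd'K)
  exact fun c d => SimpleGraph.ConnectedComponent.exact ((hall _).trans (hall _).symm)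

theorem preconnected_of_card_add_two_le (hG : FourConnected G)
    (hadj : ∀ a b, G.Adj a b → ∃ c d, φ c = a ∧ φ d = b ∧ S.Adj c d)
    (hcomp : ∀ K : S.ConnectedComponent, 4 ≤ (φ '' K.supp).ncard)
    (hcard : Nat.card C + 2 ≤ Nat.card V + 2 * Nat.card S.ConnectedComponent) :
    S.Preconnected := by
  classical
  have := Fintype.ofFinite C
  have := Fintype.ofFinite S.ConnectedComponent
  have hsurj : Function.Surjective φ := fun v =>
    let ⟨w, hvw⟩ := hG.exists_adj v
    let ⟨c, _, hc, _⟩ := hadj v w hvw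
    ⟨c, hc⟩
  let P : Finset C := Finset.univ.filter fun c => ∃ d, d ≠ c ∧ φ d = φ c
  have hP : P.card < (Finset.univ : Finset S.ConnectedComponent).card * 4 := by
    have hle := card_setOf_not_injective_at_add_le hsurj
    rw [← Finset.coe_filter_univ, Set.ncard_coe_finset] at hle
    rw [Finset.card_univ, ← Nat.card_eq_fintype_card]
    change P.card + _ ≤ _ at hle
    omega
  obtain ⟨K, -, hK⟩ :=
    Finset.exists_card_fiber_lt_of_card_lt_mul (f := S.connectedComponentMk) hP
  refine hG.preconnected_of_component hadj hcomp K (Nat.le_of_lt_succ (lt_of_eq_of_lt ?_ hK))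
  rw [← Set.ncard_coe_finset]
  congr 1
  ext c
  simp [P, and_comm]

end FourConnected

namespace PlaneTriangulation

variable {V : Type*} [Fintype V] [DecidableEq V] (T : PlaneTriangulation V)

/-- The faces on the edge `ab`. -/
def facesOn (a b : V) : Finset T.faces := {f | a ∈ f.1 ∧ b ∈ f.1}

/-- The link of a vertex `v`: the graph on the neighbours of `v` whose edges are the sides opposite
to `v` of the faces at `v`. -/
def link (v : V) : SimpleGraph (T.G.neighborSet v) where
  Adj a b := a ≠ b ∧ {v, a.1, b.1} ∈ T.faces
  symm := ⟨fun a b h => ⟨h.1.symm, by rw [Finset.pair_comm]; exact h.2⟩⟩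
  loopless := ⟨fun _ h => h.1 rfl⟩

/-- The vertices of the normalisation of the face complex, in which every vertex `v` is split into
one copy for each component of its link. -/
abbrev Corner : Type _ := Σ v, (T.link v).ConnectedComponent

noncomputable instance : Fintype T.Corner := Fintype.ofFinite _

noncomputable instance : DecidableEq T.Corner := Classical.decEq _

noncomputable instance : Fintype T.G.edgeSet := Fintype.ofFinite _

variable {T}

/-- The copy of `v` that is an end of the edge `va` in the normalisation. -/
def corner {v a : V} (h : T.G.Adj v a) : T.Corner := ⟨v, (T.link v).connectedComponentMk ⟨a, h⟩⟩

variable (T) in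
/-- The `1`-skeleton of the normalisation. It has the same edges as the triangulation. -/
def skeleton : SimpleGraph T.Corner where
  Adj c d := ∃ a b, ∃ h : T.G.Adj a b, corner h = c ∧ corner h.symm = d
  symm := ⟨fun _ _ ⟨_, _, h, hc, hd⟩ => ⟨_, _, h.symm, hd, hc⟩⟩
  loopless := ⟨fun _ ⟨_, _, h, hc, hd⟩ => h.ne (congrArg Sigma.fst (hc.trans hd.symm))⟩

noncomputable instance : Fintype T.skeleton.ConnectedComponent := Fintype.ofFinite _

theorem mem_facesOn {a b : V} {f : T.faces} : f ∈ T.facesOn a b ↔ a ∈ f.1 ∧ b ∈ f.1 := by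
  simp [facesOn]

theorem facesOn_comm (a b : V) : T.facesOn a b = T.facesOn b a := by
  ext f
  rw [mem_facesOn, mem_facesOn, and_comm]

theorem card_facesOn {a b : V} (h : T.G.Adj a b) : (T.facesOn a b).card = 2 := by
  rw [← T.edge_two_faces a b h, ← Finset.card_map (Function.Embedding.subtype _)]
  congr 1
  ext f
  simp [facesOn, and_comm, and_assoc]

theorem exists_mem_facesOn {a b : V} (h : T.G.Adj a b) : ∃ f, f ∈ T.facesOn a b :=
  Finset.card_pos.1 (by rw [card_facesOn h]; norm_num)

theorem exists_eq_of_mem_facesOn {a b : V} (hab : a ≠ b) {f : T.faces} (hf : f ∈ T.facesOn a b) :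
    ∃ c, c ≠ a ∧ c ≠ b ∧ f.1 = {a, b, c} := by
  obtain ⟨ha, hb⟩ := mem_facesOn.1 hf
  obtain ⟨c, hc, hcab⟩ : ∃ c ∈ f.1, c ∉ ({a, b} : Finset V) :=
    Finset.exists_mem_notMem_of_card_lt_card
      (by rw [Finset.card_pair hab, T.face_card f f.2]; norm_num)
  simp only [Finset.mem_insert, Finset.mem_singleton, not_or] at hcab
  refine ⟨c, hcab.1, hcab.2, (Finset.eq_of_subset_of_card_le ?_ ?_).symm⟩
  · simp [Finset.insert_subset_iff, ha, hb, hc]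
  · rw [T.face_card f f.2,
      Finset.card_eq_three.2 ⟨a, b, c, hab, Ne.symm hcab.1, Ne.symm hcab.2, rfl⟩]

theorem exists_adj_mem_facesOn (f : T.faces) : ∃ a b, T.G.Adj a b ∧ f ∈ T.facesOn a b := by
  obtain ⟨a, ha, b, hb, hab⟩ := Finset.one_lt_card.1 (by rw [T.face_card f f.2]; norm_num)
  exact ⟨a, b, T.face_clique f f.2 a ha b hb hab, mem_facesOn.2 ⟨ha, hb⟩⟩

theorem exists_adj_mem_facesOn_of_mem {f : T.faces} {a : V} (ha : a ∈ f.1) :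
    ∃ b, T.G.Adj a b ∧ f ∈ T.facesOn a b := by
  obtain ⟨b, hb, hba⟩ := Finset.exists_mem_ne (by rw [T.face_card f f.2]; norm_num) a
  exact ⟨b, T.face_clique f f.2 a ha b hb hba.symm, mem_facesOn.2 ⟨ha, hb⟩⟩

theorem ncard_neighborSet_link (v : V) (a : T.G.neighborSet v) :
    ((T.link v).neighborSet a).ncard = 2 := by
  rw [← card_facesOn a.2, ← Set.ncard_coe_finset]
  refine Set.ncard_congr (fun b hb => ⟨{v, a.1, b.1}, hb.2⟩) (fun b hb => ?_) ?_ ?_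
  · simp [mem_facesOn]
  · rintro ⟨b, hvb⟩ ⟨c, _⟩ hab _ h
    have hfaces : ({v, a.1, b} : Finset V) = {v, a.1, c} := congrArg Subtype.val h
    have hb : b ∈ ({v, a.1, c} : Finset V) := hfaces ▸ by simp
    have hbv : b ≠ v := (T.G.ne_of_adj hvb).symm
    have hba : b ≠ a.1 := fun h => hab.1 (Subtype.ext h.symm)
    simpa [hbv, hba] using hb
  · intro f hf
    obtain ⟨b, hbv, hba, hfb⟩ := exists_eq_of_mem_facesOn (T.G.ne_of_adj a.2) hf
    have hvb : T.G.Adj v b := T.face_clique f f.2 v (by simp [hfb]) b (by simp [hfb]) hbv.symm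
    exact ⟨⟨b, hvb⟩, ⟨fun h => hba (congrArg Subtype.val h).symm, hfb ▸ f.2⟩, Subtype.ext hfb.symm⟩

theorem corner_eq_corner_iff {v a b : V} {ha : T.G.Adj v a} {hb : T.G.Adj v b} :
    corner ha = corner hb ↔ (T.link v).Reachable ⟨a, ha⟩ ⟨b, hb⟩ := by
  simp [corner]

theorem corner_eq_corner_of_mem_faces {v a b : V} (ha : T.G.Adj v a) (hb : T.G.Adj v b)
    (hab : a ≠ b) (hf : {v, a, b} ∈ T.faces) : corner ha = corner hb :=
  corner_eq_corner_iff.2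
    (SimpleGraph.Adj.reachable ⟨fun h => hab (congrArg Subtype.val h), hf⟩)

theorem exists_corner_eq (c : T.Corner) : ∃ v a, ∃ h : T.G.Adj v a, corner h = c := by
  obtain ⟨v, ⟨a, ha⟩⟩ := c
  exact ⟨v, a, ha, rfl⟩

theorem skeleton_adj_corner {a b : V} (h : T.G.Adj a b) :
    T.skeleton.Adj (corner h) (corner h.symm) :=
  ⟨a, b, h, rfl, rfl⟩

theorem four_le_ncard_image_supp (K : T.skeleton.ConnectedComponent) :
    4 ≤ (Sigma.fst '' K.supp).ncard := by
  obtain ⟨c, rfl⟩ := K.exists_rep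
  obtain ⟨v, a, ha, rfl⟩ := exists_corner_eq c
  obtain ⟨b, c, hbc, hN⟩ := Set.ncard_eq_two.1 (ncard_neighborSet_link v ⟨a, ha⟩)
  have hb : (T.link v).Adj ⟨a, ha⟩ b := hN.ge (by simp)
  have hc : (T.link v).Adj ⟨a, ha⟩ c := hN.ge (by simp)
  have hmem : ∀ u, (T.link v).Reachable u ⟨a, ha⟩ →
      u.1 ∈ Sigma.fst '' (T.skeleton.connectedComponentMk (corner ha)).supp := fun u hu =>
    ⟨corner u.2.symm, SimpleGraph.ConnectedComponent.sound
      (corner_eq_corner_iff.2 hu ▸ (skeleton_adj_corner u.2).symm.reachable), rfl⟩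
  exact (Set.three_lt_ncard (Set.toFinite _)).2
    ⟨v, ⟨corner ha, rfl, rfl⟩, a, hmem ⟨a, ha⟩ .rfl, b, hmem b hb.symm.reachable,
      c, hmem c hc.symm.reachable, T.G.ne_of_adj ha, T.G.ne_of_adj b.2, T.G.ne_of_adj c.2,
      Subtype.coe_ne_coe.2 hb.1, Subtype.coe_ne_coe.2 hc.1, Subtype.coe_ne_coe.2 hbc⟩

section Constancy

variable {R : Type*} {x : T.faces → R}

/-- `x` takes the same value on both faces at the edge `ab`. -/
def EqAcross (x : T.faces → R) (a b : V) : Prop :=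
  ∀ k ∈ T.facesOn a b, ∀ l ∈ T.facesOn a b, x k = x l

theorem eq_of_corner_eq_corner {v a b : V} (hx : ∀ u, T.G.Adj v u → EqAcross x v u)
    {ha : T.G.Adj v a} {hb : T.G.Adj v b} (hab : corner ha = corner hb) {k l : T.faces}
    (hk : k ∈ T.facesOn v a) (hl : l ∈ T.facesOn v b) : x k = x l := by
  refine eq_of_reachable_of_adj_inter_nonempty (S := fun a : T.G.neighborSet v =>
    (T.facesOn v a.1 : Set T.faces)) (fun a => hx a a.2) (fun a b hab => ?_)
    (corner_eq_corner_iff.1 hab) hk hl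
  exact ⟨⟨_, hab.2⟩, by simp [mem_facesOn]⟩

theorem eq_of_reachable_skeleton (hx : ∀ u v, T.G.Adj u v → EqAcross x u v) {a b c d : V}
    {hab : T.G.Adj a b} {hcd : T.G.Adj c d}
    (h : T.skeleton.Reachable (corner hab) (corner hcd)) {k l : T.faces}
    (hk : k ∈ T.facesOn a b) (hl : l ∈ T.facesOn c d) : x k = x l := by
  refine eq_of_reachable_of_adj_inter_nonempty
    (S := fun c => {f | ∃ a, ∃ h : T.G.Adj c.1 a, corner h = c ∧ f ∈ T.facesOn c.1 a})
    ?_ ?_ h ⟨b, hab, rfl, hk⟩ ⟨d, hcd, rfl, hl⟩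
  · rintro c k ⟨a, ha, hac, hk⟩ l ⟨b, hb, hbc, hl⟩
    exact eq_of_corner_eq_corner (hx c.1) (hac.trans hbc.symm) hk hl
  · rintro _ _ ⟨a, b, hab, rfl, rfl⟩
    obtain ⟨f, hf⟩ := exists_mem_facesOn hab
    exact ⟨f, ⟨b, hab, rfl, hf⟩, a, hab.symm, rfl, facesOn_comm a b ▸ hf⟩

end Constancy

variable (T) in
/-- The mod `2` incidence vector of the edges inside a vertex set. -/
def edgesIn (t : Finset V) (e : T.G.edgeSet) : ZMod 2 := if e.1.toFinset ⊆ t then 1 else 0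

variable (T) in
/-- The mod `2` incidence matrix of faces and edges. -/
def faceEdge : Matrix T.faces T.G.edgeSet (ZMod 2) := .of fun f => T.edgesIn f.1

open Classical in
variable (T) in
/-- The mod `2` incidence matrix of edges and corners. -/
noncomputable def edgeCorner : Matrix T.G.edgeSet T.Corner (ZMod 2) :=
  .of fun e c => if ∃ a b, ∃ h : T.G.Adj a b, s(a, b) = e.1 ∧ corner h = c then 1 else 0

theorem edgesIn_mk (t : Finset V) {a b : V} (h : T.G.Adj a b) :
    T.edgesIn t ⟨s(a, b), h⟩ = if a ∈ t ∧ b ∈ t then 1 else 0 := by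
  simp [edgesIn, Finset.subset_iff]

theorem edgeCorner_mk {a b : V} (h : T.G.Adj a b) :
    T.edgeCorner ⟨s(a, b), h⟩ = Pi.single (corner h) 1 + Pi.single (corner h.symm) 1 := by
  ext c
  have hne : corner h ≠ corner h.symm := (skeleton_adj_corner h).ne
  have hends : (∃ u v, ∃ h' : T.G.Adj u v, s(u, v) = s(a, b) ∧ corner h' = c) ↔
      c = corner h ∨ c = corner h.symm := by
    constructor
    · rintro ⟨u, v, h', he, rfl⟩
      obtain ⟨rfl, rfl⟩ | ⟨rfl, rfl⟩ := Sym2.eq_iff.1 he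
      · exact Or.inl rfl
      · exact Or.inr rfl
    · rintro (rfl | rfl)
      · exact ⟨a, b, h, rfl, rfl⟩
      · exact ⟨b, a, h.symm, Sym2.eq_swap, rfl⟩
  simp only [edgeCorner, Matrix.of_apply, hends, Pi.add_apply, Pi.single_apply]
  grind

theorem vecMul_faceEdge_mk (x : T.faces → ZMod 2) {a b : V} (h : T.G.Adj a b) :
    (x ᵥ* T.faceEdge) ⟨s(a, b), h⟩ = ∑ f ∈ T.facesOn a b, x f := by
  simp [Matrix.vecMul, dotProduct, faceEdge, edgesIn_mk, facesOn, Finset.sum_filter]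

theorem eqAcross_iff_vecMul_faceEdge {x : T.faces → ZMod 2} {a b : V} (h : T.G.Adj a b) :
    EqAcross x a b ↔ (x ᵥ* T.faceEdge) ⟨s(a, b), h⟩ = 0 := by
  obtain ⟨k, l, hkl, hfaces⟩ := Finset.card_eq_two.1 (card_facesOn h)
  rw [vecMul_faceEdge_mk, EqAcross, hfaces, Finset.sum_pair hkl, CharTwo.add_eq_zero]
  simp only [Finset.mem_insert, Finset.mem_singleton, forall_eq_or_imp, forall_eq]
  grind

theorem edgesIn_dotProduct {a b c : V} (hab : T.G.Adj a b) (hbc : T.G.Adj b c)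
    (hca : T.G.Adj c a) (y : T.G.edgeSet → ZMod 2) :
    T.edgesIn {a, b, c} ⬝ᵥ y = y ⟨s(a, b), hab⟩ + y ⟨s(b, c), hbc⟩ + y ⟨s(c, a), hca⟩ := by
  have hab' := hab.ne
  have hbc' := hbc.ne
  have hca' := hca.ne
  have hedges : Finset.univ.filter (fun e : T.G.edgeSet => e.1.toFinset ⊆ {a, b, c}) =
      {⟨s(a, b), hab⟩, ⟨s(b, c), hbc⟩, ⟨s(c, a), hca⟩} := by
    ext ⟨⟨u, v⟩, huv⟩
    have huv' : u ≠ v := T.G.ne_of_adj huv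
    simp only [Finset.mem_filter, Finset.mem_univ, true_and, Finset.subset_iff, Sym2.mem_toFinset,
      Sym2.mem_iff, Finset.mem_insert, Finset.mem_singleton,
      forall_eq_or_imp, forall_eq]
    grind
  simp only [dotProduct, edgesIn, ite_mul, one_mul, zero_mul]
  rw [← Finset.sum_filter, hedges, Finset.sum_insert (by simp; grind),
    Finset.sum_pair (by simp; grind), add_assoc]

theorem edgesIn_vecMul_edgeCorner {a b c : V} (hab : T.G.Adj a b) (hbc : T.G.Adj b c)
    (hca : T.G.Adj c a) (ha : corner hab = corner hca.symm) (hb : corner hbc = corner hab.symm)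
    (hc : corner hca = corner hbc.symm) : T.edgesIn {a, b, c} ᵥ* T.edgeCorner = 0 := by
  ext d
  rw [Matrix.vecMul, edgesIn_dotProduct hab hbc hca]
  simp only [edgeCorner_mk, ha, hb, hc, Pi.add_apply, Pi.zero_apply]
  grind [CharTwo.add_self_eq_zero]

theorem faceEdge_mul_edgeCorner : T.faceEdge * T.edgeCorner = 0 := by
  refine funext fun f => (Matrix.mul_apply_eq_vecMul _ _ _).trans ?_
  obtain ⟨a, b, c, hab, hac, hbc, hf⟩ := Finset.card_eq_three.1 (T.face_card f f.2)
  have hclique := T.face_clique f f.2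
  have hadj_ab : T.G.Adj a b := hclique a (by simp [hf]) b (by simp [hf]) hab
  have hadj_bc : T.G.Adj b c := hclique b (by simp [hf]) c (by simp [hf]) hbc
  have hadj_ca : T.G.Adj c a := hclique c (by simp [hf]) a (by simp [hf]) hac.symm
  have hmem : {a, b, c} ∈ T.faces := hf ▸ f.2
  change T.edgesIn f.1 ᵥ* T.edgeCorner = 0
  rw [hf]
  refine edgesIn_vecMul_edgeCorner hadj_ab hadj_bc hadj_ca
    (corner_eq_corner_of_mem_faces _ _ hbc hmem) (corner_eq_corner_of_mem_faces _ _ hac.symm ?_)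
    (corner_eq_corner_of_mem_faces _ _ hab ?_)
  · convert hmem using 1
    grind
  · convert hmem using 1
    grind

variable (T)

theorem card_faces_le :
    T.faces.card ≤ T.faceEdge.rank + Nat.card T.skeleton.ConnectedComponent := by
  choose u v huv hface using T.exists_adj_mem_facesOn
  rw [← Fintype.card_coe, ← Matrix.rank_transpose, Nat.card_eq_fintype_card]
  refine card_le_rank_add_card_of_ker _
    (fun f => T.skeleton.connectedComponentMk (corner (huv f))) fun x hx k l hkl => ?_
  rw [Matrix.mulVec_transpose] at hx
  exact eq_of_reachable_skeleton
    (fun a b h => (eqAcross_iff_vecMul_faceEdge h).2 (congrFun hx _))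
    (SimpleGraph.ConnectedComponent.exact hkl) (hface k) (hface l)

theorem card_corner_le :
    Nat.card T.Corner ≤ T.edgeCorner.rank + Nat.card T.skeleton.ConnectedComponent := by
  rw [Nat.card_eq_fintype_card, Nat.card_eq_fintype_card]
  refine card_le_rank_add_card_of_ker _ T.skeleton.connectedComponentMk fun y hy c d hcd => ?_
  have hstep : ∀ b b', T.skeleton.Adj b b' → y c = y b → y c = y b' := by
    rintro _ _ ⟨a, b, h, rfl, rfl⟩ hc
    have hedge := congrFun hy ⟨s(a, b), h⟩
    simp only [Matrix.mulVec, edgeCorner_mk, add_dotProduct, single_dotProduct, one_mul,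
      Pi.zero_apply, CharTwo.add_eq_zero] at hedge
    exact hc.trans hedge
  exact imp_of_reachable hstep (SimpleGraph.ConnectedComponent.exact hcd) rfl

theorem card_add_card_faces : Nat.card V + T.faces.card = Fintype.card T.G.edgeSet + 2 := by
  have heuler := T.euler
  rw [← Nat.card_coe_set_eq, Nat.card_eq_fintype_card] at heuler
  rw [Nat.card_eq_fintype_card]
  omega

theorem card_corner_add_two_le :
    Nat.card T.Corner + 2 ≤ Nat.card V + 2 * Nat.card T.skeleton.ConnectedComponent := by
  have hrank := Matrix.rank_add_rank_le_card_of_mul_eq_zero T.faceEdge_mul_edgeCorner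
  have hfaces := T.card_faces_le
  have hcorner := T.card_corner_le
  have heuler := T.card_add_card_faces
  omega

variable {T}

theorem skeleton_preconnected (h4 : FourConnected T.G) : T.skeleton.Preconnected :=
  h4.preconnected_of_card_add_two_le
    (fun _ _ h => ⟨corner h, corner h.symm, rfl, rfl, skeleton_adj_corner h⟩)
    four_le_ncard_image_supp T.card_corner_add_two_le

theorem card_connectedComponent_skeleton_le_one (hS : T.skeleton.Preconnected) :
    Nat.card T.skeleton.ConnectedComponent ≤ 1 :=
  Finite.card_le_one_iff_subsingleton.2 hS.subsingleton_connectedComponent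

theorem surjective_corner_fst (hadj : ∀ v, ∃ a, T.G.Adj v a) :
    Function.Surjective (Sigma.fst : T.Corner → V) := fun v =>
  let ⟨_, h⟩ := hadj v
  ⟨corner h, rfl⟩

theorem injective_corner_fst (hS : T.skeleton.Preconnected) (hadj : ∀ v, ∃ a, T.G.Adj v a) :
    Function.Injective (Sigma.fst : T.Corner → V) := by
  have hcorner := T.card_corner_add_two_le
  have hcomp := card_connectedComponent_skeleton_le_one hS
  have hle : Nat.card T.Corner ≤ Nat.card V := by omega
  exact ((surjective_corner_fst hadj).bijective_of_nat_card_le hle).injective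

theorem corner_eq_corner (hS : T.skeleton.Preconnected) (hadj : ∀ v, ∃ a, T.G.Adj v a)
    {v a b : V} (ha : T.G.Adj v a) (hb : T.G.Adj v b) : corner ha = corner hb :=
  injective_corner_fst hS hadj rfl

theorem link_preconnected (hS : T.skeleton.Preconnected) (hadj : ∀ v, ∃ a, T.G.Adj v a) (v : V) :
    (T.link v).Preconnected := fun a b =>
  corner_eq_corner_iff.1 (corner_eq_corner hS hadj a.2 b.2)

theorem exists_vecMul_faceEdge_eq (hS : T.skeleton.Preconnected)
    (hadj : ∀ v, ∃ a, T.G.Adj v a) {z : T.G.edgeSet → ZMod 2} (hz : z ᵥ* T.edgeCorner = 0) :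
    ∃ x, x ᵥ* T.faceEdge = z := by
  refine exists_vecMul_eq_of_mul_eq_zero T.faceEdge_mul_edgeCorner ?_ hz
  have hle : Nat.card V ≤ Nat.card T.Corner :=
    Nat.card_le_card_of_surjective _ (surjective_corner_fst hadj)
  have hcomp := card_connectedComponent_skeleton_le_one hS
  have hfaces := T.card_faces_le
  have hcorner := T.card_corner_le
  have heuler := T.card_add_card_faces
  omega

theorem eq_of_mem_of_mem {R : Type*} {x : T.faces → R} {v : V} (hv : (T.link v).Preconnected)
    (hx : ∀ u, T.G.Adj v u → EqAcross x v u) {k l : T.faces} (hk : v ∈ k.1) (hl : v ∈ l.1) :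
    x k = x l := by
  obtain ⟨a, ha, hka⟩ := exists_adj_mem_facesOn_of_mem hk
  obtain ⟨b, hb, hlb⟩ := exists_adj_mem_facesOn_of_mem hl
  exact eq_of_corner_eq_corner hx (corner_eq_corner_iff.2 (hv ⟨a, ha⟩ ⟨b, hb⟩)) hka hlb

theorem eq_of_preconnected_induce_compl {R : Type*} {x : T.faces → R} {t : Set V}
    (hlink : ∀ v, (T.link v).Preconnected) (ht : (T.G.induce tᶜ).Preconnected)
    (hface : ∀ f ∈ T.faces, ∃ v ∈ f, v ∉ t)
    (hx : ∀ u v, T.G.Adj u v → u ∉ t → EqAcross x u v) (k l : T.faces) : x k = x l := by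
  obtain ⟨u, huk, hut⟩ := hface k k.2
  obtain ⟨v, hvl, hvt⟩ := hface l l.2
  refine eq_of_reachable_of_adj_inter_nonempty (S := fun w : ↥tᶜ => {f : T.faces | w.1 ∈ f.1})
    (fun w k hk l hl => ?_) (fun a b hab => ?_) (ht ⟨u, hut⟩ ⟨v, hvt⟩) huk hvl
  · exact eq_of_mem_of_mem (hlink w) (fun u h => hx w u h w.2) hk hl
  · obtain ⟨f, hf⟩ := exists_mem_facesOn hab
    exact ⟨f, mem_facesOn.1 hf⟩

theorem triangle_mem_faces (hS : T.skeleton.Preconnected) (hadj : ∀ v, ∃ a, T.G.Adj v a)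
    {a b c : V} (hab : T.G.Adj a b) (hbc : T.G.Adj b c) (hca : T.G.Adj c a)
    (ht : (T.G.induce ({a, b, c} : Set V)ᶜ).Preconnected) : {a, b, c} ∈ T.faces := by
  by_contra hnot
  obtain ⟨x, hx⟩ := exists_vecMul_faceEdge_eq hS hadj
    (edgesIn_vecMul_edgeCorner hab hbc hca (corner_eq_corner hS hadj _ _)
      (corner_eq_corner hS hadj _ _) (corner_eq_corner hS hadj _ _))
  have hcard : ({a, b, c} : Finset V).card = 3 :=
    Finset.card_eq_three.2 ⟨a, b, c, hab.ne, hca.ne.symm, hbc.ne, rfl⟩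
  have hface : ∀ f ∈ T.faces, ∃ v ∈ f, v ∉ ({a, b, c} : Set V) := by
    intro f hf
    by_contra! hsub
    have hfabc : f = {a, b, c} := Finset.eq_of_subset_of_card_le
      (fun v hv => by simpa using hsub v hv) (by rw [hcard, T.face_card f hf])
    exact hnot (hfabc ▸ hf)
  have hacross : ∀ u v, T.G.Adj u v → u ∉ ({a, b, c} : Set V) → EqAcross x u v := by
    intro u v huv hu
    rw [eqAcross_iff_vecMul_faceEdge huv, hx, edgesIn_mk]
    exact if_neg fun h => hu (by simpa using h.1)
  have hconst := eq_of_preconnected_induce_compl (link_preconnected hS hadj) ht hface hacross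
  have hab_zero := (eqAcross_iff_vecMul_faceEdge hab).1 fun k _ l _ => hconst k l
  rw [hx, edgesIn_mk, if_pos (by simp)] at hab_zero
  exact one_ne_zero hab_zero

theorem link_eq_induce {v : V}
    (hv : ∀ a b, T.G.Adj v a → T.G.Adj a b → T.G.Adj b v → {v, a, b} ∈ T.faces) :
    T.link v = T.G.induce (T.G.neighborSet v) := by
  ext a b
  constructor
  · rintro ⟨hab, hf⟩
    exact T.face_clique _ hf a (by simp) b (by simp) (Subtype.coe_ne_coe.2 hab)
  · intro hab
    exact ⟨hab.ne, hv a b a.2 hab (T.G.adj_symm b.2)⟩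

end PlaneTriangulation

/-- In a 4-connected plane triangulation, for every vertex `v` and chosen
neighbour `n ∈ N(v)`, the set `N(v) \ {n}` induces a path. -/
theorem stmt4 {V : Type*} [Fintype V] [DecidableEq V] (T : PlaneTriangulation V)
    (h4 : FourConnected T.G) (v n : V) (hn : n ∈ T.G.neighborSet v) :
    IsPathGraph (T.G.induce (T.G.neighborSet v \ {n})) := by
  have hS : T.skeleton.Preconnected := PlaneTriangulation.skeleton_preconnected h4
  have hlink : T.link v = T.G.induce (T.G.neighborSet v) :=
    PlaneTriangulation.link_eq_induce fun a b hva hab hbv =>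
      PlaneTriangulation.triangle_mem_faces hS h4.exists_adj hva hab hbv
        (h4.preconnected_induce_compl (by grind [Set.ncard_insert_le, Set.ncard_singleton]))
  refine isPathGraph_induce_sdiff_singleton ?_ ?_ hn <;> rw [← hlink]
  · exact PlaneTriangulation.link_preconnected hS h4.exists_adj v
  · exact PlaneTriangulation.ncard_neighborSet_link v
end

section
/- Let P be a cubic 3-connected bipartite plane graph and G = P* its plane dual (an Eulerian plane triangulation). Then P has a Hamilton cycle if and only if G possesses two disjoint induced tree-subgraphs which together contain all vertices of G. Moreover, if X, Y are such trees, then the set of edges of P dual to the X–Y edges of G is the edge set of a Hamilton cycle of P. -/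
/-- A combinatorial plane graph: a simple graph together with its set of faces,
each given by the edge set of its boundary cycle, with each edge on exactly two
faces, satisfying Euler's formula. -/
structure PlaneGraph (V : Type*) [Fintype V] [DecidableEq V] where
  G : SimpleGraph V
  faces : Finset (Finset (Sym2 V))
  face_cycle : ∀ f ∈ faces, ∃ (v : V) (c : G.Walk v v), c.IsCycle ∧ c.edges.toFinset = f
  edge_two_faces : ∀ e ∈ G.edgeSet, (faces.filter (fun f => e ∈ f)).card = 2
  euler : (Fintype.card V : ℤ) - (G.edgeSet.ncard : ℤ) + (faces.card : ℤ) = 2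

variable {V : Type*} [Fintype V] [DecidableEq V]

/-- `P` is cubic: every vertex has degree 3. -/
def PlaneGraph.Cubic (P : PlaneGraph V) : Prop :=
  ∀ v : V, (P.G.neighborSet v).ncard = 3

/-- `P` is bipartite: properly 2-colourable. -/
def PlaneGraph.Bipartite (P : PlaneGraph V) : Prop :=
  ∃ c : V → Bool, ∀ a b : V, P.G.Adj a b → c a ≠ c b

/-- `P` is 3-connected. -/
def PlaneGraph.ThreeConnected (P : PlaneGraph V) : Prop :=
  4 ≤ Fintype.card V ∧ ∀ S : Set V, S.ncard ≤ 2 → (P.G.induce Sᶜ).Connected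

/-- `P` has a 2-factor consisting only of facial 4-cycles: a set of faces of
boundary length 4 whose boundary cycles are pairwise disjoint and cover every vertex. -/
def PlaneGraph.HasFacialSquareTwoFactor (P : PlaneGraph V) : Prop :=
  ∃ F ⊆ P.faces, (∀ f ∈ F, f.card = 4) ∧
    ∀ v : V, ∃! f, f ∈ F ∧ ∃ e ∈ f, v ∈ e

/-!
The edges of a cubic plane graph `P` that separate a set `X` of faces from its complement form a
disjoint union of cycles: three faces meet at each vertex `v`, so either two or none of the three
edges at `v` are cut, and in the second case the dual triangle of `v` lies on one side. If `X` and
`Xᶜ` induce trees, there is no such triangle, so the cut `C` passes through every vertex. By Euler's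
formula `C` then misses `|F| - 2` edges, which is also the number of edges of the forest
`G[X] ∪ G[Xᶜ]`: the edges off `C` correspond bijectively to those of the forest. Each edge of the
forest is a bridge, so the edge `uv` dual to it closes a cycle whose other edges lie in `C`. Hence
`C` connects all vertices and is a Hamilton cycle.

Conversely, deleting from `G` the duals of the edges of a Hamilton cycle `C` leaves at most
`|F| - 2` edges, too few for a connected graph. Around each component `X` of the remaining graph the
cut is a nonempty union of cycles inside `C`, hence equal to `C`. So there are exactly two
components, and counting edges once more shows that both are trees.
-/

open SimpleGraph

section SpanningCycle

variable {α : Type*}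

theorem eq_of_le_of_isCycles [Finite α] {H K : SimpleGraph α} (hle : H ≤ K) (hH : H.IsCycles)
    (hK : K.IsCycles) (hconn : K.Preconnected) (hne : H ≠ ⊥) : H = K := by
  have hsat : ∀ {v}, (H.neighborSet v).Nonempty → H.neighborSet v = K.neighborSet v := by
    intro v hv
    have hsub : H.neighborSet v ⊆ K.neighborSet v := fun w hw => hle hw
    exact Set.eq_of_subset_of_ncard_le hsub (by rw [hH hv, hK (hv.mono hsub)])
  obtain ⟨a, b, hab⟩ := ne_bot_iff_exists_adj.mp hne
  have hall : ∀ v, (H.neighborSet v).Nonempty := by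
    intro v
    by_contra hv
    obtain ⟨p⟩ := hconn a v
    obtain ⟨d, -, hfst, hsnd⟩ :=
      p.exists_boundary_dart {x | (H.neighborSet x).Nonempty} ⟨b, hab⟩ hv
    have hadj : H.Adj d.fst d.snd := (hsat hfst).ge d.adj
    exact hsnd ⟨d.fst, hadj.symm⟩
  exact hle.antisymm fun v w hvw => (hsat (hall v)).ge hvw

theorem two_mul_ncard_edgeSet_of_forall_ncard_neighborSet_eq [Finite α] {H : SimpleGraph α} {k : ℕ}
    (h : ∀ v, (H.neighborSet v).ncard = k) : 2 * H.edgeSet.ncard = Nat.card α * k := by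
  classical
  have := Fintype.ofFinite α
  have hdeg : ∀ v, H.degree v = k := fun v => by
    rw [← h v, ← card_neighborSet_eq_degree, ← Nat.card_eq_fintype_card, Nat.card_coe_set_eq]
  have hsum := H.sum_degrees_eq_twice_card_edges
  simp only [hdeg, Finset.sum_const, Finset.card_univ, smul_eq_mul] at hsum
  rw [← coe_edgeFinset, Set.ncard_coe_finset, Nat.card_eq_fintype_card, hsum]

theorem ncard_edgeSet_of_forall_ncard_neighborSet_eq_two [Finite α] {H : SimpleGraph α}
    (h : ∀ v, (H.neighborSet v).ncard = 2) : H.edgeSet.ncard = Nat.card α := by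
  have := two_mul_ncard_edgeSet_of_forall_ncard_neighborSet_eq h
  lia

/-- A connected 2-regular graph: a Hamiltonian cycle of any graph that contains it, viewed as a
spanning subgraph rather than as a closed walk. -/
structure IsSpanningCycle (C : SimpleGraph α) : Prop where
  connected : C.Connected
  ncard_neighborSet : ∀ v, (C.neighborSet v).ncard = 2

namespace IsSpanningCycle

variable {C Γ : SimpleGraph α}

theorem isCycles (hC : IsSpanningCycle C) : C.IsCycles := fun v _ => hC.ncard_neighborSet v

theorem spanningCoe_toSubgraph [DecidableEq α] {v : α} {w : Γ.Walk v v}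
    (hw : w.IsHamiltonianCycle) : IsSpanningCycle w.toSubgraph.spanningCoe where
  connected := by
    have hspan : w.toSubgraph.IsSpanning := fun x => w.mem_verts_toSubgraph.mpr (hw.mem_support x)
    exact (w.toSubgraph.spanningCoeEquivCoeOfSpanning hspan).connected_iff.mpr
      w.toSubgraph_connected.coe
  ncard_neighborSet x := hw.isCycle.ncard_neighborSet_toSubgraph_eq_two (hw.mem_support x)

theorem edgeSet_eq_of_isCycle [Finite α] (hC : IsSpanningCycle C) {v : α} {p : C.Walk v v}
    (hp : p.IsCycle) : p.edgeSet = C.edgeSet := by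
  have hne : p.toSubgraph.spanningCoe ≠ ⊥ :=
    ne_bot_iff_exists_adj.mpr ⟨v, p.snd, p.toSubgraph_adj_snd hp.not_nil⟩
  have hp_eq : p.toSubgraph.spanningCoe = C :=
    eq_of_le_of_isCycles p.toSubgraph.spanningCoe_le hp.isCycles_spanningCoe_toSubgraph
      hC.isCycles hC.connected.preconnected hne
  calc p.edgeSet = p.toSubgraph.spanningCoe.edgeSet := by simp
    _ = C.edgeSet := by rw [hp_eq]

theorem exists_isHamiltonianCycle [Finite α] [DecidableEq α] (hC : IsSpanningCycle C)
    (hle : C ≤ Γ) :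
    ∃ (v : α) (w : Γ.Walk v v), w.IsHamiltonianCycle ∧ w.edgeSet = C.edgeSet := by
  have := Fintype.ofFinite α
  obtain ⟨v⟩ := hC.connected.nonempty
  obtain ⟨p, hp, -⟩ := hC.isCycles.exists_cycle_toSubgraph_verts_eq_connectedComponentSupp
    (ConnectedComponent.connectedComponentMk_mem (v := v))
    (Set.nonempty_of_ncard_ne_zero (by simp [hC.ncard_neighborSet]))
  have hedges := hC.edgeSet_eq_of_isCycle hp
  have hlength : p.length = Fintype.card α := by
    rw [← Nat.card_eq_fintype_card,
      ← ncard_edgeSet_of_forall_ncard_neighborSet_eq_two hC.ncard_neighborSet, ← hedges,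
      ← p.length_edges, ← List.toFinset_card_of_nodup hp.edges_nodup, ← p.coe_edges_toFinset,
      Set.ncard_coe_finset]
  refine ⟨v, p.mapLe hle, ?_, ?_⟩
  · exact Walk.isHamiltonianCycle_iff_isCycle_and_length_eq.mpr
      ⟨hp.mapLe hle, by simpa using hlength⟩
  · simpa [Set.ext_iff] using hedges

end IsSpanningCycle

end SpanningCycle

section InducedPartition

variable {α : Type*} {H : SimpleGraph α} {X : Set α}

theorem ncard_edgeSet_eq_add_of_adj_mem_iff [Finite α] (hX : ∀ u v, H.Adj u v → (u ∈ X ↔ v ∈ X)) :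
    H.edgeSet.ncard = Nat.card (H.induce X).edgeSet + Nat.card (H.induce Xᶜ).edgeSet := by
  classical
  let e : H.induce X ⊕g H.induce Xᶜ ≃g H :=
    { toEquiv := Equiv.Set.sumCompl X
      map_rel_iff' := by
        rintro (⟨a, ha⟩ | ⟨a, ha⟩) (⟨b, hb⟩ | ⟨b, hb⟩) <;>
          simp only [Equiv.Set.sumCompl_apply_inl, Equiv.Set.sumCompl_apply_inr, sum_adj, comap_adj,
            Function.Embedding.subtype_apply] <;>
          grind }
  rw [← Nat.card_sum, ← Nat.card_congr edgeSetSumEquiv, Nat.card_congr e.mapEdgeSet,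
    Nat.card_coe_set_eq]

theorem isAcyclic_of_induce_of_induce_compl (hX : ∀ u v, H.Adj u v → (u ∈ X ↔ v ∈ X))
    (h₁ : (H.induce X).IsAcyclic) (h₂ : (H.induce Xᶜ).IsAcyclic) : H.IsAcyclic := by
  classical
  have hside : ∀ {S : Set α}, (∀ u v, H.Adj u v → (u ∈ S ↔ v ∈ S)) → (H.induce S).IsAcyclic →
      ∀ {u : α} (c : H.Walk u u), u ∈ S → ¬ c.IsCycle := by
    intro S hS hacyc u c hu hc
    have hmem : ∀ x ∈ c.support, x ∈ S := by
      intro x hx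
      by_contra hxS
      obtain ⟨d, -, hd⟩ := (c.takeUntil x hx).exists_boundary_dart S hu hxS
      exact hd.2 ((hS _ _ d.adj).mp hd.1)
    refine hacyc (c.induce S hmem) ?_
    rw [← Walk.isCycle_map_iff_of_injective (f := (Embedding.induce S).toHom)
      Subtype.val_injective]
    rwa [Walk.map_induce]
  intro u c
  by_cases hu : u ∈ X
  · exact hside hX h₁ c hu
  · exact hside (fun a b hab => not_congr (hX a b hab)) h₂ c hu

end InducedPartition

theorem card_add_card_compl_eq {α : Type*} [Finite α] (s : Set α) :
    Nat.card s + Nat.card (sᶜ : Set α) = Nat.card α := by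
  rw [Nat.card_coe_set_eq, Nat.card_coe_set_eq, Set.ncard_add_ncard_compl]

theorem exists_eq_pair_sides_of_triangle {F : Type*} {s₁ s₂ s₃ : Sym2 F} (h₁ : ¬ s₁.IsDiag)
    (h₂ : ¬ s₂.IsDiag) (h₃ : ¬ s₃.IsDiag)
    (h : ∀ f, (f ∉ s₁ ∧ f ∉ s₂ ∧ f ∉ s₃) ∨ (f ∉ s₁ ∧ f ∈ s₂ ∧ f ∈ s₃) ∨
      (f ∈ s₁ ∧ f ∉ s₂ ∧ f ∈ s₃) ∨ (f ∈ s₁ ∧ f ∈ s₂ ∧ f ∉ s₃)) :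
    ∃ p q r, p ≠ q ∧ p ≠ r ∧ q ≠ r ∧ s₁ = s(q, r) ∧ s₂ = s(p, r) ∧ s₃ = s(p, q) := by
  induction s₁ with | h a b =>
  induction s₂ with | h c d =>
  induction s₃ with | h x y =>
  simp only [Sym2.mk_isDiag_iff, Sym2.mem_iff, Sym2.eq_iff] at *
  have ha := h a
  have hb := h b
  have hc := h c
  have hd := h d
  have hx := h x
  by_cases hac : a = c
  · exact ⟨d, b, a, by grind⟩
  by_cases had : a = d
  · exact ⟨c, b, a, by grind⟩
  by_cases hbc : b = c
  · exact ⟨d, a, b, by grind⟩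
  · exact ⟨c, a, b, by grind⟩

section Dual

variable {α F : Type*}

/-- The graph on the faces whose edges are dual to the edges of `K`, where `dual e` is the pair of
faces on the two sides of `e`. For `K` the whole plane graph this is its dual graph, with parallel
edges merged. -/
def dualGraph (dual : Sym2 α → Sym2 F) (K : SimpleGraph α) : SimpleGraph F :=
  fromEdgeSet (dual '' K.edgeSet)

/-- The spanning subgraph of `Γ` formed by the edges that separate a face in `X` from a face outside
`X`, i.e. by the edges whose duals form the coboundary of `X`. -/
def cutGraph (Γ : SimpleGraph α) (dual : Sym2 α → Sym2 F) (X : Set F) : SimpleGraph α where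
  Adj u v := Γ.Adj u v ∧ ∃ f ∈ X, ∃ g ∉ X, dual s(u, v) = s(f, g)
  symm := ⟨fun u v ⟨hadj, hdual⟩ => ⟨hadj.symm, by rwa [Sym2.eq_swap]⟩⟩
  loopless := ⟨fun v hv => hv.1.ne rfl⟩

variable {Γ K : SimpleGraph α} {dual : Sym2 α → Sym2 F} {X : Set F} {u v : α} {f g : F}

theorem cutGraph_le : cutGraph Γ dual X ≤ Γ := fun _ _ h => h.1

theorem cutGraph_adj_iff (huv : Γ.Adj u v) (hdual : dual s(u, v) = s(f, g)) :
    (cutGraph Γ dual X).Adj u v ↔ ¬ (f ∈ X ↔ g ∈ X) := by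
  constructor
  · rintro ⟨-, x, hx, y, hy, hxy⟩
    rcases Sym2.eq_iff.mp (hdual.symm.trans hxy) with ⟨rfl, rfl⟩ | ⟨rfl, rfl⟩ <;> tauto
  · intro hfg
    by_cases hf : f ∈ X
    · exact ⟨huv, f, hf, g, by tauto, hdual⟩
    · exact ⟨huv, g, by tauto, f, hf, hdual.trans Sym2.eq_swap⟩

theorem dualGraph_adj_iff :
    (dualGraph dual K).Adj f g ↔ f ≠ g ∧ ∃ u v, K.Adj u v ∧ dual s(u, v) = s(f, g) := by
  simp [dualGraph, Sym2.exists, and_comm]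

theorem dual_mem_edgeSet_dualGraph (huv : K.Adj u v) (hdiag : ¬ (dual s(u, v)).IsDiag) :
    dual s(u, v) ∈ (dualGraph dual K).edgeSet := by
  rw [dualGraph, edgeSet_fromEdgeSet]
  exact ⟨⟨s(u, v), huv, rfl⟩, hdiag⟩

theorem dualGraph_mono {K' : SimpleGraph α} (hle : K ≤ K') :
    dualGraph dual K ≤ dualGraph dual K' :=
  fromEdgeSet_mono (Set.image_mono (edgeSet_mono hle))

theorem cutGraph_supp_dual_notMem_edgeSet {H : SimpleGraph F} (c : H.ConnectedComponent)
    (huv : (cutGraph Γ dual c.supp).Adj u v) : dual s(u, v) ∉ H.edgeSet := by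
  obtain ⟨-, f, hf, g, hg, hdual⟩ := huv
  rw [hdual, mem_edgeSet]
  exact fun hadj => hg (c.mem_supp_of_adj_mem_supp hf hadj)

theorem induce_dualGraph_sdiff_cutGraph {S : Set F} (hS : ∀ f ∈ S, ∀ g ∈ S, (f ∈ X ↔ g ∈ X)) :
    (dualGraph dual (Γ \ cutGraph Γ dual X)).induce S = (dualGraph dual Γ).induce S := by
  refine le_antisymm (comap_monotone _ (dualGraph_mono sdiff_le)) ?_
  intro f g hfg
  obtain ⟨hne, u, v, huv, hdual⟩ := dualGraph_adj_iff.mp (comap_adj.mp hfg)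
  refine comap_adj.mpr (dualGraph_adj_iff.mpr ⟨hne, u, v, ⟨huv, fun hcut => ?_⟩, hdual⟩)
  exact (cutGraph_adj_iff huv hdual).mp hcut (hS f f.2 g g.2)

theorem mem_iff_of_dualGraph_sdiff_cutGraph_adj
    (hfg : (dualGraph dual (Γ \ cutGraph Γ dual X)).Adj f g) : f ∈ X ↔ g ∈ X := by
  obtain ⟨-, u, v, huv, hdual⟩ := dualGraph_adj_iff.mp hfg
  by_contra hX
  exact huv.2 ((cutGraph_adj_iff huv.1 hdual).mpr hX)

theorem ncard_edgeSet_dualGraph_sdiff_cutGraph [Finite F] :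
    (dualGraph dual (Γ \ cutGraph Γ dual X)).edgeSet.ncard =
      Nat.card ((dualGraph dual Γ).induce X).edgeSet +
        Nat.card ((dualGraph dual Γ).induce Xᶜ).edgeSet := by
  rw [ncard_edgeSet_eq_add_of_adj_mem_iff fun f g => mem_iff_of_dualGraph_sdiff_cutGraph_adj,
    induce_dualGraph_sdiff_cutGraph (S := X) fun f hf g hg => iff_of_true hf hg,
    induce_dualGraph_sdiff_cutGraph (S := Xᶜ) fun f hf g hg => iff_of_false hf hg]

theorem isAcyclic_dualGraph_sdiff_cutGraph (hX : ((dualGraph dual Γ).induce X).IsAcyclic)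
    (hXc : ((dualGraph dual Γ).induce Xᶜ).IsAcyclic) :
    (dualGraph dual (Γ \ cutGraph Γ dual X)).IsAcyclic := by
  refine isAcyclic_of_induce_of_induce_compl (X := X)
    (fun f g => mem_iff_of_dualGraph_sdiff_cutGraph_adj) ?_ ?_
  · rwa [induce_dualGraph_sdiff_cutGraph fun f hf g hg => iff_of_true hf hg]
  · rwa [induce_dualGraph_sdiff_cutGraph (S := Xᶜ) fun f hf g hg => iff_of_false hf hg]

theorem ncard_edgeSet_dualGraph_le [Finite α] :
    (dualGraph dual K).edgeSet.ncard ≤ K.edgeSet.ncard := by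
  rw [dualGraph, edgeSet_fromEdgeSet]
  exact (Set.ncard_le_ncard Set.sdiff_subset).trans (Set.ncard_image_le)

theorem injOn_of_ncard_edgeSet_le [Finite α]
    (h : K.edgeSet.ncard ≤ (dualGraph dual K).edgeSet.ncard) : Set.InjOn dual K.edgeSet := by
  refine Set.injOn_of_ncard_image_eq (le_antisymm Set.ncard_image_le (h.trans ?_))
  rw [dualGraph, edgeSet_fromEdgeSet]
  exact Set.ncard_le_ncard Set.sdiff_subset

/-- A map on the sphere with connected cubic 1-skeleton `Γ` and set of faces `F`, given by the pair
`dual e` of faces on the two sides of each edge `e`; the value of `dual` at a pair of non-adjacent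
vertices is irrelevant. Faces are bounded by cycles (`ncard_boundary`), and the sphere is singled
out by Euler's formula. -/
structure IsCubicSphere (Γ : SimpleGraph α) (dual : Sym2 α → Sym2 F) : Prop where
  connected : Γ.Connected
  cubic : ∀ v, (Γ.neighborSet v).ncard = 3
  not_isDiag : ∀ u v, Γ.Adj u v → ¬ (dual s(u, v)).IsDiag
  nonempty_boundary : ∀ f, ∃ u v, Γ.Adj u v ∧ f ∈ dual s(u, v)
  ncard_boundary : ∀ f v, {w | Γ.Adj v w ∧ f ∈ dual s(v, w)}.Nonempty →
    {w | Γ.Adj v w ∧ f ∈ dual s(v, w)}.ncard = 2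
  euler : Nat.card α + Nat.card F = Γ.edgeSet.ncard + 2

namespace IsCubicSphere

theorem exists_vertex_star (h : IsCubicSphere Γ dual) (v : α) :
    ∃ (a b c : α) (p q r : F), a ≠ b ∧ a ≠ c ∧ b ≠ c ∧ p ≠ q ∧ p ≠ r ∧ q ≠ r ∧
      (∀ w, Γ.Adj v w ↔ w = a ∨ w = b ∨ w = c) ∧
      dual s(v, a) = s(q, r) ∧ dual s(v, b) = s(p, r) ∧ dual s(v, c) = s(p, q) := by
  obtain ⟨a, b, c, hab, hac, hbc, hstar⟩ := Set.ncard_eq_three.mp (h.cubic v)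
  have hadj : ∀ w, Γ.Adj v w ↔ w = a ∨ w = b ∨ w = c := fun w => by
    rw [← mem_neighborSet, hstar]; simp
  have htwo : ∀ f,
      (f ∉ dual s(v, a) ∧ f ∉ dual s(v, b) ∧ f ∉ dual s(v, c)) ∨
      (f ∉ dual s(v, a) ∧ f ∈ dual s(v, b) ∧ f ∈ dual s(v, c)) ∨
      (f ∈ dual s(v, a) ∧ f ∉ dual s(v, b) ∧ f ∈ dual s(v, c)) ∨
      (f ∈ dual s(v, a) ∧ f ∈ dual s(v, b) ∧ f ∉ dual s(v, c)) := by
    intro f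
    rcases Set.eq_empty_or_nonempty {w | Γ.Adj v w ∧ f ∈ dual s(v, w)} with hf | hf
    · simp only [Set.eq_empty_iff_forall_notMem, Set.mem_ofPred_eq, hadj] at hf
      have ha := hf a
      have hb := hf b
      have hc := hf c
      tauto
    · obtain ⟨x, y, hxy, hf⟩ := Set.ncard_eq_two.mp (h.ncard_boundary f v hf)
      simp only [Set.ext_iff, Set.mem_ofPred_eq, Set.mem_insert_iff, Set.mem_singleton_iff,
        hadj] at hf
      have ha := hf a
      have hb := hf b
      have hc := hf c
      have hx := hf x
      have hy := hf y
      grind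
  obtain ⟨p, q, r, hpq, hpr, hqr, ha, hb, hc⟩ := exists_eq_pair_sides_of_triangle
    (h.not_isDiag v a ((hadj a).mpr (by simp))) (h.not_isDiag v b ((hadj b).mpr (by simp)))
    (h.not_isDiag v c ((hadj c).mpr (by simp))) htwo
  exact ⟨a, b, c, p, q, r, hab, hac, hbc, hpq, hpr, hqr, hadj, ha, hb, hc⟩


theorem ncard_neighborSet_cutGraph_eq_two_or (h : IsCubicSphere Γ dual) (X : Set F) (v : α) :
    ((cutGraph Γ dual X).neighborSet v).ncard = 2 ∨
      (cutGraph Γ dual X).neighborSet v = ∅ ∧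
        ¬ ((dualGraph dual Γ).CliqueFreeOn X 3 ∧ (dualGraph dual Γ).CliqueFreeOn Xᶜ 3) := by
  classical
  obtain ⟨a, b, c, p, q, r, hab, hac, hbc, hpq, hpr, hqr, hadj, ha, hb, hc⟩ :=
    h.exists_vertex_star v
  have hva : Γ.Adj v a := (hadj a).mpr (by simp)
  have hvb : Γ.Adj v b := (hadj b).mpr (by simp)
  have hvc : Γ.Adj v c := (hadj c).mpr (by simp)
  have hcut : ∀ w, w ∈ (cutGraph Γ dual X).neighborSet v ↔ w = a ∧ ¬ (q ∈ X ↔ r ∈ X) ∨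
      w = b ∧ ¬ (p ∈ X ↔ r ∈ X) ∨ w = c ∧ ¬ (p ∈ X ↔ q ∈ X) := by
    intro w
    have hw : w ∈ (cutGraph Γ dual X).neighborSet v → w = a ∨ w = b ∨ w = c :=
      fun hvw => (hadj w).mp (cutGraph_le hvw)
    have hcut_a := cutGraph_adj_iff (X := X) hva ha
    have hcut_b := cutGraph_adj_iff (X := X) hvb hb
    have hcut_c := cutGraph_adj_iff (X := X) hvc hc
    rw [mem_neighborSet] at hw ⊢
    grind
  have htriangle : (dualGraph dual Γ).IsNClique 3 {p, q, r} :=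
    is3Clique_triple_iff.mpr ⟨dualGraph_adj_iff.mpr ⟨hpq, v, c, hvc, hc⟩,
      dualGraph_adj_iff.mpr ⟨hpr, v, b, hvb, hb⟩, dualGraph_adj_iff.mpr ⟨hqr, v, a, hva, ha⟩⟩
  by_cases hmono : (p ∈ X ↔ q ∈ X) ∧ (p ∈ X ↔ r ∈ X)
  · refine .inr ⟨Set.eq_empty_iff_forall_notMem.mpr fun w => by grind, fun ⟨hX, hXc⟩ => ?_⟩
    by_cases hp : p ∈ X
    · exact hX (by grind) htriangle
    · exact hXc (by grind) htriangle
  · refine .inl (Set.ncard_eq_two.mpr ?_)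
    simp only [Set.ext_iff, hcut]
    by_cases hpq' : p ∈ X ↔ q ∈ X
    · exact ⟨a, b, hab, by grind⟩
    by_cases hpr' : p ∈ X ↔ r ∈ X
    · exact ⟨a, c, hac, by grind⟩
    · exact ⟨b, c, hbc, by grind⟩

theorem isCycles_cutGraph (h : IsCubicSphere Γ dual) (X : Set F) :
    (cutGraph Γ dual X).IsCycles := by
  intro v hv
  rcases h.ncard_neighborSet_cutGraph_eq_two_or X v with htwo | ⟨hempty, -⟩
  · exact htwo
  · exact absurd hempty hv.ne_empty

theorem ncard_neighborSet_cutGraph (h : IsCubicSphere Γ dual)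
    (hX : ((dualGraph dual Γ).induce X).IsAcyclic)
    (hXc : ((dualGraph dual Γ).induce Xᶜ).IsAcyclic) (v : α) :
    ((cutGraph Γ dual X).neighborSet v).ncard = 2 := by
  rcases h.ncard_neighborSet_cutGraph_eq_two_or X v with htwo | ⟨-, hclique⟩
  · exact htwo
  · exact absurd ⟨(cliqueFree_induce_iff _ _ _).mp (hX.cliqueFree le_rfl),
      (cliqueFree_induce_iff _ _ _).mp (hXc.cliqueFree le_rfl)⟩ hclique

theorem reachable_dualGraph_of_adj (h : IsCubicSphere Γ dual) {a b : α} (hva : Γ.Adj v a)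
    (hf : f ∈ dual s(v, a)) (hvb : Γ.Adj v b) (hg : g ∈ dual s(v, b)) :
    (dualGraph dual Γ).Reachable f g := by
  obtain ⟨x, y, z, p, q, r, -, -, -, hpq, hpr, -, hadj, hx, hy, hz⟩ := h.exists_vertex_star v
  have hpq' : (dualGraph dual Γ).Adj p q := dualGraph_adj_iff.mpr ⟨hpq, v, z, by simp [hadj], hz⟩
  have hpr' : (dualGraph dual Γ).Adj p r := dualGraph_adj_iff.mpr ⟨hpr, v, y, by simp [hadj], hy⟩
  have hp : ∀ {w k}, Γ.Adj v w → k ∈ dual s(v, w) → (dualGraph dual Γ).Reachable p k := by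
    intro w k hvw hk
    have hk_mem : k = p ∨ k = q ∨ k = r := by
      rcases (hadj w).mp hvw with rfl | rfl | rfl <;> simp only [hx, hy, hz, Sym2.mem_iff] at hk <;>
        tauto
    rcases hk_mem with rfl | rfl | rfl
    exacts [.rfl, hpq'.reachable, hpr'.reachable]
  exact (hp hva hf).symm.trans (hp hvb hg)

theorem connected_dualGraph (h : IsCubicSphere Γ dual) : (dualGraph dual Γ).Connected := by
  have hwalk : ∀ {u v}, Γ.Walk u v → ∀ {a b f g}, Γ.Adj u a → f ∈ dual s(u, a) → Γ.Adj v b →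
      g ∈ dual s(v, b) → (dualGraph dual Γ).Reachable f g := by
    intro u v w
    induction w with
    | nil => exact h.reachable_dualGraph_of_adj
    | @cons u x v hux _ ih =>
      intro a b f g hua hf hvb hg
      have hk := (dual s(u, x)).out_fst_mem
      exact (h.reachable_dualGraph_of_adj hua hf hux hk).trans
        (ih hux.symm (by rwa [Sym2.eq_swap]) hvb hg)
  refine connected_iff_exists_forall_reachable _ |>.mpr ?_
  obtain ⟨v⟩ := h.connected.nonempty
  obtain ⟨a, hva⟩ : (Γ.neighborSet v).Nonempty :=
    Set.nonempty_of_ncard_ne_zero (by simp [h.cubic])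
  refine ⟨(dual s(v, a)).out.1, fun g => ?_⟩
  obtain ⟨u, b, hub, hg⟩ := h.nonempty_boundary g
  obtain ⟨w⟩ := h.connected.preconnected v u
  exact hwalk w hva (dual s(v, a)).out_fst_mem hub hg

theorem cutGraph_ne_bot (h : IsCubicSphere Γ dual) (hX : X.Nonempty) (hX' : X ≠ Set.univ) :
    cutGraph Γ dual X ≠ ⊥ := by
  obtain ⟨f, hf⟩ := hX
  obtain ⟨g, hg⟩ := (Set.ne_univ_iff_exists_notMem X).mp hX'
  obtain ⟨w⟩ := h.connected_dualGraph.preconnected f g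
  obtain ⟨d, -, hfst, hsnd⟩ := w.exists_boundary_dart X hf hg
  obtain ⟨-, u, v, huv, hdual⟩ := dualGraph_adj_iff.mp d.adj
  exact ne_bot_iff_exists_adj.mpr ⟨u, v, huv, d.fst, hfst, d.snd, hsnd, hdual⟩

theorem compl_eq_of_cutGraph_eq {Y : Set F} (h : IsCubicSphere Γ dual) (hX : X.Nonempty)
    (hXY : Disjoint X Y) (hcut : cutGraph Γ dual X = cutGraph Γ dual Y) : Xᶜ = Y := by
  refine (isCompl_iff.mpr ⟨hXY, codisjoint_iff.mpr ?_⟩).compl_eq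
  by_contra huniv
  obtain ⟨u, v, huv, f, hf, g, hg, hdual⟩ :=
    ne_bot_iff_exists_adj.mp (h.cutGraph_ne_bot hX.inl huniv)
  have hcut_X := cutGraph_adj_iff (X := X) huv hdual
  have hcut_Y := cutGraph_adj_iff (X := Y) huv hdual
  have hdisj : f ∈ X → f ∉ Y := fun hf => Set.disjoint_left.mp hXY hf
  rw [hcut, hcut_Y] at hcut_X
  grind

variable [Finite α] {C : SimpleGraph α}

theorem ncard_edgeSet_sdiff_add_two (h : IsCubicSphere Γ dual) (hle : C ≤ Γ)
    (hC : ∀ v, (C.neighborSet v).ncard = 2) : (Γ \ C).edgeSet.ncard + 2 = Nat.card F := by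
  have hsdiff := Set.ncard_sdiff_add_ncard_of_subset (edgeSet_mono hle)
  rw [← edgeSet_sdiff, ncard_edgeSet_of_forall_ncard_neighborSet_eq_two hC] at hsdiff
  have := h.euler
  lia

-- A dual edge `s(f, g)` of the forest is a bridge, and the cut around the side of `f` consists of
-- `uv` and edges of `C`; being a union of cycles, it joins `u` to `v` without using `uv`.
theorem reachable_of_isAcyclic_dualGraph_sdiff (h : IsCubicSphere Γ dual)
    (hinj : Set.InjOn dual (Γ \ C).edgeSet) (hacyc : (dualGraph dual (Γ \ C)).IsAcyclic)
    (huv : Γ.Adj u v) : C.Reachable u v := by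
  by_cases hC : C.Adj u v
  · exact hC.reachable
  obtain ⟨f, g, hdual⟩ : ∃ f g, dual s(u, v) = s(f, g) := by
    induction dual s(u, v) with | h f g => exact ⟨f, g, rfl⟩
  have hfg : f ≠ g := fun hfg => h.not_isDiag u v huv (by simp [hdual, hfg])
  have hbridge := isAcyclic_iff_forall_adj_isBridge.mp hacyc
    (dualGraph_adj_iff.mpr ⟨hfg, u, v, ⟨huv, hC⟩, hdual⟩)
  let A := ((dualGraph dual (Γ \ C)).deleteEdges {s(f, g)}).connectedComponentMk f
  have hcut : (cutGraph Γ dual A.supp).Adj u v :=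
    ⟨huv, f, rfl, g, fun hg => hbridge (ConnectedComponent.exact hg).symm, hdual⟩
  refine ((h.isCycles_cutGraph A.supp).reachable_deleteEdges hcut).mono fun x y hxy => ?_
  obtain ⟨hcut_xy, hne⟩ := deleteEdges_adj.mp hxy
  by_contra hCxy
  have hxy_sdiff : (Γ \ C).Adj x y := ⟨hcut_xy.1, hCxy⟩
  have hdual_xy : dual s(x, y) = dual s(u, v) := by
    have hmem := dual_mem_edgeSet_dualGraph hxy_sdiff (h.not_isDiag x y hcut_xy.1)
    have hnotMem := cutGraph_supp_dual_notMem_edgeSet A hcut_xy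
    rw [edgeSet_deleteEdges] at hnotMem
    by_contra hne_dual
    exact hnotMem ⟨hmem, fun hmem => hne_dual (hmem.trans hdual.symm)⟩
  exact hne (hinj hxy_sdiff (show (Γ \ C).Adj u v from ⟨huv, hC⟩) hdual_xy)

theorem connected_of_isAcyclic_dualGraph_sdiff (h : IsCubicSphere Γ dual)
    (hinj : Set.InjOn dual (Γ \ C).edgeSet) (hacyc : (dualGraph dual (Γ \ C)).IsAcyclic) :
    C.Connected := by
  refine connected_iff_exists_forall_reachable _ |>.mpr ?_
  obtain ⟨v⟩ := h.connected.nonempty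
  refine ⟨v, fun u => ?_⟩
  obtain ⟨w⟩ := h.connected.preconnected v u
  induction w with
  | nil => exact .rfl
  | cons hadj _ ih =>
    exact (h.reachable_of_isAcyclic_dualGraph_sdiff hinj hacyc hadj).trans ih

theorem isSpanningCycle_cutGraph [Finite F] (h : IsCubicSphere Γ dual)
    (hX : ((dualGraph dual Γ).induce X).IsTree) (hXc : ((dualGraph dual Γ).induce Xᶜ).IsTree) :
    IsSpanningCycle (cutGraph Γ dual X) := by
  have htwo := h.ncard_neighborSet_cutGraph hX.isAcyclic hXc.isAcyclic
  have hinj : Set.InjOn dual (Γ \ cutGraph Γ dual X).edgeSet := by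
    refine injOn_of_ncard_edgeSet_le (le_of_eq ?_)
    have hsdiff := h.ncard_edgeSet_sdiff_add_two cutGraph_le htwo
    have hedges := ncard_edgeSet_dualGraph_sdiff_cutGraph (Γ := Γ) (dual := dual) (X := X)
    have htree := (isTree_iff_connected_and_card.mp hX).2
    have htree_compl := (isTree_iff_connected_and_card.mp hXc).2
    have hfaces := card_add_card_compl_eq X
    lia
  exact
    { connected := h.connected_of_isAcyclic_dualGraph_sdiff hinj
        (isAcyclic_dualGraph_sdiff_cutGraph hX.isAcyclic hXc.isAcyclic)
      ncard_neighborSet := htwo }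

theorem not_connected_dualGraph_sdiff [Finite F] (h : IsCubicSphere Γ dual)
    (hC : IsSpanningCycle C) (hle : C ≤ Γ) : ¬ (dualGraph dual (Γ \ C)).Connected := by
  intro hconn
  have hsdiff := h.ncard_edgeSet_sdiff_add_two hle hC.ncard_neighborSet
  have hdual := ncard_edgeSet_dualGraph_le (dual := dual) (K := Γ \ C)
  have hvert := hconn.card_vert_le_card_edgeSet_add_one
  rw [Nat.card_coe_set_eq] at hvert
  lia

theorem cutGraph_supp_eq (h : IsCubicSphere Γ dual) (hC : IsSpanningCycle C)
    {c d : (dualGraph dual (Γ \ C)).ConnectedComponent} (hcd : c ≠ d) :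
    cutGraph Γ dual c.supp = C := by
  have hne_univ : c.supp ≠ Set.univ := fun huniv => d.nonempty_supp.ne_empty
    (by simpa [huniv] using pairwise_disjoint_supp_connectedComponent _ hcd)
  refine eq_of_le_of_isCycles (fun u v huv => ?_) (h.isCycles_cutGraph _) hC.isCycles
    hC.connected.preconnected (h.cutGraph_ne_bot c.nonempty_supp hne_univ)
  by_contra hCuv
  exact cutGraph_supp_dual_notMem_edgeSet c huv
    (dual_mem_edgeSet_dualGraph ⟨huv.1, hCuv⟩ (h.not_isDiag u v huv.1))

theorem isTree_induce_of_connected [Finite F] (h : IsCubicSphere Γ dual)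
    (hcut : ∀ v, ((cutGraph Γ dual X).neighborSet v).ncard = 2)
    (hX : ((dualGraph dual Γ).induce X).Connected)
    (hXc : ((dualGraph dual Γ).induce Xᶜ).Connected) :
    ((dualGraph dual Γ).induce X).IsTree ∧ ((dualGraph dual Γ).induce Xᶜ).IsTree := by
  have hsdiff := h.ncard_edgeSet_sdiff_add_two cutGraph_le hcut
  have hdual := ncard_edgeSet_dualGraph_le (dual := dual) (K := Γ \ cutGraph Γ dual X)
  have hedges := ncard_edgeSet_dualGraph_sdiff_cutGraph (Γ := Γ) (dual := dual) (X := X)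
  have hvert := hX.card_vert_le_card_edgeSet_add_one
  have hvert_compl := hXc.card_vert_le_card_edgeSet_add_one
  have hfaces := card_add_card_compl_eq X
  exact ⟨isTree_iff_connected_and_card.mpr ⟨hX, by lia⟩,
    isTree_iff_connected_and_card.mpr ⟨hXc, by lia⟩⟩

theorem exists_isTree_induce [Finite F] (h : IsCubicSphere Γ dual)
    (hC : IsSpanningCycle C) (hle : C ≤ Γ) :
    ∃ X : Set F, ((dualGraph dual Γ).induce X).IsTree ∧ ((dualGraph dual Γ).induce Xᶜ).IsTree := by
  have := h.connected_dualGraph.nonempty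
  obtain ⟨f, g, hfg⟩ : ∃ f g, ¬ (dualGraph dual (Γ \ C)).Reachable f g := by
    by_contra! hreach
    exact h.not_connected_dualGraph_sdiff hC hle ⟨hreach⟩
  let c := (dualGraph dual (Γ \ C)).connectedComponentMk f
  let d := (dualGraph dual (Γ \ C)).connectedComponentMk g
  have hcd : c ≠ d := fun hcd => hfg (ConnectedComponent.exact hcd)
  have hcut : cutGraph Γ dual c.supp = C := h.cutGraph_supp_eq hC hcd
  have hcompl : c.suppᶜ = d.supp := h.compl_eq_of_cutGraph_eq c.nonempty_supp
    (pairwise_disjoint_supp_connectedComponent _ hcd)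
    (hcut.trans (h.cutGraph_supp_eq hC hcd.symm).symm)
  have hconn : ∀ e : (dualGraph dual (Γ \ C)).ConnectedComponent,
      ((dualGraph dual Γ).induce e.supp).Connected := fun e =>
    e.connected_toSimpleGraph.mono (comap_monotone _ (dualGraph_mono sdiff_le))
  exact ⟨c.supp, h.isTree_induce_of_connected (by rw [hcut]; exact hC.ncard_neighborSet) (hconn c)
    (hcompl ▸ hconn d)⟩

end IsCubicSphere
end Dual

theorem PlaneGraph.ThreeConnected.connected {P : PlaneGraph V} (h3 : P.ThreeConnected) :
    P.G.Connected := by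
  have h := h3.2 ∅ (by simp)
  rw [Set.compl_empty] at h
  exact P.G.induceUnivIso.connected_iff.mp h

theorem PlaneGraph.Cubic.edgeSet_nonempty {P : PlaneGraph V} [Nonempty V] (hCubic : P.Cubic) :
    P.G.edgeSet.Nonempty := by
  obtain ⟨v⟩ := ‹Nonempty V›
  obtain ⟨w, hvw⟩ : (P.G.neighborSet v).Nonempty :=
    Set.nonempty_of_ncard_ne_zero (by simp [hCubic v])
  exact ⟨s(v, w), hvw⟩

namespace PlaneGraph

variable {F : Type*} {P : PlaneGraph V} {faceOf : F → Finset (Sym2 V)}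

theorem exists_pair_faceOf_of_mem_edgeSet (hbij : Set.BijOn faceOf Set.univ P.faces) {e : Sym2 V}
    (he : e ∈ P.G.edgeSet) : ∃ s : Sym2 F, ¬ s.IsDiag ∧ ∀ f, f ∈ s ↔ e ∈ faceOf f := by
  obtain ⟨s, t, hst, h⟩ := Finset.card_eq_two.mp (P.edge_two_faces e he)
  have hmem : ∀ u, u ∈ P.faces ∧ e ∈ u ↔ u = s ∨ u = t := fun u => by
    simpa using Finset.ext_iff.mp h u
  obtain ⟨f, -, rfl⟩ := hbij.surjOn ((hmem s).mpr (.inl rfl)).1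
  obtain ⟨g, -, rfl⟩ := hbij.surjOn ((hmem t).mpr (.inr rfl)).1
  have hInto : ∀ k, faceOf k ∈ P.faces := fun k => hbij.mapsTo (Set.mem_univ k)
  refine ⟨s(f, g), fun hfg => hst (congrArg faceOf hfg), fun k => ?_⟩
  simpa [hInto, hbij.injOn.eq_iff, eq_comm] using (hmem (faceOf k)).symm

/-- `dual` sends every edge of `P` to its dual edge in `P*`: the pair of distinct faces, labelled by
`faceOf`, whose boundaries contain it. -/
def IsEdgeDual (P : PlaneGraph V) (faceOf : F → Finset (Sym2 V)) (dual : Sym2 V → Sym2 F) : Prop :=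
  ∀ e ∈ P.G.edgeSet, ¬ (dual e).IsDiag ∧ ∀ f, f ∈ dual e ↔ e ∈ faceOf f

theorem exists_isEdgeDual (hbij : Set.BijOn faceOf Set.univ P.faces)
    (hne : P.G.edgeSet.Nonempty) : ∃ dual : Sym2 V → Sym2 F, P.IsEdgeDual faceOf dual := by
  obtain ⟨e, he⟩ := hne
  obtain ⟨s, -⟩ := exists_pair_faceOf_of_mem_edgeSet hbij he
  have : Nonempty (Sym2 F) := ⟨s⟩
  choose! dual hdual using fun e he => exists_pair_faceOf_of_mem_edgeSet hbij (e := e) he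
  exact ⟨dual, hdual⟩

theorem mem_edgeSet_of_mem_faceOf (hbij : Set.BijOn faceOf Set.univ P.faces) {f : F} {e : Sym2 V}
    (he : e ∈ faceOf f) : e ∈ P.G.edgeSet := by
  obtain ⟨v, c, -, hc⟩ := P.face_cycle (faceOf f) (hbij.mapsTo (Set.mem_univ f))
  exact c.edges_subset_edgeSet (List.mem_toFinset.mp (hc ▸ he))

variable {dual : Sym2 V → Sym2 F}

theorem IsEdgeDual.mem_edgeSet_and_iff (hdual : P.IsEdgeDual faceOf dual)
    (hbij : Set.BijOn faceOf Set.univ P.faces) {e : Sym2 V} {f : F} :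
    e ∈ P.G.edgeSet ∧ f ∈ dual e ↔ e ∈ faceOf f :=
  ⟨fun ⟨he, hf⟩ => ((hdual e he).2 f).mp hf, fun he =>
    have he' := mem_edgeSet_of_mem_faceOf hbij he
    ⟨he', ((hdual e he').2 f).mpr he⟩⟩

theorem IsEdgeDual.mem_edgeSet_and_eq_iff (hdual : P.IsEdgeDual faceOf dual)
    (hbij : Set.BijOn faceOf Set.univ P.faces) {e : Sym2 V} {f g : F} (hfg : f ≠ g) :
    e ∈ P.G.edgeSet ∧ dual e = s(f, g) ↔ e ∈ faceOf f ∧ e ∈ faceOf g := by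
  rw [← hdual.mem_edgeSet_and_iff hbij, ← hdual.mem_edgeSet_and_iff hbij, and_and_and_comm,
    and_self, Sym2.mem_and_mem_iff hfg]

theorem IsEdgeDual.isCubicSphere (hdual : P.IsEdgeDual faceOf dual)
    (hbij : Set.BijOn faceOf Set.univ P.faces) (hCubic : P.Cubic) (hconn : P.G.Connected) :
    IsCubicSphere P.G dual where
  connected := hconn
  cubic := hCubic
  not_isDiag u v huv := (hdual s(u, v) huv).1
  nonempty_boundary f := by
    obtain ⟨v, c, hcyc, hc⟩ := P.face_cycle (faceOf f) (hbij.mapsTo (Set.mem_univ f))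
    have hadj := c.adj_snd hcyc.not_nil
    refine ⟨v, c.snd, hadj, ((hdual _ hadj).2 f).mpr ?_⟩
    rw [← hc, List.mem_toFinset]
    exact c.mk_start_snd_mem_edges hcyc.not_nil
  ncard_boundary f v := by
    obtain ⟨u, c, hcyc, hc⟩ := P.face_cycle (faceOf f) (hbij.mapsTo (Set.mem_univ f))
    have hset : {w | P.G.Adj v w ∧ f ∈ dual s(v, w)} = c.toSubgraph.neighborSet v := by
      ext w
      rw [Subgraph.mem_neighborSet, Walk.adj_toSubgraph_iff_mem_edges, ← List.mem_toFinset, hc]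
      exact hdual.mem_edgeSet_and_iff (e := s(v, w)) hbij
    rw [hset]
    exact fun hne => hcyc.isCycles_spanningCoe_toSubgraph hne
  euler := by
    have := P.euler
    rw [← Set.ncard_coe_finset, ← hbij.ncard_eq, Set.ncard_univ, ← Nat.card_eq_fintype_card] at this
    lia

theorem IsEdgeDual.edgeSet_cutGraph (hdual : P.IsEdgeDual faceOf dual)
    (hbij : Set.BijOn faceOf Set.univ P.faces) (X : Set F) :
    (cutGraph P.G dual X).edgeSet =
      {e | ∃ f ∈ X, ∃ g ∈ Xᶜ, e ∈ faceOf f ∧ e ∈ faceOf g} := by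
  ext e
  induction e with | h u v =>
  constructor
  · rintro ⟨huv, f, hf, g, hg, hfg⟩
    exact ⟨f, hf, g, hg,
      (hdual.mem_edgeSet_and_eq_iff hbij (ne_of_mem_of_not_mem hf hg)).mp ⟨huv, hfg⟩⟩
  · rintro ⟨f, hf, g, hg, hfg⟩
    obtain ⟨huv, hfg⟩ :=
      (hdual.mem_edgeSet_and_eq_iff hbij (ne_of_mem_of_not_mem hf hg)).mpr hfg
    exact ⟨huv, f, hf, g, hg, hfg⟩

theorem IsEdgeDual.eq_dualGraph {G : SimpleGraph F} (hdual : P.IsEdgeDual faceOf dual)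
    (hbij : Set.BijOn faceOf Set.univ P.faces)
    (hG : ∀ f g : F, G.Adj f g ↔ f ≠ g ∧ ∃ e, e ∈ faceOf f ∧ e ∈ faceOf g) :
    G = dualGraph dual P.G := by
  ext f g
  rw [hG, dualGraph_adj_iff]
  refine and_congr_right fun hfg => ?_
  simp only [← hdual.mem_edgeSet_and_eq_iff hbij hfg, Sym2.exists, mem_edgeSet]

end PlaneGraph

theorem stmt10_general {F : Type*} (P : PlaneGraph V) (hCubic : P.Cubic) (hconn : P.G.Connected)
    (G : SimpleGraph F) (faceOf : F → Finset (Sym2 V))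
    (hInto : ∀ f : F, faceOf f ∈ P.faces)
    (hInj : Function.Injective faceOf)
    (hSurj : ∀ s ∈ P.faces, ∃ f : F, faceOf f = s)
    (hDualAdj : ∀ f g : F, G.Adj f g ↔ f ≠ g ∧ ∃ e, e ∈ faceOf f ∧ e ∈ faceOf g) :
    ((∃ (v : V) (w : P.G.Walk v v), w.IsHamiltonianCycle) ↔
      ∃ X Y : Set F, Disjoint X Y ∧ (G.induce X).IsTree ∧ (G.induce Y).IsTree ∧
        X ∪ Y = Set.univ) ∧
    (∀ X Y : Set F, Disjoint X Y → (G.induce X).IsTree → (G.induce Y).IsTree →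
      X ∪ Y = Set.univ →
      ∃ (v : V) (w : P.G.Walk v v), w.IsHamiltonianCycle ∧
        {e | e ∈ w.edges} =
          {e : Sym2 V | ∃ x ∈ X, ∃ y ∈ Y, e ∈ faceOf x ∧ e ∈ faceOf y}) := by
  have hbij : Set.BijOn faceOf Set.univ P.faces :=
    ⟨fun f _ => hInto f, hInj.injOn, fun s hs => by simpa using hSurj s hs⟩
  have : Finite F := Set.finite_univ_iff.mp (hbij.finite_iff_finite.mpr P.faces.finite_toSet)
  have := hconn.nonempty
  obtain ⟨dual, hdual⟩ := PlaneGraph.exists_isEdgeDual hbij hCubic.edgeSet_nonempty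
  obtain rfl := hdual.eq_dualGraph hbij hDualAdj
  have h := hdual.isCubicSphere hbij hCubic hconn
  have hcycle : ∀ X Y : Set F, Disjoint X Y → ((dualGraph dual P.G).induce X).IsTree →
      ((dualGraph dual P.G).induce Y).IsTree → X ∪ Y = Set.univ →
      ∃ (v : V) (w : P.G.Walk v v), w.IsHamiltonianCycle ∧
        w.edgeSet = {e | ∃ x ∈ X, ∃ y ∈ Y, e ∈ faceOf x ∧ e ∈ faceOf y} := by
    intro X Y hXY hX hY huniv
    obtain rfl : Xᶜ = Y := (isCompl_iff.mpr ⟨hXY, codisjoint_iff.mpr huniv⟩).compl_eq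
    rw [← hdual.edgeSet_cutGraph hbij]
    exact (h.isSpanningCycle_cutGraph hX hY).exists_isHamiltonianCycle cutGraph_le
  refine ⟨⟨fun ⟨v, w, hw⟩ => ?_, fun ⟨X, Y, hXY, hX, hY, huniv⟩ => ?_⟩, hcycle⟩
  · obtain ⟨X, hX, hXc⟩ := h.exists_isTree_induce (IsSpanningCycle.spanningCoe_toSubgraph hw)
      w.toSubgraph.spanningCoe_le
    exact ⟨X, Xᶜ, disjoint_compl_right, hX, hXc, Set.union_compl_self X⟩
  · obtain ⟨v, w, hw, -⟩ := hcycle X Y hXY hX hY huniv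
    exact ⟨v, w, hw⟩

/-- Stein's theorem: a cubic 3-connected bipartite plane graph `P` is hamiltonian
iff its dual `G = P*` has two disjoint induced trees covering all its vertices;
moreover, for such trees `X, Y`, the edges of `P` dual to the `X–Y` edges of `G`
form the edge set of a Hamilton cycle of `P`. -/
theorem stmt10 {F : Type*} [Fintype F] (P : PlaneGraph V)
    (hCubic : P.Cubic) (hBip : P.Bipartite) (h3 : P.ThreeConnected)
    (G : SimpleGraph F) (faceOf : F → Finset (Sym2 V))
    (hInto : ∀ f : F, faceOf f ∈ P.faces)
    (hInj : Function.Injective faceOf)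
    (hSurj : ∀ s ∈ P.faces, ∃ f : F, faceOf f = s)
    (hDualAdj : ∀ f g : F, G.Adj f g ↔ f ≠ g ∧ ∃ e, e ∈ faceOf f ∧ e ∈ faceOf g) :
    ((∃ (v : V) (w : P.G.Walk v v), w.IsHamiltonianCycle) ↔
      ∃ X Y : Set F, Disjoint X Y ∧ (G.induce X).IsTree ∧ (G.induce Y).IsTree ∧
        X ∪ Y = Set.univ) ∧
    (∀ X Y : Set F, Disjoint X Y → (G.induce X).IsTree → (G.induce Y).IsTree →
      X ∪ Y = Set.univ →
      ∃ (v : V) (w : P.G.Walk v v), w.IsHamiltonianCycle ∧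
        {e | e ∈ w.edges} =
          {e : Sym2 V | ∃ x ∈ X, ∃ y ∈ Y, e ∈ faceOf x ∧ e ∈ faceOf y}) :=
  stmt10_general P hCubic h3.connected G faceOf hInto hInj hSurj hDualAdj
end

section
/- Let P be a cubic 3-connected bipartite plane graph which has a 2-factor consisting only of facial 4-cycles, and let P* be its dual. Then P has at least 3^(2|P*|/Δ(P*)²) different Hamilton cycles. -/
variable {V : Type*} [Fintype V] [DecidableEq V]

/-!
The squares of the 2-factor form one class of a proper 3-colouring of the faces: picking two
opposite edges on each of them leaves every vertex on exactly two unpicked edges, so by duality the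
unpicked edges are those separating two classes of faces, and the faces other than the squares
inherit the colours of these classes. The duality is exactness of the mod 2 face-edge-vertex
complex, which follows from Euler's formula.

For each of the other two colours `i`, every square meets two faces of colour `i` across two
opposite edges, so the squares are the edges of a multigraph on the faces of colour `i`. The
boundaries of these faces form a 2-factor of the graph, and switching it along the squares of a
spanning tree merges all its cycles into a Hamilton cycle. Different trees give different cycles.

To count spanning trees, let a tree grow face by face. A face linked by `r` squares to the part
already reached can be attached in `r` ways, and `2 ^ (r - 1) ≤ r ^ d` as `r ≤ d + 1`, where
`2 * (d + 1)` is the maximal length of a face. Hence the number `τ` of spanning trees satisfies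
`2 ^ (n - m + 1) ≤ τ ^ d` if there are `n` squares and `m` faces of colour `i`. By Euler's formula
there are `2 * n + 2` faces, so that multiplying over both colours gives `2 ^ n ≤ N ^ (2 * d)` for
the number `N` of Hamilton cycles. As `3 ^ 5 ≤ 2 ^ 8`, this is enough if `2 ≤ d`. If `d = 1`, then
all faces are squares, there are six of them, and the spanning trees for two different choices of
the pair of colours give four Hamilton cycles.
-/

/-! ### Cycles and switching -/

section Graph

open SimpleGraph

variable {W α : Type*} {G H : SimpleGraph W}

theorem eq_of_reachable {x : W → α} (hx : ∀ u v, G.Adj u v → x u = x v) {u v : W}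
    (huv : G.Reachable u v) : x u = x v := by
  obtain ⟨p⟩ := huv
  induction p with
  | nil => rfl
  | cons hadj _ ih => exact (hx _ _ hadj).trans ih

theorem exists_adj_of_mem_of_notMem (hG : G.Connected) {s : Set W} {u v : W} (hu : u ∈ s)
    (hv : v ∉ s) : ∃ a b, G.Adj a b ∧ a ∈ s ∧ b ∉ s := by
  by_contra! hc
  exact hv <| eq_of_reachable (x := (· ∈ s))
    (fun a b hab => propext ⟨hc a b hab, hc b a hab.symm⟩) (hG.preconnected u v) ▸ hu

theorem reachable_of_forall_adj (h : ∀ a b, G.Adj a b → H.Reachable a b) {u v : W}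
    (huv : G.Reachable u v) : H.Reachable u v := by
  obtain ⟨p⟩ := huv
  induction p with
  | nil => rfl
  | cons hadj _ ih => exact (h _ _ hadj).trans ih

theorem reachable_of_isCycles [Finite W] (hG : G.IsCycles) {a b : W} (hab : G.Adj a b)
    (h : ∀ u v, G.Adj u v → G.Reachable a u → s(u, v) ≠ s(a, b) → H.Adj u v) :
    H.Reachable a b := by
  classical
  obtain ⟨p, hp⟩ := reachable_deleteEdges_iff_exists_walk.1 (hG.reachable_deleteEdges hab)
  refine ⟨p.transfer H fun e he => ?_⟩
  induction e with
  | _ u v =>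
    exact h u v (p.adj_of_mem_edges he) ⟨p.takeUntil u (p.fst_mem_support_of_mem_edges he)⟩
      fun heq => hp (heq ▸ he)

/-- Each of the two edges is bypassed along the rest of its cycle, which avoids the other edge. -/
theorem reachable_of_switch [Finite W] (hG : G.IsCycles) {a b c d u v : W} (hab : G.Adj a b)
    (hcd : G.Adj c d) (hac : ¬ G.Reachable a c)
    (h : ∀ x y, G.Adj x y → s(x, y) ≠ s(a, b) → s(x, y) ≠ s(c, d) → H.Adj x y)
    (huv : G.Reachable u v) : H.Reachable u v := by
  have hedge {x y : W} (hxy : G.Adj x y) (z w : W) (he : s(z, w) = s(x, y)) :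
      G.Reachable z x := by
    rcases Sym2.eq_iff.1 he with ⟨rfl, rfl⟩ | ⟨rfl, rfl⟩
    exacts [.rfl, hxy.symm.reachable]
  have hH : H.Reachable a b := reachable_of_isCycles hG hab fun x y hxy hx hne =>
    h x y hxy hne fun he => hac (hx.trans (hedge hcd x y he))
  have hH' : H.Reachable c d := reachable_of_isCycles hG hcd fun x y hxy hx hne =>
    h x y hxy (fun he => hac (hx.trans (hedge hab x y he)).symm) hne
  refine reachable_of_forall_adj (fun x y hxy => ?_) huv
  by_cases h₁ : s(x, y) = s(a, b)
  · rcases Sym2.eq_iff.1 h₁ with ⟨rfl, rfl⟩ | ⟨rfl, rfl⟩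
    exacts [hH, hH.symm]
  by_cases h₂ : s(x, y) = s(c, d)
  · rcases Sym2.eq_iff.1 h₂ with ⟨rfl, rfl⟩ | ⟨rfl, rfl⟩
    exacts [hH', hH'.symm]
  exact (h x y hxy h₁ h₂).reachable

/-- The edge sets of the Hamilton cycles of `G`. -/
def hamiltonCycles [DecidableEq W] (G : SimpleGraph W) : Set (Set (Sym2 W)) :=
  {s | ∃ (v : W) (w : G.Walk v v), w.IsHamiltonianCycle ∧ s = {e | e ∈ w.edges}}

theorem edgeSet_mem_hamiltonCycles [Finite W] [DecidableEq W] (hHG : H ≤ G) (hH : H.Connected)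
    (h2 : ∀ v, (H.neighborSet v).ncard = 2) : H.edgeSet ∈ hamiltonCycles G := by
  have hcyc : H.IsCycles := fun v _ => h2 v
  obtain ⟨v⟩ := hH.nonempty
  obtain ⟨c, hc, hcv⟩ := hcyc.exists_cycle_toSubgraph_verts_eq_connectedComponentSupp
    (v := v) (c := H.connectedComponentMk v) rfl
    (Set.nonempty_of_ncard_ne_zero (by rw [h2 v]; exact two_ne_zero))
  have hsupp (u : W) : u ∈ c.support := by
    rw [← Walk.mem_verts_toSubgraph, hcv]
    exact ConnectedComponent.sound (hH.preconnected u v)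
  have hedge (u w : W) : s(u, w) ∈ c.edges ↔ H.Adj u w := by
    have hnbr : c.toSubgraph.neighborSet u = H.neighborSet u :=
      Set.eq_of_subset_of_ncard_le (c.toSubgraph.neighborSet_subset u)
        (by rw [h2, hc.ncard_neighborSet_toSubgraph_eq_two (hsupp u)])
    rw [← Walk.mem_edges_toSubgraph]
    exact Set.ext_iff.1 hnbr w
  refine ⟨v, c.mapLe hHG, ?_, ?_⟩
  · have hcH : (c.mapLe hHG).IsCycle := hc.mapLe hHG
    refine ⟨hcH, hcH.isPath_tail.isHamiltonian_of_mem fun u => ?_⟩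
    rw [Walk.support_tail_of_not_nil _ hcH.not_nil]
    have hu : u ∈ (c.mapLe hHG).support := by simpa using hsupp u
    rcases (c.mapLe hHG).mem_support_iff.1 hu with rfl | hu
    · exact Walk.end_mem_tail_support hcH.not_nil
    · exact hu
  · ext e
    induction e with
    | _ u w => simpa using (hedge u w).symm

end Graph

/-! ### Two numerical inequalities -/

theorem two_pow_le_two_mul_pow {r d : ℕ} (hr : 0 < r) (hrd : r ≤ d + 1) : 2 ^ r ≤ 2 * r ^ d := by
  obtain rfl | hr : r = 1 ∨ 2 ≤ r := by lia
  · simp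
  · calc 2 ^ r ≤ 2 ^ (d + 1) := by gcongr; exact one_le_two
      _ = 2 * 2 ^ d := pow_succ' 2 d
      _ ≤ 2 * r ^ d := by gcongr

theorem three_rpow_le_of_two_pow_le_pow {n d N : ℕ} (hd : 2 ≤ d) (hn : d + 1 ≤ n)
    (h : 2 ^ n ≤ N ^ (2 * d)) :
    (3 : ℝ) ^ (2 * ((2 * n + 2 : ℕ) : ℝ) / ((2 * (d + 1) : ℕ) : ℝ) ^ 2) ≤ N := by
  have hexp : 2 * ((2 * n + 2 : ℕ) : ℝ) / ((2 * (d + 1) : ℕ) : ℝ) ^ 2 * (2 * d : ℕ) ≤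
      5 * (n / 8) := by
    have hd : (2 : ℝ) ≤ d := by exact_mod_cast hd
    have hn : (d : ℝ) + 1 ≤ n := by exact_mod_cast hn
    push_cast
    rw [div_mul_eq_mul_div, div_le_iff₀ (by positivity)]
    nlinarith [mul_nonneg (sub_nonneg.2 hd) (sub_nonneg.2 hn),
      mul_nonneg (mul_nonneg (sub_nonneg.2 hd) (sub_nonneg.2 hd)) (sub_nonneg.2 hn)]
  refine le_of_pow_le_pow_left₀ (n := 2 * d) (by lia) (by positivity) ?_
  calc ((3 : ℝ) ^ (2 * ((2 * n + 2 : ℕ) : ℝ) / ((2 * (d + 1) : ℕ) : ℝ) ^ 2)) ^ (2 * d)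
      ≤ 3 ^ (5 * (n / 8 : ℝ)) := by
        rw [← Real.rpow_mul_natCast (by norm_num)]
        exact Real.rpow_le_rpow_of_exponent_le (by norm_num) hexp
    _ = (3 ^ (5 : ℝ)) ^ (n / 8 : ℝ) := Real.rpow_mul (by norm_num) _ _
    _ ≤ (2 ^ (8 : ℝ)) ^ (n / 8 : ℝ) := by gcongr; norm_num
    _ = 2 ^ n := by
        rw [← Real.rpow_mul (by norm_num), mul_div_cancel₀ _ (by norm_num), Real.rpow_natCast]
    _ ≤ (N : ℝ) ^ (2 * d) := by exact_mod_cast h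

/-! ### Trees of square faces -/

/-- The incidences of a cubic graph `G` cellularly embedded in a surface with properly 3-coloured
faces: `face i v` is the face of colour `i` at the vertex `v` and `nbr i v` is the neighbour of `v`
along the edge at `v` off this face. The edge from `v` to `nbr i v` joins two different faces of
colour `i`, and a face of colour `i` is an orbit of the involutions `nbr j` with `j ≠ i`. -/
structure FaceSystem {W : Type*} (G : SimpleGraph W) (F : Type*) where
  face : Fin 3 → W → F
  nbr : Fin 3 → W → W
  adj_iff : ∀ {u v}, G.Adj u v ↔ ∃ i, v = nbr i u
  nbr_nbr : ∀ i v, nbr i (nbr i v) = v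
  face_nbr_eq_iff : ∀ {i j v}, face j (nbr i v) = face j v ↔ i ≠ j
  reflTransGen : ∀ {i u v}, face i u = face i v →
    Relation.ReflTransGen (fun a b => ∃ j ≠ i, b = nbr j a) u v

namespace FaceSystem

open SimpleGraph Finset

variable {W F : Type*} {G : SimpleGraph W} {S : FaceSystem G F} {i j k : Fin 3}

theorem face_nbr (hij : i ≠ j) (v : W) : S.face j (S.nbr i v) = S.face j v :=
  S.face_nbr_eq_iff.2 hij

theorem face_nbr_ne (i : Fin 3) (v : W) : S.face i (S.nbr i v) ≠ S.face i v :=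
  fun h => S.face_nbr_eq_iff.1 h rfl

theorem adj_nbr (i : Fin 3) (v : W) : G.Adj v (S.nbr i v) :=
  S.adj_iff.2 ⟨i, rfl⟩

theorem nbr_ne (i : Fin 3) (v : W) : S.nbr i v ≠ v :=
  (S.adj_nbr i v).ne'

theorem nbr_injective (S : FaceSystem G F) (i : Fin 3) : Function.Injective (S.nbr i) :=
  Function.LeftInverse.injective (S.nbr_nbr i)

theorem nbr_ne_nbr (hij : i ≠ j) (v : W) : S.nbr i v ≠ S.nbr j v :=
  fun h => S.face_nbr_ne j v (h ▸ S.face_nbr hij v)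

theorem eq_nbr_of_adj_of_face_ne {u v : W} (huv : G.Adj u v) (h : S.face i u ≠ S.face i v) :
    v = S.nbr i u := by
  obtain ⟨j, rfl⟩ := S.adj_iff.1 huv
  by_cases hj : j = i
  · rw [hj]
  · exact absurd (S.face_nbr hj u).symm h

section Fintype

variable [Fintype W] [DecidableEq F]

/-- The set of faces of colour `i`. -/
def faces (S : FaceSystem G F) (i : Fin 3) : Finset F := univ.image (S.face i)

/-- The set of vertices on the face of colour `i` at `v`. -/
def boundary (S : FaceSystem G F) (i : Fin 3) (v : W) : Finset W := {u | S.face i u = S.face i v}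

@[simp]
theorem mem_boundary {u v : W} : u ∈ S.boundary i v ↔ S.face i u = S.face i v := by
  simp [boundary]

theorem face_mem_faces (i : Fin 3) (v : W) : S.face i v ∈ S.faces i :=
  mem_image_of_mem _ (mem_univ v)

theorem card_eq_sum_boundary (S : FaceSystem G F) (i : Fin 3) :
    Fintype.card W = ∑ f ∈ S.faces i, #{u | S.face i u = f} :=
  card_eq_sum_card_image (S.face i) univ

theorem even_card_boundary (S : FaceSystem G F) (i : Fin 3) (v : W) : Even #(S.boundary i v) := by
  obtain ⟨j, hj⟩ := exists_ne i
  rw [even_iff_two_dvd, ← ZMod.natCast_eq_zero_iff, card_eq_sum_ones, Nat.cast_sum]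
  refine sum_involution (fun u _ => S.nbr j u) (fun _ _ => by decide) (fun u _ _ => S.nbr_ne j u)
    (fun u hu => ?_) fun u _ => S.nbr_nbr j u
  rwa [mem_boundary, S.face_nbr hj, ← mem_boundary]

theorem two_mul_card_boundary_le (S : FaceSystem G F) (i : Fin 3) (v : W) :
    2 * #(S.boundary i v) ≤ Fintype.card W := by
  classical
  have hd : Disjoint (S.boundary i v) ((S.boundary i v).image (S.nbr i)) := by
    rw [Finset.disjoint_right]
    simp only [mem_image, mem_boundary, forall_exists_index, and_imp]
    rintro _ u hu rfl
    exact hu ▸ S.face_nbr_ne i u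
  rw [two_mul]
  nth_rw 2 [← card_image_of_injective _ (S.nbr_injective i)]
  rw [← card_union_of_disjoint hd]
  exact card_le_univ _

/-- The three colours `i`, `j`, `k` are different and the faces of colour `k` are squares. -/
structure IsQuadrangular (S : FaceSystem G F) (i j k : Fin 3) : Prop where
  ij : i ≠ j
  ik : i ≠ k
  jk : j ≠ k
  card_boundary : ∀ v, #(S.boundary k v) = 4

namespace IsQuadrangular

variable (h : S.IsQuadrangular i j k)

include h

theorem boundary_eq [DecidableEq W] (v : W) :
    S.boundary k v = {v, S.nbr i v, S.nbr j v, S.nbr i (S.nbr j v)} := by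
  refine (eq_of_subset_of_card_le (fun u hu => ?_) ?_).symm
  · simp only [mem_insert, mem_singleton] at hu
    rcases hu with rfl | rfl | rfl | rfl <;> simp [S.face_nbr h.ik, S.face_nbr h.jk]
  · have h₁ : v ≠ S.nbr i (S.nbr j v) := fun hv =>
      S.nbr_ne_nbr h.ij v (by conv_lhs => rw [hv, S.nbr_nbr])
    have h₂ : S.nbr i v ≠ S.nbr i (S.nbr j v) := fun hv =>
      S.nbr_ne j v (S.nbr_injective i hv).symm
    rw [h.card_boundary, card_insert_of_notMem, card_insert_of_notMem, card_pair]
    · exact (S.nbr_ne i _).symm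
    · simp [S.nbr_ne_nbr h.ij, h₂]
    · simp [(S.nbr_ne i v).symm, (S.nbr_ne j v).symm, h₁]

theorem nbr_comm (v : W) : S.nbr i (S.nbr j v) = S.nbr j (S.nbr i v) := by
  classical
  have hv : S.nbr j (S.nbr i v) ∈ S.boundary k v := by simp [S.face_nbr h.ik, S.face_nbr h.jk]
  rw [h.boundary_eq] at hv
  simp only [mem_insert, mem_singleton] at hv
  rcases hv with hv | hv | hv | hv
  · exact absurd (by rw [← S.nbr_nbr j (S.nbr i v), hv]) (S.nbr_ne_nbr h.ij v)
  · exact absurd hv (S.nbr_ne j _)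
  · exact absurd (S.nbr_injective j hv) (S.nbr_ne i v)
  · exact hv.symm

theorem face_nbr_of_face_eq {u v : W} (huv : S.face k u = S.face k v) :
    S.face i u = S.face i v ∧ S.face i (S.nbr i u) = S.face i (S.nbr i v) ∨
      S.face i u = S.face i (S.nbr i v) ∧ S.face i (S.nbr i u) = S.face i v := by
  classical
  have hu : u ∈ S.boundary k v := mem_boundary.2 huv
  rw [h.boundary_eq] at hu
  simp only [mem_insert, mem_singleton] at hu
  have hj := fun w => S.face_nbr h.ij.symm w
  rcases hu with rfl | rfl | rfl | rfl
  · exact .inl ⟨rfl, rfl⟩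
  · exact .inr ⟨rfl, by rw [S.nbr_nbr]⟩
  · exact .inl ⟨hj v, by rw [h.nbr_comm, hj]⟩
  · exact .inr ⟨by rw [h.nbr_comm, hj], by rw [S.nbr_nbr, hj]⟩

open scoped Classical in
/-- The spanning subgraph with the edges off the faces of colour `k` and, on a face of this colour,
the two edges that leave the faces of colour `i` if it belongs to `T` and the two edges that leave
the faces of colour `j` otherwise. For `T = ∅` this is the union of the boundaries of the faces of
colour `i`. -/
noncomputable def switchGraph (T : Finset F) : SimpleGraph W where
  Adj u v := v = S.nbr k u ∨ v = if S.face k u ∈ T then S.nbr i u else S.nbr j u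
  symm := ⟨by
    rintro u v (rfl | rfl)
    · exact .inl (S.nbr_nbr k u).symm
    · right
      split_ifs with hu <;> simp_all [S.face_nbr h.ik, S.face_nbr h.jk, S.nbr_nbr]⟩
  loopless := ⟨fun u => by
    rintro (hu | hu)
    · exact S.nbr_ne k u hu.symm
    · split_ifs at hu
      exacts [S.nbr_ne i u hu.symm, S.nbr_ne j u hu.symm]⟩

variable {X T : Finset F} {u v x : W}

theorem switchGraph_adj_of_mem (hu : S.face k u ∈ T) :
    (h.switchGraph T).Adj u v ↔ v = S.nbr k u ∨ v = S.nbr i u := by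
  simp [switchGraph, hu]

theorem switchGraph_adj_of_notMem (hu : S.face k u ∉ T) :
    (h.switchGraph T).Adj u v ↔ v = S.nbr k u ∨ v = S.nbr j u := by
  simp [switchGraph, hu]

theorem switchGraph_le (T : Finset F) : h.switchGraph T ≤ G := by
  intro u v huv
  by_cases hu : S.face k u ∈ T
  · rcases (h.switchGraph_adj_of_mem hu).1 huv with rfl | rfl <;> exact S.adj_nbr _ _
  · rcases (h.switchGraph_adj_of_notMem hu).1 huv with rfl | rfl <;> exact S.adj_nbr _ _

theorem switchGraph_adj_nbr_right (T : Finset F) (v : W) :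
    (h.switchGraph T).Adj v (S.nbr k v) :=
  .inl rfl

theorem switchGraph_adj_nbr_left_iff : (h.switchGraph T).Adj v (S.nbr i v) ↔ S.face k v ∈ T := by
  by_cases hv : S.face k v ∈ T
  · simp [h.switchGraph_adj_of_mem hv, hv]
  · simp [h.switchGraph_adj_of_notMem hv, hv, S.nbr_ne_nbr h.ik, S.nbr_ne_nbr h.ij]

theorem ncard_neighborSet_switchGraph (T : Finset F) (v : W) :
    ((h.switchGraph T).neighborSet v).ncard = 2 := by
  by_cases hv : S.face k v ∈ T
  · rw [show (h.switchGraph T).neighborSet v = {S.nbr k v, S.nbr i v} from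
      Set.ext fun _ => h.switchGraph_adj_of_mem hv, Set.ncard_pair (S.nbr_ne_nbr h.ik.symm v)]
  · rw [show (h.switchGraph T).neighborSet v = {S.nbr k v, S.nbr j v} from
      Set.ext fun _ => h.switchGraph_adj_of_notMem hv, Set.ncard_pair (S.nbr_ne_nbr h.jk.symm v)]

theorem reachable_switchGraph_of_face_eq (hT : ∀ w, S.face i w = S.face i u → S.face k w ∉ T)
    (huv : S.face i u = S.face i v) : (h.switchGraph T).Reachable u v := by
  suffices ∀ w, Relation.ReflTransGen (fun a b => ∃ l ≠ i, b = S.nbr l a) u w →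
      S.face i w = S.face i u ∧ (h.switchGraph T).Reachable u w from
    (this v (S.reflTransGen huv)).2
  intro w hw
  induction hw with
  | refl => exact ⟨rfl, .rfl⟩
  | tail _ hab ih =>
    obtain ⟨l, hl, rfl⟩ := hab
    refine ⟨(S.face_nbr hl _).trans ih.1, ih.2.trans (Adj.reachable ?_)⟩
    rw [h.switchGraph_adj_of_notMem (hT _ ih.1)]
    have hl' : l = k ∨ l = j := by
      have := h.ij
      have := h.ik
      have := h.jk
      lia
    rcases hl' with rfl | rfl
    exacts [.inl rfl, .inr rfl]

theorem face_mem_iff_of_reachable (hT : ∀ v, S.face k v ∈ T → S.face i v ∈ X)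
    (huv : (h.switchGraph T).Reachable u v) : S.face i u ∈ X ↔ S.face i v ∈ X := by
  refine Eq.to_iff (eq_of_reachable (x := (S.face i · ∈ X)) (fun a b hab => ?_) huv)
  by_cases ha : S.face k a ∈ T
  · rcases (h.switchGraph_adj_of_mem ha).1 hab with rfl | rfl
    · rw [S.face_nbr h.ik.symm]
    · simp [hT a ha, hT (S.nbr i a) (by rwa [S.face_nbr h.ik])]
  · rcases (h.switchGraph_adj_of_notMem ha).1 hab with rfl | rfl
    · rw [S.face_nbr h.ik.symm]
    · rw [S.face_nbr h.ij.symm]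

theorem switchGraph_adj_insert {q r : W} (hx : S.face k x ∉ T)
    (hqr : (h.switchGraph T).Adj q r) (h₁ : s(q, r) ≠ s(x, S.nbr j x))
    (h₂ : s(q, r) ≠ s(S.nbr i x, S.nbr j (S.nbr i x))) :
    (h.switchGraph (insert (S.face k x) T)).Adj q r := by
  classical
  by_cases hqx : S.face k q = S.face k x
  · rcases (h.switchGraph_adj_of_notMem (hqx ▸ hx)).1 hqr with rfl | rfl
    · exact h.switchGraph_adj_nbr_right _ _
    have hq : q ∈ S.boundary k x := mem_boundary.2 hqx
    rw [h.boundary_eq] at hq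
    simp only [mem_insert, mem_singleton] at hq
    rcases hq with rfl | rfl | rfl | rfl
    · exact absurd rfl h₁
    · exact absurd rfl h₂
    · exact absurd (by rw [S.nbr_nbr, Sym2.eq_swap]) h₁
    · exact absurd (by rw [h.nbr_comm, S.nbr_nbr, Sym2.eq_swap]) h₂
  · simpa only [switchGraph, mem_insert, hqx, false_or] using hqr

theorem reachable_switchGraph_insert (hT : ∀ v, S.face k v ∈ T → S.face i v ∈ X)
    (hx : S.face i x ∉ X) (hx' : S.face i (S.nbr i x) ∈ X)
    (huv : (h.switchGraph T).Reachable u v) :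
    (h.switchGraph (insert (S.face k x) T)).Reachable u v := by
  classical
  have hxT : S.face k x ∉ T := mt (hT x) hx
  have hadj {w : W} (hw : S.face k w = S.face k x) : (h.switchGraph T).Adj w (S.nbr j w) :=
    (h.switchGraph_adj_of_notMem (hw ▸ hxT)).2 (.inr rfl)
  refine reachable_of_switch (fun v _ => h.ncard_neighborSet_switchGraph T v) (hadj rfl)
    (hadj (S.face_nbr h.ik x)) (fun hxx' => hx ?_)
    (fun q r => h.switchGraph_adj_insert hxT) huv
  exact (h.face_mem_iff_of_reachable hT hxx').2 hx'

end IsQuadrangular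

/-- Regard the faces of colour `i` as vertices and the faces of colour `k` as edges, a face of
colour `k` at `v` joining `face i v` to `face i (nbr i v)`. Then `S.IsTree i k X T` means that `T`
is the edge set of a tree with vertex set `X`. -/
inductive IsTree (S : FaceSystem G F) (i k : Fin 3) : Finset F → Finset F → Prop
  | singleton (v : W) : IsTree S i k {S.face i v} ∅
  | attach {X T : Finset F} {x : W} (hT : IsTree S i k X T) (hx : S.face i x ∉ X)
      (hx' : S.face i (S.nbr i x) ∈ X) :
      IsTree S i k (insert (S.face i x) X) (insert (S.face k x) T)

variable {X T : Finset F} {u v x : W}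

theorem IsTree.subset_faces (hT : S.IsTree i k X T) : T ⊆ S.faces k := by
  induction hT with
  | singleton => exact empty_subset _
  | attach _ _ _ ih => exact insert_subset (S.face_mem_faces k _) ih

theorem IsTree.face_mem (hT : S.IsTree i k X T) (h : S.IsQuadrangular i j k)
    (hv : S.face k v ∈ T) : S.face i v ∈ X := by
  induction hT with
  | singleton => exact absurd hv (notMem_empty _)
  | attach _ _ hx' ih =>
    rcases mem_insert.1 hv with hv | hv
    · rcases h.face_nbr_of_face_eq hv with ⟨hv, -⟩ | ⟨hv, -⟩
      · exact hv ▸ mem_insert_self _ _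
      · exact hv ▸ mem_insert_of_mem hx'
    · exact mem_insert_of_mem (ih hv)

theorem IsTree.face_notMem (hT : S.IsTree i k X T) (h : S.IsQuadrangular i j k)
    (hx : S.face i x ∉ X) : S.face k x ∉ T :=
  mt (hT.face_mem h) hx

theorem IsTree.card_add_one (hT : S.IsTree i k X T) (h : S.IsQuadrangular i j k) :
    #T + 1 = #X := by
  induction hT with
  | singleton => simp
  | attach hT hx hx' ih =>
    rw [card_insert_of_notMem (hT.face_notMem h hx), card_insert_of_notMem hx, ih]

theorem IsTree.reachable (hT : S.IsTree i k X T) (h : S.IsQuadrangular i j k)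
    (hu : S.face i u ∈ X) (hv : S.face i v ∈ X) : (h.switchGraph T).Reachable u v := by
  induction hT generalizing u v with
  | singleton =>
    rw [mem_singleton] at hu hv
    exact h.reachable_switchGraph_of_face_eq (fun _ _ => notMem_empty _) (hu.trans hv.symm)
  | @attach X T x hT hx hx' ih =>
    have hmono {a b : W} (hab : (h.switchGraph T).Reachable a b) :=
      h.reachable_switchGraph_insert (fun _ => hT.face_mem h) hx hx' hab
    suffices ∀ w, S.face i w ∈ insert (S.face i x) X →
        (h.switchGraph (insert (S.face k x) T)).Reachable x w from
      (this u hu).symm.trans (this v hv)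
    intro w hw
    rcases mem_insert.1 hw with hw | hw
    · exact hmono (h.reachable_switchGraph_of_face_eq
        (fun a ha => hT.face_notMem h (ha ▸ hx)) hw.symm)
    · have hxx' : (h.switchGraph (insert (S.face k x) T)).Adj x (S.nbr i x) :=
        h.switchGraph_adj_nbr_left_iff.2 (mem_insert_self _ _)
      exact hxx'.reachable.trans (hmono (ih hx' hw))

theorem IsTree.mem_hamiltonCycles [DecidableEq W] [Nonempty W]
    (hT : S.IsTree i k (S.faces i) T) (h : S.IsQuadrangular i j k) :
    (h.switchGraph T).edgeSet ∈ hamiltonCycles G :=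
  edgeSet_mem_hamiltonCycles (h.switchGraph_le T)
    ⟨fun u v => hT.reachable h (S.face_mem_faces i u) (S.face_mem_faces i v)⟩
    (h.ncard_neighborSet_switchGraph T)

theorem faces_induction (S : FaceSystem G F) (i : Fin 3) (hG : G.Connected) {p : Finset F → Prop}
    (singleton : ∀ v, p {S.face i v})
    (insert : ∀ X x, p X → S.face i x ∉ X → S.face i (S.nbr i x) ∈ X → p (insert (S.face i x) X)) :
    p (S.faces i) := by
  obtain ⟨v⟩ := hG.nonempty
  suffices ∀ m < #(S.faces i), ∃ X ⊆ S.faces i, #X = m + 1 ∧ S.face i v ∈ X ∧ p X by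
    have hpos : 0 < #(S.faces i) := card_pos.2 ⟨_, S.face_mem_faces i v⟩
    obtain ⟨X, hX, hXc, -, hp⟩ := this (#(S.faces i) - 1) (by lia)
    exact eq_of_subset_of_card_le hX (by lia) ▸ hp
  intro m hm
  induction m with
  | zero => exact ⟨_, singleton_subset_iff.2 (S.face_mem_faces i v), by simp, by simp, singleton v⟩
  | succ m ih =>
    obtain ⟨X, hX, hXc, hvX, hp⟩ := ih (by lia)
    obtain ⟨f, hf, hfX⟩ := exists_mem_notMem_of_card_lt_card (hXc ▸ hm)
    obtain ⟨w, -, rfl⟩ := mem_image.1 hf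
    obtain ⟨y, x, hyx, hy, hx⟩ := exists_adj_of_mem_of_notMem hG
      (s := {u | S.face i u ∈ X}) hvX hfX
    obtain rfl : y = S.nbr i x :=
      eq_nbr_of_adj_of_face_ne hyx.symm fun h => hx (h ▸ hy : S.face i x ∈ X)
    exact ⟨_, insert_subset (S.face_mem_faces i x) hX, by rw [card_insert_of_notMem hx, hXc],
      mem_insert_of_mem hvX, insert X x hp hx hy⟩

open scoped Classical in
/-- The edge sets of the trees on the vertex set `X`. -/
noncomputable def trees (S : FaceSystem G F) (i k : Fin 3) (X : Finset F) : Finset (Finset F) :=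
  {T ∈ (S.faces k).powerset | S.IsTree i k X T}

theorem mem_trees : T ∈ S.trees i k X ↔ S.IsTree i k X T := by
  classical
  simpa [trees] using IsTree.subset_faces

/-- The faces of colour `k` all of whose vertices are on faces in `X`, that is, the edges spanned
by `X`. -/
def spannedFaces (S : FaceSystem G F) (i k : Fin 3) (X : Finset F) : Finset F :=
  {q ∈ S.faces k | ∀ v, S.face k v = q → S.face i v ∈ X}

/-- The faces of colour `k` that join the face `f` of colour `i` to a face in `X`. -/
def linkingFaces (S : FaceSystem G F) (i k : Fin 3) (X : Finset F) (f : F) : Finset F :=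
  ({v | S.face i v = f ∧ S.face i (S.nbr i v) ∈ X} : Finset W).image (S.face k)

theorem mem_linkingFaces {f q : F} : q ∈ S.linkingFaces i k X f ↔
    ∃ v, (S.face i v = f ∧ S.face i (S.nbr i v) ∈ X) ∧ S.face k v = q := by
  simp [linkingFaces]

theorem spannedFaces_singleton (hik : i ≠ k) (v : W) : S.spannedFaces i k {S.face i v} = ∅ := by
  refine filter_eq_empty_iff.2 fun q hq hall => ?_
  obtain ⟨u, -, rfl⟩ := mem_image.1 hq
  have hu := mem_singleton.1 (hall u rfl)
  have hu' := mem_singleton.1 (hall (S.nbr i u) (S.face_nbr hik u))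
  exact S.face_nbr_ne i u (hu'.trans hu.symm)

theorem spannedFaces_faces (S : FaceSystem G F) (i k : Fin 3) :
    S.spannedFaces i k (S.faces i) = S.faces k :=
  filter_eq_self.2 fun _ _ v _ => S.face_mem_faces i v

theorem card_spannedFaces_insert_le (hik : i ≠ k) (f : F) :
    #(S.spannedFaces i k (insert f X)) ≤ #(S.spannedFaces i k X) + #(S.linkingFaces i k X f) := by
  refine (card_le_card fun q hq => ?_).trans (card_union_le _ _)
  obtain ⟨hq, hall⟩ := mem_filter.1 hq
  rw [mem_union]
  by_cases hX : ∀ v, S.face k v = q → S.face i v ∈ X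
  · exact .inl (mem_filter.2 ⟨hq, hX⟩)
  · push Not at hX
    obtain ⟨v, rfl, hv⟩ := hX
    have hvf : S.face i v = f := (mem_insert.1 (hall v rfl)).resolve_right hv
    have hv' := mem_insert.1 (hall (S.nbr i v) (S.face_nbr hik v))
    exact .inr (mem_linkingFaces.2
      ⟨v, ⟨hvf, hv'.resolve_left (hvf ▸ S.face_nbr_ne i v)⟩, rfl⟩)

namespace IsQuadrangular

variable (h : S.IsQuadrangular i j k)

include h

theorem card_trees_mul_le (hx : S.face i x ∉ X) :
    #(S.trees i k X) * #(S.linkingFaces i k X (S.face i x)) ≤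
      #(S.trees i k (insert (S.face i x) X)) := by
  have hnotMem {T q} (hT : T ∈ S.trees i k X) (hq : q ∈ S.linkingFaces i k X (S.face i x)) :
      q ∉ T := by
    obtain ⟨v, ⟨hv, -⟩, rfl⟩ := mem_linkingFaces.1 hq
    exact (mem_trees.1 hT).face_notMem h (hv ▸ hx)
  rw [← card_product]
  refine card_le_card_of_injOn (fun t => insert t.2 t.1) (fun ⟨T, q⟩ ht => ?_)
    fun ⟨T, q⟩ ht ⟨T', q'⟩ ht' heq => ?_
  · obtain ⟨hT, hq⟩ := mem_product.1 ht
    obtain ⟨v, ⟨hv, hv'⟩, rfl⟩ := mem_linkingFaces.1 hq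
    rw [← hv] at hx ⊢
    exact mem_trees.2 ((mem_trees.1 hT).attach hx hv')
  · obtain ⟨hT, hq⟩ := mem_product.1 ht
    obtain ⟨hT', hq'⟩ := mem_product.1 ht'
    dsimp only at hT hq hT' hq' heq
    obtain rfl : q = q' :=
      (mem_insert.1 (heq ▸ mem_insert_self q T)).resolve_right (hnotMem hT' hq)
    rw [← erase_insert (hnotMem hT hq), heq, erase_insert (hnotMem hT' hq)]

theorem two_mul_card_linkingFaces_le (x : W) :
    2 * #(S.linkingFaces i k X (S.face i x)) ≤ #(S.boundary i x) := by
  classical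
  refine (mul_card_image_le_card _ 2 fun q hq => ?_).trans (card_le_card fun v hv => ?_)
  · obtain ⟨v, hv, rfl⟩ := mem_image.1 hq
    rw [mem_filter_univ] at hv
    rw [← card_pair (S.nbr_ne j v).symm]
    refine card_le_card fun u hu => ?_
    rcases mem_insert.1 hu with rfl | hu
    · simp [hv]
    · rw [mem_singleton.1 hu, mem_filter, mem_filter_univ, h.nbr_comm, S.face_nbr h.ij.symm,
        S.face_nbr h.ij.symm, S.face_nbr h.jk]
      exact ⟨hv, rfl⟩
  · rw [mem_filter_univ] at hv
    exact mem_boundary.2 hv.1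

theorem two_pow_card_spannedFaces_insert_le {d : ℕ} (hd : #(S.boundary i x) ≤ 2 * (d + 1))
    (hx : S.face i x ∉ X) (hx' : S.face i (S.nbr i x) ∈ X)
    (ih : 2 ^ (#(S.spannedFaces i k X) + 1) ≤ 2 ^ #X * #(S.trees i k X) ^ d) :
    2 ^ (#(S.spannedFaces i k (insert (S.face i x) X)) + 1) ≤
      2 ^ #(insert (S.face i x) X) * #(S.trees i k (insert (S.face i x) X)) ^ d := by
  set r := #(S.linkingFaces i k X (S.face i x))
  have hr : 0 < r := card_pos.2 ⟨_, mem_linkingFaces.2 ⟨x, ⟨rfl, hx'⟩, rfl⟩⟩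
  have hrd : r ≤ d + 1 := by
    have := h.two_mul_card_linkingFaces_le (X := X) x
    lia
  calc 2 ^ (#(S.spannedFaces i k (insert (S.face i x) X)) + 1)
      ≤ 2 ^ (#(S.spannedFaces i k X) + r + 1) := by
        gcongr
        · exact one_le_two
        · exact card_spannedFaces_insert_le h.ik _
    _ = 2 ^ (#(S.spannedFaces i k X) + 1) * 2 ^ r := by ring
    _ ≤ 2 ^ #X * #(S.trees i k X) ^ d * (2 * r ^ d) := by
        gcongr
        exact two_pow_le_two_mul_pow hr hrd
    _ = 2 ^ (#X + 1) * (#(S.trees i k X) * r) ^ d := by ring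
    _ ≤ _ := by
        rw [card_insert_of_notMem hx]
        gcongr
        exact h.card_trees_mul_le hx

theorem two_pow_card_faces_le (hG : G.Connected) {d : ℕ}
    (hd : ∀ v, #(S.boundary i v) ≤ 2 * (d + 1)) :
    2 ^ (#(S.faces k) + 1) ≤ 2 ^ #(S.faces i) * #(S.trees i k (S.faces i)) ^ d := by
  rw [← S.spannedFaces_faces i k]
  refine S.faces_induction i hG
    (p := fun X => 2 ^ (#(S.spannedFaces i k X) + 1) ≤ 2 ^ #X * #(S.trees i k X) ^ d)
    (fun v => ?_) fun X x ih hx hx' => h.two_pow_card_spannedFaces_insert_le (hd x) hx hx' ih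
  have htree : 0 < #(S.trees i k {S.face i v}) := card_pos.2 ⟨∅, mem_trees.2 (.singleton v)⟩
  rw [spannedFaces_singleton h.ik, card_empty, card_singleton]
  exact Nat.le_mul_of_pos_right _ (Nat.pow_pos htree)

open scoped Classical in
/-- The edge sets of the Hamilton cycles given by the spanning trees. -/
noncomputable def treeCycles : Finset (Set (Sym2 W)) :=
  (S.trees i k (S.faces i)).image fun T => (h.switchGraph T).edgeSet

theorem exists_isTree_of_mem_treeCycles {s : Set (Sym2 W)} (hs : s ∈ h.treeCycles) :
    ∃ T, S.IsTree i k (S.faces i) T ∧ s = (h.switchGraph T).edgeSet := by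
  obtain ⟨T, hT, rfl⟩ := mem_image.1 hs
  exact ⟨T, mem_trees.1 hT, rfl⟩

theorem card_treeCycles : #h.treeCycles = #(S.trees i k (S.faces i)) := by
  refine card_image_of_injOn fun T hT T' hT' heq => ?_
  have hmem (v : W) : S.face k v ∈ T ↔ S.face k v ∈ T' := by
    rw [← h.switchGraph_adj_nbr_left_iff, ← h.switchGraph_adj_nbr_left_iff,
      ← edgeSet_inj.1 heq]
  have hsub {T} (hT : T ∈ S.trees i k (S.faces i)) {q} (hq : q ∈ T) : ∃ v, S.face k v = q := by
    simpa [faces] using (mem_trees.1 hT).subset_faces hq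
  ext q
  constructor <;> intro hq
  · obtain ⟨v, rfl⟩ := hsub hT hq
    exact (hmem v).1 hq
  · obtain ⟨v, rfl⟩ := hsub hT' hq
    exact (hmem v).2 hq

theorem treeCycles_subset [DecidableEq W] [Nonempty W] :
    (h.treeCycles : Set (Set (Sym2 W))) ⊆ hamiltonCycles G := by
  intro s hs
  obtain ⟨T, hT, rfl⟩ := h.exists_isTree_of_mem_treeCycles hs
  exact hT.mem_hamiltonCycles h

/-- The cycles on the right contain the edge from `v` to `nbr i v` for every `v`, whereas a spanning
tree for the colours `i`, `k` is too small to contain every face of colour `k`. -/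
theorem disjoint_treeCycles (h' : S.IsQuadrangular k j i) (hik : #(S.faces i) ≤ #(S.faces k)) :
    Disjoint h.treeCycles h'.treeCycles := by
  rw [Finset.disjoint_left]
  intro s hs hs'
  obtain ⟨T, hT, rfl⟩ := h.exists_isTree_of_mem_treeCycles hs
  obtain ⟨T', -, heq⟩ := h'.exists_isTree_of_mem_treeCycles hs'
  obtain ⟨q, hq, hqT⟩ := exists_mem_notMem_of_card_lt_card (s := T) (t := S.faces k)
    (by have := hT.card_add_one h; lia)
  obtain ⟨v, -, rfl⟩ := mem_image.1 hq
  refine hqT (h.switchGraph_adj_nbr_left_iff.1 ?_)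
  rw [edgeSet_inj.1 heq]
  exact h'.switchGraph_adj_nbr_right T' v

theorem swap : S.IsQuadrangular j i k :=
  ⟨h.ij.symm, h.jk, h.ik, h.card_boundary⟩

theorem two_pow_card_faces_le_pow [DecidableEq W] (hG : G.Connected) {d : ℕ}
    (hi : ∀ v, #(S.boundary i v) ≤ 2 * (d + 1)) (hj : ∀ v, #(S.boundary j v) ≤ 2 * (d + 1))
    (hcard : #(S.faces i) + #(S.faces j) = #(S.faces k) + 2) :
    2 ^ #(S.faces k) ≤ (hamiltonCycles G).ncard ^ (2 * d) := by
  have := hG.nonempty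
  have hle {i j : Fin 3} (h : S.IsQuadrangular i j k) :
      #(S.trees i k (S.faces i)) ≤ (hamiltonCycles G).ncard := by
    rw [← h.card_treeCycles, ← Set.ncard_coe_finset]
    exact Set.ncard_le_ncard h.treeCycles_subset
  refine Nat.le_of_mul_le_mul_left ?_ (Nat.two_pow_pos (#(S.faces k) + 2))
  calc 2 ^ (#(S.faces k) + 2) * 2 ^ #(S.faces k)
      = 2 ^ (#(S.faces k) + 1) * 2 ^ (#(S.faces k) + 1) := by ring
    _ ≤ 2 ^ #(S.faces i) * #(S.trees i k (S.faces i)) ^ d *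
          (2 ^ #(S.faces j) * #(S.trees j k (S.faces j)) ^ d) :=
        Nat.mul_le_mul (h.two_pow_card_faces_le hG hi) (h.swap.two_pow_card_faces_le hG hj)
    _ ≤ 2 ^ #(S.faces i) * (hamiltonCycles G).ncard ^ d *
          (2 ^ #(S.faces j) * (hamiltonCycles G).ncard ^ d) := by
        gcongr
        exacts [hle h, hle h.swap]
    _ = 2 ^ (#(S.faces i) + #(S.faces j)) * (hamiltonCycles G).ncard ^ (2 * d) := by ring
    _ = _ := by rw [hcard]

theorem card_eq_four_mul : Fintype.card W = 4 * #(S.faces k) := by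
  rw [S.card_eq_sum_boundary k, mul_comm]
  refine sum_const_nat fun f hf => ?_
  obtain ⟨v, -, rfl⟩ := mem_image.1 hf
  exact h.card_boundary v

theorem four_le_ncard_hamiltonCycles [DecidableEq W] (h' : S.IsQuadrangular k j i)
    (hG : G.Connected) : 4 ≤ (hamiltonCycles G).ncard := by
  classical
  have := hG.nonempty
  have hik : #(S.faces i) = #(S.faces k) := by
    have := h.card_eq_four_mul
    have := h'.card_eq_four_mul
    lia
  have htwo {i k : Fin 3} (h : S.IsQuadrangular i j k) (h' : S.IsQuadrangular k j i)
      (hik : #(S.faces i) = #(S.faces k)) : 2 ≤ #h.treeCycles := by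
    have hle := h.two_pow_card_faces_le hG (d := 1) fun v => (h'.card_boundary v).le
    rw [← h.card_treeCycles, hik, pow_succ, pow_one] at hle
    exact Nat.le_of_mul_le_mul_left hle (Nat.two_pow_pos _)
  calc 4 ≤ #h.treeCycles + #h'.treeCycles := add_le_add (htwo h h' hik) (htwo h' h hik.symm)
    _ = #(h.treeCycles ∪ h'.treeCycles) :=
        (card_union_of_disjoint (h.disjoint_treeCycles h' hik.le)).symm
    _ ≤ (hamiltonCycles G).ncard := by
        rw [← Set.ncard_coe_finset, coe_union]
        exact Set.ncard_le_ncard (Set.union_subset h.treeCycles_subset h'.treeCycles_subset)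

end IsQuadrangular

end Fintype

end FaceSystem

/-! ### Complexes of Euler characteristic two -/

section LinearAlgebra

open Module Finset

variable {K α β γ U : Type*} [Field K] [Fintype α] [Fintype β] [Fintype γ]

theorem card_le_finrank_range_add_one [AddCommGroup U] [Module K U] (T : (α → K) →ₗ[K] U)
    (hT : ∀ x, T x = 0 → ∀ i j, x i = x j) :
    Fintype.card α ≤ finrank K (LinearMap.range T) + 1 := by
  have hker : LinearMap.ker T ≤ Submodule.span K {fun _ => (1 : K)} := by
    intro x hx
    rw [Submodule.mem_span_singleton]
    rcases isEmpty_or_nonempty α with hα | ⟨⟨i⟩⟩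
    · exact ⟨0, Subsingleton.elim _ _⟩
    · exact ⟨x i, funext fun j => by simpa using hT x hx i j⟩
  calc Fintype.card α = finrank K (LinearMap.range T) + finrank K (LinearMap.ker T) := by
        rw [T.finrank_range_add_finrank_ker, finrank_fintype_fun_eq_card]
    _ ≤ finrank K (LinearMap.range T) + 1 := by
        gcongr
        exact (Submodule.finrank_mono hker).trans ((finrank_span_le_card _).trans (by simp))

/-- A complex `Kᵞ → Kᵝ → Kᵅ` of Euler characteristic two whose outer (co)homology consists of the
constant functions is exact in the middle. -/
theorem exists_mulVec_eq_of_card (M : Matrix α β K) (N : Matrix β γ K) (hMN : M * N = 0)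
    (hN : ∀ x, N.mulVec x = 0 → ∀ i j, x i = x j)
    (hM : ∀ y, M.transpose.mulVec y = 0 → ∀ i j, y i = y j)
    (hcard : Fintype.card β + 2 = Fintype.card α + Fintype.card γ)
    {z : β → K} (hz : M.mulVec z = 0) : ∃ x, N.mulVec x = z := by
  have hrangeN := card_le_finrank_range_add_one N.mulVecLin hN
  have hrangeM := card_le_finrank_range_add_one M.transpose.mulVecLin hM
  have hrank : finrank K (LinearMap.range M.transpose.mulVecLin) =
      finrank K (LinearMap.range M.mulVecLin) := M.rank_transpose
  have hM := M.mulVecLin.finrank_range_add_finrank_ker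
  rw [finrank_fintype_fun_eq_card] at hM
  have hle : LinearMap.range N.mulVecLin ≤ LinearMap.ker M.mulVecLin := by
    rintro _ ⟨x, rfl⟩
    simp [hMN]
  have hker : z ∈ LinearMap.ker M.mulVecLin := hz
  rwa [← Submodule.eq_of_le_of_finrank_le hle (by lia)] at hker

end LinearAlgebra

/-! ### Faces of cubic plane graphs -/

section Cycle

open SimpleGraph

variable {W : Type*} [DecidableEq W] {G : SimpleGraph W} {u v : W} {c : G.Walk u u}

theorem card_filter_mem_edges_of_isCycle (hc : c.IsCycle) (hv : v ∈ c.support) :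
    (c.edges.toFinset.filter (v ∈ ·)).card = 2 := by
  rw [← hc.ncard_neighborSet_toSubgraph_eq_two hv, ← Set.ncard_coe_finset]
  refine (Set.ncard_congr (fun w _ => s(v, w)) (fun w hw => ?_)
    (fun a b _ _ hab => Sym2.congr_right.1 hab) fun e he => ?_).symm
  · have : s(v, w) ∈ c.edges := Walk.mem_edges_toSubgraph c |>.1 hw
    simpa using this
  · obtain ⟨he, w, rfl⟩ := Finset.mem_filter.1 he
    exact ⟨w, (Walk.mem_edges_toSubgraph c).2 (List.mem_toFinset.1 he), rfl⟩

end Cycle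

namespace PlaneGraph

open SimpleGraph Finset

variable {P : PlaneGraph V} {f g k : Finset (Sym2 V)} {u v : V} {e : Sym2 V}

/-- The set of vertices on the edge set `f`, in particular the set of vertices of a face. -/
def verts (f : Finset (Sym2 V)) : Finset V := {v | ∃ e ∈ f, v ∈ e}

@[simp]
theorem mem_verts : v ∈ verts f ↔ ∃ e ∈ f, v ∈ e := by
  simp [verts]

theorem mem_verts_of_mem (he : e ∈ f) (hv : v ∈ e) : v ∈ verts f :=
  mem_verts.2 ⟨e, he, hv⟩

/-- The finite set of edges of `P`. -/
noncomputable def edges (P : PlaneGraph V) : Finset (Sym2 V) := P.G.edgeSet.toFinite.toFinset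

@[simp]
theorem mem_edges : e ∈ P.edges ↔ e ∈ P.G.edgeSet :=
  Set.Finite.mem_toFinset _

/-- The set of edges at the vertex `v`. -/
noncomputable def edgesAt (P : PlaneGraph V) (v : V) : Finset (Sym2 V) := {e ∈ P.edges | v ∈ e}

theorem mem_edgesAt : e ∈ P.edgesAt v ↔ e ∈ P.G.edgeSet ∧ v ∈ e := by
  simp [edgesAt]

theorem subset_edges (hf : f ∈ P.faces) : f ⊆ P.edges := by
  obtain ⟨u, c, -, rfl⟩ := P.face_cycle f hf
  exact fun e he => mem_edges.2 (c.edges_subset_edgeSet (List.mem_toFinset.1 he))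

theorem mem_edgeSet_of_mem (hf : f ∈ P.faces) (he : e ∈ f) : e ∈ P.G.edgeSet :=
  mem_edges.1 (subset_edges hf he)

theorem verts_edges_toFinset {c : P.G.Walk u u} (hc : c.IsCycle) :
    verts c.edges.toFinset = c.support.toFinset := by
  ext v
  simp [Walk.mem_support_iff_exists_mem_edges_of_not_nil hc.not_nil]

theorem verts_nonempty (hf : f ∈ P.faces) : (verts f).Nonempty := by
  obtain ⟨u, c, hc, rfl⟩ := P.face_cycle f hf
  exact ⟨u, by simp [verts_edges_toFinset hc]⟩

theorem card_filter_mem (hf : f ∈ P.faces) (hv : v ∈ verts f) : #{e ∈ f | v ∈ e} = 2 := by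
  obtain ⟨u, c, hc, rfl⟩ := P.face_cycle f hf
  rw [verts_edges_toFinset hc, List.mem_toFinset] at hv
  exact card_filter_mem_edges_of_isCycle hc hv

theorem even_card_filter_mem (hf : f ∈ P.faces) (v : V) : Even #{e ∈ f | v ∈ e} := by
  by_cases hv : v ∈ verts f
  · exact card_filter_mem hf hv ▸ even_two
  · rw [filter_eq_empty_iff.2 fun e he hve => hv (mem_verts_of_mem he hve)]
    exact Even.zero

theorem card_verts (hf : f ∈ P.faces) : #(verts f) = #f := by
  have hdouble := sum_card_bipartiteAbove_eq_sum_card_bipartiteBelow (s := verts f) (t := f)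
    (fun v e => v ∈ e)
  have habove : ∀ v ∈ verts f, #(bipartiteAbove (fun v e => v ∈ e) f v) = 2 :=
    fun v hv => card_filter_mem hf hv
  have hbelow : ∀ e ∈ f, #(bipartiteBelow (fun v e => v ∈ e) (verts f) e) = 2 := fun e he => by
    rw [← Sym2.card_toFinset_of_not_isDiag e
      (not_isDiag_of_mem_edgeSet _ (mem_edgeSet_of_mem hf he))]
    congr 1
    ext v
    simpa [bipartiteBelow] using fun hv => ⟨e, he, hv⟩
  rw [sum_const_nat habove, sum_const_nat hbelow] at hdouble
  lia

theorem filter_mem_eq_pair (hf : f ∈ P.faces) (hg : g ∈ P.faces) (hfg : f ≠ g) (hef : e ∈ f)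
    (heg : e ∈ g) : {k ∈ P.faces | e ∈ k} = ({f, g} : Finset _) := by
  refine (eq_of_subset_of_card_le (fun k hk => ?_) ?_).symm
  · rcases mem_insert.1 hk with rfl | hk
    · exact mem_filter.2 ⟨hf, hef⟩
    · exact mem_filter.2 (mem_singleton.1 hk ▸ ⟨hg, heg⟩)
  · rw [P.edge_two_faces e (mem_edgeSet_of_mem hf hef), card_pair hfg]

theorem eq_or_eq_of_mem (hf : f ∈ P.faces) (hg : g ∈ P.faces) (hk : k ∈ P.faces) (hfg : f ≠ g)
    (hef : e ∈ f) (heg : e ∈ g) (hek : e ∈ k) : k = f ∨ k = g := by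
  have : k ∈ {k ∈ P.faces | e ∈ k} := mem_filter.2 ⟨hk, hek⟩
  simpa [filter_mem_eq_pair hf hg hfg hef heg] using this

theorem exists_faces_of_mem_edgeSet (he : e ∈ P.G.edgeSet) :
    ∃ f ∈ P.faces, ∃ g ∈ P.faces, f ≠ g ∧ e ∈ f ∧ e ∈ g := by
  obtain ⟨f, g, hfg, h⟩ := card_eq_two.1 (P.edge_two_faces e he)
  have hf : f ∈ {k ∈ P.faces | e ∈ k} := h ▸ mem_insert_self f _
  have hg : g ∈ {k ∈ P.faces | e ∈ k} := h ▸ mem_insert_of_mem (mem_singleton_self g)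
  rw [mem_filter] at hf hg
  exact ⟨f, hf.1, g, hg.1, hfg, hf.2, hg.2⟩

theorem filter_mem_edgesAt (hf : f ∈ P.faces) (v : V) :
    {e ∈ P.edgesAt v | e ∈ f} = ({e ∈ f | v ∈ e} : Finset _) := by
  ext e
  simp only [mem_filter, mem_edgesAt]
  exact ⟨fun h => ⟨h.2, h.1.2⟩, fun h => ⟨⟨mem_edgeSet_of_mem hf h.1, h.2⟩, h.1⟩⟩

namespace Cubic

variable (h : P.Cubic)

include h

theorem card_edgesAt (v : V) : #(P.edgesAt v) = 3 := by
  rw [← h v, ← Set.ncard_coe_finset]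
  refine (Set.ncard_congr (fun w _ => s(v, w)) (fun w hw => ?_)
    (fun a b _ _ hab => Sym2.congr_right.1 hab) fun e he => ?_).symm
  · exact mem_edgesAt.2 ⟨hw, Sym2.mem_mk_left v w⟩
  · obtain ⟨he, w, rfl⟩ := mem_edgesAt.1 he
    exact ⟨w, he, rfl⟩

theorem existsUnique_notMem (hf : f ∈ P.faces) (hv : v ∈ verts f) :
    ∃! e, e ∈ P.edgesAt v ∧ e ∉ f := by
  have hcard := card_filter_add_card_filter_not (s := P.edgesAt v) (· ∈ f)
  rw [filter_mem_edgesAt hf, card_filter_mem hf hv, h.card_edgesAt] at hcard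
  obtain ⟨e, he⟩ := card_eq_one.1 (show #{e ∈ P.edgesAt v | e ∉ f} = 1 by lia)
  refine ⟨e, mem_filter.1 (he ▸ mem_singleton_self e), fun e' he' => ?_⟩
  exact mem_singleton.1 (he ▸ mem_filter.2 he')

theorem exists_common_edge (hf : f ∈ P.faces) (hg : g ∈ P.faces) (hfv : v ∈ verts f)
    (hgv : v ∈ verts g) : ∃ e ∈ P.edgesAt v, e ∈ f ∧ e ∈ g := by
  by_contra! hc
  have hd : Disjoint {e ∈ P.edgesAt v | e ∈ f} {e ∈ P.edgesAt v | e ∈ g} :=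
    disjoint_filter.2 hc
  have hle := card_le_card (union_subset (filter_subset (· ∈ f) (P.edgesAt v))
    (filter_subset (· ∈ g) (P.edgesAt v)))
  rw [card_union_of_disjoint hd, filter_mem_edgesAt hf, filter_mem_edgesAt hg,
    card_filter_mem hf hfv, card_filter_mem hg hgv, h.card_edgesAt] at hle
  lia

theorem card_faces_at (v : V) : #{f ∈ P.faces | v ∈ verts f} = 3 := by
  have hdouble := sum_card_bipartiteAbove_eq_sum_card_bipartiteBelow (s := P.edgesAt v)
    (t := {f ∈ P.faces | v ∈ verts f}) (fun e f => e ∈ f)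
  have habove : ∀ e ∈ P.edgesAt v,
      #(bipartiteAbove (fun e f => e ∈ f) {f ∈ P.faces | v ∈ verts f} e) = 2 := by
    intro e he
    obtain ⟨he, hve⟩ := mem_edgesAt.1 he
    rw [← P.edge_two_faces e he, bipartiteAbove, filter_filter]
    congr! 2 with f
    simpa using fun hef => ⟨e, hef, hve⟩
  have hbelow : ∀ f ∈ ({f ∈ P.faces | v ∈ verts f} : Finset _),
      #(bipartiteBelow (fun e f => e ∈ f) (P.edgesAt v) f) = 2 := by
    intro f hf
    obtain ⟨hf, hv⟩ := mem_filter.1 hf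
    rw [← card_filter_mem hf hv, ← filter_mem_edgesAt hf, bipartiteBelow]
  rw [sum_const_nat habove, sum_const_nat hbelow, h.card_edgesAt] at hdouble
  lia

theorem exists_face (v : V) : ∃ f ∈ P.faces, v ∈ verts f := by
  obtain ⟨f, hf⟩ := card_pos.1 (h.card_faces_at v ▸ three_pos)
  exact ⟨f, mem_filter.1 hf⟩

end Cubic

/-- The face-edge incidence matrix modulo two. -/
def faceMatrix (P : PlaneGraph V) : Matrix P.faces P.edges (ZMod 2) :=
  fun f e => if e.1 ∈ f.1 then 1 else 0

/-- The edge-vertex incidence matrix modulo two. -/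
def edgeMatrix (P : PlaneGraph V) : Matrix P.edges V (ZMod 2) :=
  fun e v => if v ∈ e.1 then 1 else 0

section Indicator

variable (p : Sym2 V → Prop) [DecidablePred p]

theorem faceMatrix_mulVec_indicator (f : P.faces) :
    P.faceMatrix.mulVec (fun e => if p e then 1 else 0) f = #{e ∈ f.1 | p e} := by
  calc ∑ e : P.edges, (if e.1 ∈ f.1 then 1 else 0) * (if p e then 1 else 0)
      = ∑ e ∈ P.edges, (if e ∈ f.1 ∧ p e then 1 else 0 : ZMod 2) := by
        rw [← sum_coe_sort P.edges]
        simp only [← ite_and, mul_ite, mul_one, mul_zero, and_comm]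
    _ = #{e ∈ f.1 | p e} := by
        rw [sum_boole, ← filter_filter, filter_mem_eq_inter,
          inter_eq_right.2 (subset_edges f.2)]

theorem edgeMatrix_transpose_mulVec_indicator (v : V) :
    P.edgeMatrix.transpose.mulVec (fun e => if p e then 1 else 0) v = #{e ∈ P.edgesAt v | p e} := by
  calc ∑ e : P.edges, (if v ∈ e.1 then 1 else 0) * (if p e then 1 else 0)
      = ∑ e ∈ P.edges, (if v ∈ e ∧ p e then 1 else 0 : ZMod 2) := by
        rw [← sum_coe_sort P.edges]
        simp only [← ite_and, mul_ite, mul_one, mul_zero, and_comm]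
    _ = #{e ∈ P.edgesAt v | p e} := by rw [sum_boole, ← filter_filter, edgesAt]

end Indicator

theorem edgeMatrix_mulVec (x : V → ZMod 2) (h : s(u, v) ∈ P.edges) :
    P.edgeMatrix.mulVec x ⟨s(u, v), h⟩ = x u + x v := by
  have huv : ({w | w ∈ s(u, v)} : Finset V) = {u, v} := by ext; simp
  simp only [Matrix.mulVec, dotProduct, edgeMatrix, ite_mul, one_mul, zero_mul]
  rw [← sum_filter, huv, sum_pair (mem_edges.1 h).ne]

theorem faceMatrix_transpose_mulVec (y : P.faces → ZMod 2) {f g : P.faces} (hfg : f ≠ g)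
    (he : e ∈ P.edges) (hef : e ∈ f.1) (heg : e ∈ g.1) :
    P.faceMatrix.transpose.mulVec y ⟨e, he⟩ = y f + y g := by
  have hpair : ({k | e ∈ k.1} : Finset P.faces) = {f, g} := by
    ext k
    rw [mem_filter_univ, mem_insert, mem_singleton]
    refine ⟨fun hk => ?_, by rintro (rfl | rfl) <;> assumption⟩
    simpa only [← Subtype.ext_iff] using
      eq_or_eq_of_mem f.2 g.2 k.2 (Subtype.coe_injective.ne hfg) hef heg hk
  simp only [Matrix.mulVec, dotProduct, faceMatrix, ite_mul, one_mul, zero_mul,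
    Matrix.transpose_apply]
  rw [← sum_filter, hpair, sum_pair hfg]

theorem faceMatrix_mul_edgeMatrix (P : PlaneGraph V) : P.faceMatrix * P.edgeMatrix = 0 := by
  ext f v
  exact (faceMatrix_mulVec_indicator (v ∈ ·) f).trans
    ((ZMod.natCast_eq_zero_iff_even).2 (even_card_filter_mem f.2 v))

theorem eq_of_edgeMatrix_mulVec_eq_zero (hP : P.G.Connected) (x : V → ZMod 2)
    (hx : P.edgeMatrix.mulVec x = 0) (u v : V) : x u = x v := by
  refine eq_of_reachable (fun u v h => ?_) (hP.preconnected u v)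
  rw [← CharTwo.add_eq_zero, ← edgeMatrix_mulVec x (mem_edges.2 h), hx]
  rfl

theorem card_edges_add_two (P : PlaneGraph V) :
    Fintype.card P.edges + 2 = Fintype.card P.faces + Fintype.card V := by
  have h := P.euler
  rw [Set.ncard_eq_toFinset_card P.G.edgeSet P.G.edgeSet.toFinite] at h
  rw [Fintype.card_coe, Fintype.card_coe, edges]
  lia

namespace Cubic

variable (h : P.Cubic) (hP : P.G.Connected)

include h hP

theorem eq_of_faceMatrix_transpose_mulVec_eq_zero (y : P.faces → ZMod 2)
    (hy : P.faceMatrix.transpose.mulVec y = 0) (f g : P.faces) : y f = y g := by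
  have hat {v : V} {f g : P.faces} (hf : v ∈ verts f.1) (hg : v ∈ verts g.1) : y f = y g := by
    by_cases hfg : f = g
    · rw [hfg]
    obtain ⟨e, he, hef, heg⟩ := h.exists_common_edge f.2 g.2 hf hg
    have he := mem_edges.2 (mem_edgesAt.1 he).1
    rw [← CharTwo.add_eq_zero, ← faceMatrix_transpose_mulVec y hfg he hef heg, hy]
    rfl
  have hface (v : V) : ∃ f : P.faces, v ∈ verts f.1 := by simpa using h.exists_face v
  choose F hF using hface
  obtain ⟨u, hu⟩ := verts_nonempty f.2
  obtain ⟨v, hv⟩ := verts_nonempty g.2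
  suffices y (F u) = y (F v) from (hat hu (hF u)).trans (this.trans (hat (hF v) hv))
  refine eq_of_reachable (x := fun v => y (F v)) (fun u v huv => ?_) (hP.preconnected u v)
  obtain ⟨f, hf, -, -, -, hef, -⟩ := exists_faces_of_mem_edgeSet (P := P) (e := s(u, v)) huv
  exact (hat (g := ⟨f, hf⟩) (hF u) (mem_verts_of_mem hef (Sym2.mem_mk_left u v))).trans
    (hat (mem_verts_of_mem hef (Sym2.mem_mk_right u v)) (hF v))

theorem exists_cut {p : Sym2 V → Prop} [DecidablePred p]
    (hp : ∀ f ∈ P.faces, Even #{e ∈ f | p e}) :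
    ∃ x : V → ZMod 2, ∀ u v, P.G.Adj u v → (x u = x v ↔ ¬ p s(u, v)) := by
  obtain ⟨x, hx⟩ := exists_mulVec_eq_of_card P.faceMatrix P.edgeMatrix
    P.faceMatrix_mul_edgeMatrix (eq_of_edgeMatrix_mulVec_eq_zero hP)
    (h.eq_of_faceMatrix_transpose_mulVec_eq_zero hP) P.card_edges_add_two
    (z := fun e => if p e then 1 else 0)
    (funext fun f => (faceMatrix_mulVec_indicator p f).trans
      (ZMod.natCast_eq_zero_iff_even.2 (hp f.1 f.2)))
  refine ⟨x, fun u v huv => ?_⟩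
  rw [← CharTwo.add_eq_zero, ← edgeMatrix_mulVec x (mem_edges.2 huv), hx]
  simp

theorem exists_face_potential {p : Sym2 V → Prop} [DecidablePred p]
    (hp : ∀ v, Even #{e ∈ P.edgesAt v | p e}) :
    ∃ y : Finset (Sym2 V) → ZMod 2, ∀ f ∈ P.faces, ∀ g ∈ P.faces, f ≠ g → ∀ e ∈ f, e ∈ g →
      (y f = y g ↔ ¬ p e) := by
  obtain ⟨y, hy⟩ := exists_mulVec_eq_of_card P.edgeMatrix.transpose P.faceMatrix.transpose
    (by rw [← Matrix.transpose_mul, P.faceMatrix_mul_edgeMatrix, Matrix.transpose_zero])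
    (h.eq_of_faceMatrix_transpose_mulVec_eq_zero hP)
    (by simpa using eq_of_edgeMatrix_mulVec_eq_zero hP) (by rw [P.card_edges_add_two, add_comm])
    (z := fun e => if p e then 1 else 0)
    (funext fun v => (edgeMatrix_transpose_mulVec_indicator p v).trans
      (ZMod.natCast_eq_zero_iff_even.2 (hp v)))
  refine ⟨fun f => if hf : f ∈ P.faces then y ⟨f, hf⟩ else 0, fun f hf g hg hfg e hef heg => ?_⟩
  have hfg' : (⟨f, hf⟩ : P.faces) ≠ ⟨g, hg⟩ := fun h => hfg (congrArg Subtype.val h)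
  dsimp only
  rw [dif_pos hf, dif_pos hg, ← CharTwo.add_eq_zero,
    ← faceMatrix_transpose_mulVec y hfg' (subset_edges hf hef) hef heg, hy]
  simp

end Cubic

namespace ThreeConnected

variable (h3 : P.ThreeConnected)

include h3

theorem eq_of_forall_adj {α : Type*} {x : V → α} {s : Set V} (hs : s.ncard ≤ 2)
    (hx : ∀ a b, a ∉ s → b ∉ s → P.G.Adj a b → x a = x b) (hu : u ∉ s) (hv : v ∉ s) :
    x u = x v :=
  eq_of_reachable (G := P.G.induce sᶜ) (x := fun a => x a) (fun a b hab => hx a b a.2 b.2 hab)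
    ((h3.2 s hs).preconnected ⟨u, hu⟩ ⟨v, hv⟩)

theorem eq_of_forall_adj_of_ne {α : Type*} {x : V → α} {a b : V} (huv : u ≠ v) (hab : a ≠ b)
    (hdisj : ∀ w ∈ s(u, v), w ∉ s(a, b))
    (hx : ∀ c d, P.G.Adj c d → s(c, d) ≠ s(u, v) → s(c, d) ≠ s(a, b) → x c = x d) :
    x u = x v := by
  simp only [Sym2.mem_iff, forall_eq_or_imp, forall_eq, not_or] at hdisj
  obtain ⟨⟨hua, hub⟩, hva, hvb⟩ := hdisj
  have hcut {w : V} (hw : w ∈ s(u, v)) {c d : V} (hc : c ∉ ({w, b} : Set V))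
      (hd : d ∉ ({w, b} : Set V)) : x c = x d := by
    refine h3.eq_of_forall_adj ((Set.ncard_insert_le w {b}).trans (by simp))
      (fun c d hc hd hcd => hx c d hcd (fun he => ?_) fun he => ?_) hc hd
    · rcases Sym2.mem_iff.1 (he ▸ hw) with rfl | rfl <;> simp at hc hd
    · rcases Sym2.mem_iff.1 (he ▸ Sym2.mem_mk_right a b) with rfl | rfl <;> simp at hc hd
  calc x u = x a := hcut (w := v) (by simp) (by simp [*]) (by simp [Ne.symm hva, hab])
    _ = x v := hcut (w := u) (by simp) (by simp [Ne.symm hua, hab]) (by simp [hvb, huv.symm])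

theorem connected_s12 : P.G.Connected := by
  have h := h3.2 ∅ (by simp)
  rw [Set.compl_empty] at h
  exact (induceUnivIso P.G).connected_iff.1 h

end ThreeConnected

namespace Cubic

variable (h : P.Cubic)

include h

theorem eq_of_mem_of_mem (hf : f ∈ P.faces) (hg : g ∈ P.faces) (hfg : f ≠ g)
    {e₁ e₂ : Sym2 V} (h₁f : e₁ ∈ f) (h₁g : e₁ ∈ g) (h₂f : e₂ ∈ f) (h₂g : e₂ ∈ g)
    (hv₁ : v ∈ e₁) (hv₂ : v ∈ e₂) : e₁ = e₂ := by
  by_contra hne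
  have hvf := mem_verts_of_mem h₁f hv₁
  have hpair : ({e₁, e₂} : Finset _) = {e ∈ f | v ∈ e} :=
    eq_of_subset_of_card_le (by simp [insert_subset_iff, *])
      (by rw [card_filter_mem hf hvf, card_pair hne])
  obtain ⟨e, ⟨he, hef⟩, -⟩ := h.existsUnique_notMem hf hvf
  obtain ⟨he, hve⟩ := mem_edgesAt.1 he
  have eq_g {k : Finset (Sym2 V)} (hk : k ∈ P.faces) (hek : e ∈ k) : k = g := by
    obtain ⟨e', he', hf', hk'⟩ := h.exists_common_edge hf hk hvf (mem_verts_of_mem hek hve)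
    have hmem : e' ∈ ({e₁, e₂} : Finset _) :=
      hpair ▸ mem_filter.2 ⟨hf', (mem_edgesAt.1 he').2⟩
    have hg' : e' ∈ g := by
      rcases mem_insert.1 hmem with rfl | hmem
      exacts [h₁g, mem_singleton.1 hmem ▸ h₂g]
    exact (eq_or_eq_of_mem hf hg hk hfg hf' hg' hk').resolve_left fun hkf => hef (hkf ▸ hek)
  obtain ⟨k, hk, k', hk', hne', hek, hek'⟩ := exists_faces_of_mem_edgeSet he
  exact hne' ((eq_g hk hek).trans (eq_g hk' hek').symm)

variable (h3 : P.ThreeConnected)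

include h3

/-- Two common edges would form an edge cut, and deleting an end of each would disconnect the
graph. -/
theorem eq_of_common_faces (hf : f ∈ P.faces) (hg : g ∈ P.faces) (hfg : f ≠ g) {e₁ e₂ : Sym2 V}
    (h₁f : e₁ ∈ f) (h₁g : e₁ ∈ g) (h₂f : e₂ ∈ f) (h₂g : e₂ ∈ g) : e₁ = e₂ := by
  by_contra hne
  have hdisj : ∀ v ∈ e₁, v ∉ e₂ := fun v hv₁ hv₂ =>
    hne (h.eq_of_mem_of_mem hf hg hfg h₁f h₁g h₂f h₂g hv₁ hv₂)
  have hiff {k : Finset (Sym2 V)} (hk : k ∈ P.faces) : e₁ ∈ k ↔ e₂ ∈ k := by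
    constructor <;> intro hek
    · rcases eq_or_eq_of_mem hf hg hk hfg h₁f h₁g hek with rfl | rfl <;> assumption
    · rcases eq_or_eq_of_mem hf hg hk hfg h₂f h₂g hek with rfl | rfl <;> assumption
  have heven : ∀ k ∈ P.faces, Even #{e ∈ k | e = e₁ ∨ e = e₂} := fun k hk => by
    rw [filter_or, filter_eq', filter_eq']
    by_cases hek : e₁ ∈ k
    · rw [if_pos hek, if_pos ((hiff hk).1 hek), card_union_of_disjoint (by simpa using hne)]
      exact even_two
    · rw [if_neg hek, if_neg (mt (hiff hk).2 hek)]
      exact Even.zero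
  obtain ⟨x, hx⟩ := h.exists_cut h3.connected_s12 heven
  induction e₁ with | _ u v
  induction e₂ with | _ a b
  have huv := mem_edgeSet_of_mem hf h₁f
  refine (hx u v huv).1 ?_ (Or.inl rfl)
  refine h3.eq_of_forall_adj_of_ne huv.ne (mem_edgeSet_of_mem hf h₂f).ne hdisj
    fun c d hcd h₁ h₂ => (hx c d hcd).2 (not_or.2 ⟨h₁, h₂⟩)

theorem mem_of_mem_verts (hf : f ∈ P.faces) (huv : P.G.Adj u v) (hu : u ∈ verts f)
    (hv : v ∈ verts f) : s(u, v) ∈ f := by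
  obtain ⟨g, hg, -, -, -, hgu, -⟩ := exists_faces_of_mem_edgeSet (P := P) (e := s(u, v)) huv
  by_cases hfg : f = g
  · rwa [hfg]
  obtain ⟨e₁, he₁, hf₁, hg₁⟩ :=
    h.exists_common_edge hf hg hu (mem_verts_of_mem hgu (Sym2.mem_mk_left u v))
  obtain ⟨e₂, he₂, hf₂, hg₂⟩ :=
    h.exists_common_edge hf hg hv (mem_verts_of_mem hgu (Sym2.mem_mk_right u v))
  obtain rfl := h.eq_of_common_faces h3 hf hg hfg hf₁ hg₁ hf₂ hg₂
  rwa [← (Sym2.mem_and_mem_iff huv.ne).1 ⟨(mem_edgesAt.1 he₁).2, (mem_edgesAt.1 he₂).2⟩]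

end Cubic

theorem exists_matching (hf : f ∈ P.faces) (h4 : #f = 4) :
    ∃ N ⊆ f, ∀ v ∈ verts f, ∃! e, e ∈ N ∧ v ∈ e := by
  obtain ⟨u, c, hc, rfl⟩ := P.face_cycle f hf
  rw [List.toFinset_card_of_nodup hc.edges_nodup, Walk.length_edges] at h4
  rw [verts_edges_toFinset hc]
  match c, h4, hc with
  | .cons (v := a) _ (.cons (v := b) _ (.cons (v := d) _ (.cons _ .nil))), _, hc =>
    have hn := hc.support_nodup
    simp only [Walk.support_cons, Walk.support_nil, List.tail_cons, List.nodup_cons,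
      List.mem_cons, List.not_mem_nil, or_false, not_or] at hn
    refine ⟨{s(u, a), s(b, d)}, by simp [insert_subset_iff], fun v hv => ?_⟩
    have hv : (v = u ∨ v = a) ∨ (v = b ∨ v = d) := by
      simp only [Walk.support_cons, Walk.support_nil, List.mem_toFinset, List.mem_cons,
        List.not_mem_nil, or_false] at hv
      tauto
    rcases hv with hv | hv
    · refine ⟨s(u, a), by simp [hv], ?_⟩
      simp only [mem_insert, mem_singleton]
      rintro e ⟨rfl | rfl, he⟩
      · rfl
      · rw [Sym2.mem_iff] at he
        grind
    · refine ⟨s(b, d), by simp [hv], ?_⟩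
      simp only [mem_insert, mem_singleton]
      rintro e ⟨rfl | rfl, he⟩
      · rw [Sym2.mem_iff] at he
        grind
      · rfl

/-- A proper colouring of the faces of `P` with three colours: faces with a common edge have
different colours. Its values on sets of edges that are not faces are irrelevant. -/
def IsFaceColoring (P : PlaneGraph V) (col : Finset (Sym2 V) → Fin 3) : Prop :=
  ∀ f ∈ P.faces, ∀ g ∈ P.faces, f ≠ g → ∀ e ∈ f, e ∈ g → col f ≠ col g

section Factor

variable {F : Finset (Finset (Sym2 V))}

theorem exists_matching_of_factor (hF : F ⊆ P.faces) (hF4 : ∀ f ∈ F, #f = 4)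
    (hFv : ∀ v, ∃! f, f ∈ F ∧ v ∈ verts f) :
    ∃ M : Finset (Sym2 V), (∀ e ∈ M, ∃ f ∈ F, e ∈ f) ∧ ∀ v, #{e ∈ P.edgesAt v | e ∈ M} = 1 := by
  choose! N hNf hN using fun f (hf : f ∈ F) => exists_matching (hF hf) (hF4 f hf)
  refine ⟨F.biUnion N, fun e he => ?_, fun v => ?_⟩
  · obtain ⟨f, hf, he⟩ := mem_biUnion.1 he
    exact ⟨f, hf, hNf f hf he⟩
  obtain ⟨f, ⟨hf, hvf⟩, huniq⟩ := hFv v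
  obtain ⟨e, ⟨he, hve⟩, heuniq⟩ := hN f hf v hvf
  refine card_eq_one.2 ⟨e, eq_singleton_iff_unique_mem.2 ⟨?_, fun e' he' => ?_⟩⟩
  · exact mem_filter.2 ⟨mem_edgesAt.2 ⟨mem_edgeSet_of_mem (hF hf) (hNf f hf he), hve⟩,
      mem_biUnion.2 ⟨f, hf, he⟩⟩
  · obtain ⟨he', hM⟩ := mem_filter.1 he'
    obtain ⟨g, hg, heg⟩ := mem_biUnion.1 hM
    have hve' := (mem_edgesAt.1 he').2
    obtain rfl := huniq g ⟨hg, mem_verts_of_mem (hNf g hg heg) hve'⟩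
    exact heuniq e' ⟨heg, hve'⟩

theorem Cubic.exists_isFaceColoring_of_factor (h : P.Cubic) (hP : P.G.Connected)
    (hF : F ⊆ P.faces) (hF4 : ∀ f ∈ F, #f = 4) (hFv : ∀ v, ∃! f, f ∈ F ∧ v ∈ verts f) :
    ∃ col, P.IsFaceColoring col ∧ ∀ f, col f = 2 → #f = 4 := by
  obtain ⟨M, hMF, hM⟩ := exists_matching_of_factor hF hF4 hFv
  have heven (v : V) : Even #{e ∈ P.edgesAt v | e ∉ M} := by
    have hcard := card_filter_add_card_filter_not (s := P.edgesAt v) (· ∈ M)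
    rw [hM, h.card_edgesAt] at hcard
    exact ⟨1, by lia⟩
  obtain ⟨y, hy⟩ := h.exists_face_potential hP heven
  have eq_of_mem {f g : Finset (Sym2 V)} (hf : f ∈ F) (hg : g ∈ F) {e} (hef : e ∈ f)
      (heg : e ∈ g) : f = g := by
    induction e with | _ u v
    have huv := Sym2.mem_mk_left u v
    exact (hFv u).unique ⟨hf, mem_verts_of_mem hef huv⟩ ⟨hg, mem_verts_of_mem heg huv⟩
  refine ⟨fun f => if f ∈ F then Fin.last 2 else Fin.castSucc (n := 2) (y f),
    fun f hf g hg hfg e hef heg => ?_, fun f hf => hF4 f ?_⟩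
  · have hyfg (hfF : f ∉ F) (hgF : g ∉ F) : y f ≠ y g := by
      rw [ne_eq, hy f hf g hg hfg e hef heg, not_not]
      intro heM
      obtain ⟨k, hk, hek⟩ := hMF e heM
      rcases eq_or_eq_of_mem hf hg (hF hk) hfg hef heg hek with rfl | rfl
      exacts [hfF hk, hgF hk]
    by_cases hfF : f ∈ F <;> by_cases hgF : g ∈ F
    · exact absurd (eq_of_mem hfF hgF hef heg) hfg
    · simpa only [hfF, hgF, if_true, if_false] using (Fin.castSucc_ne_last _).symm
    · simpa only [hfF, hgF, if_true, if_false] using Fin.castSucc_ne_last _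
    · simpa only [hfF, hgF, if_false] using (Fin.castSucc_injective 2).ne (hyfg hfF hgF)
  · by_contra hfF
    simp only [hfF, if_false] at hf
    exact Fin.castSucc_ne_last _ hf

theorem Cubic.exists_isFaceColoring (h : P.Cubic) (hP : P.G.Connected)
    (h2F : P.HasFacialSquareTwoFactor) :
    ∃ col, P.IsFaceColoring col ∧ ∀ f, col f = 2 → #f = 4 := by
  obtain ⟨F, hF, hF4, hFv⟩ := h2F
  exact h.exists_isFaceColoring_of_factor hP hF hF4 (by simpa only [mem_verts] using hFv)

end Factor

theorem three_le_card (hf : f ∈ P.faces) : 3 ≤ #f := by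
  obtain ⟨u, c, hc, rfl⟩ := P.face_cycle f hf
  rw [List.toFinset_card_of_nodup hc.edges_nodup, Walk.length_edges]
  exact hc.three_le_length

theorem Cubic.two_mul_card_faces (h : P.Cubic) : 2 * #P.faces = Fintype.card V + 4 := by
  classical
  have heuler := P.euler
  have hsum := P.G.sum_degrees_eq_twice_card_edges
  have hdeg (v : V) : P.G.degree v = 3 := by
    rw [← h v, ← card_neighborSet_eq_degree, Set.ncard_eq_toFinset_card', Set.toFinset_card]
  simp only [hdeg, sum_const, card_univ, smul_eq_mul] at hsum
  rw [Set.ncard_eq_toFinset_card', ← edgeFinset] at heuler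
  lia

theorem reachable_fromEdgeSet (hf : f ∈ P.faces) (hu : u ∈ verts f) (hv : v ∈ verts f) :
    (fromEdgeSet (f : Set (Sym2 V))).Reachable u v := by
  obtain ⟨w, c, hc, rfl⟩ := P.face_cycle f hf
  rw [verts_edges_toFinset hc, List.mem_toFinset] at hu hv
  have hw {u : V} (hu : u ∈ c.support) :
      (fromEdgeSet (c.edges.toFinset : Set (Sym2 V))).Reachable w u :=
    ⟨(c.takeUntil u hu).transfer _ fun e he => by
      rw [edgeSet_fromEdgeSet]
      have hec := c.edges_takeUntil_subset_edges hu he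
      exact ⟨List.mem_toFinset.2 hec, not_isDiag_of_mem_edgeSet _ (c.edges_subset_edgeSet hec)⟩⟩
  exact (hw hu).symm.trans (hw hv)

namespace IsFaceColoring

variable {col : Finset (Sym2 V) → Fin 3} {i j : Fin 3} (hcol : P.IsFaceColoring col)
  (h : P.Cubic)

include hcol h

theorem eq_of_mem_verts (hf : f ∈ P.faces) (hg : g ∈ P.faces) (hvf : v ∈ verts f)
    (hvg : v ∈ verts g) (hfg : col f = col g) : f = g := by
  obtain ⟨e, -, hef, heg⟩ := h.exists_common_edge hf hg hvf hvg
  by_contra hne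
  exact hcol f hf g hg hne e hef heg hfg

theorem exists_face (i : Fin 3) (v : V) : ∃ f ∈ P.faces, v ∈ verts f ∧ col f = i := by
  have himage : ({f ∈ P.faces | v ∈ verts f} : Finset _).image col = univ := by
    rw [← card_eq_iff_eq_univ, card_image_of_injOn, h.card_faces_at, Fintype.card_fin]
    intro f hf g hg hfg
    rw [mem_coe, mem_filter] at hf hg
    exact hcol.eq_of_mem_verts h hf.1 hg.1 hf.2 hg.2 hfg
  obtain ⟨f, hf, hi⟩ := mem_image.1 (himage.symm ▸ mem_univ i)
  rw [mem_filter] at hf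
  exact ⟨f, hf.1, hf.2, hi⟩

/-- The face of colour `i` at the vertex `v`. -/
noncomputable def faceAt (i : Fin 3) (v : V) : Finset (Sym2 V) := (hcol.exists_face h i v).choose

theorem faceAt_mem (i : Fin 3) (v : V) : hcol.faceAt h i v ∈ P.faces :=
  (hcol.exists_face h i v).choose_spec.1

theorem mem_verts_faceAt (i : Fin 3) (v : V) : v ∈ verts (hcol.faceAt h i v) :=
  (hcol.exists_face h i v).choose_spec.2.1

theorem col_faceAt (i : Fin 3) (v : V) : col (hcol.faceAt h i v) = i :=
  (hcol.exists_face h i v).choose_spec.2.2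

theorem faceAt_col (hf : f ∈ P.faces) (hv : v ∈ verts f) : hcol.faceAt h (col f) v = f :=
  hcol.eq_of_mem_verts h (hcol.faceAt_mem h _ v) hf (hcol.mem_verts_faceAt h _ v) hv
    (hcol.col_faceAt h _ v)

theorem faceAt_eq_iff : hcol.faceAt h i u = hcol.faceAt h i v ↔ u ∈ verts (hcol.faceAt h i v) := by
  refine ⟨fun hu => hu ▸ hcol.mem_verts_faceAt h i u, fun hu => ?_⟩
  simpa only [hcol.col_faceAt h i v] using hcol.faceAt_col h (hcol.faceAt_mem h i v) hu

theorem exists_nbr (i : Fin 3) (v : V) :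
    ∃ w, P.G.Adj v w ∧ ∀ u, P.G.Adj v u → (s(v, u) ∉ hcol.faceAt h i v ↔ u = w) := by
  obtain ⟨e, ⟨he, hei⟩, huniq⟩ :=
    h.existsUnique_notMem (hcol.faceAt_mem h i v) (hcol.mem_verts_faceAt h i v)
  obtain ⟨he, w, rfl⟩ := mem_edgesAt.1 he
  refine ⟨w, he, fun u hu => ⟨fun hui => ?_, fun huw => huw ▸ hei⟩⟩
  exact Sym2.congr_right.1 (huniq s(v, u) ⟨mem_edgesAt.2 ⟨hu, Sym2.mem_mk_left v u⟩, hui⟩)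

/-- The neighbour of the vertex `v` along the edge at `v` off the face of colour `i`. -/
noncomputable def nbr (i : Fin 3) (v : V) : V := (hcol.exists_nbr h i v).choose

theorem adj_nbr (i : Fin 3) (v : V) : P.G.Adj v (hcol.nbr h i v) :=
  (hcol.exists_nbr h i v).choose_spec.1

theorem notMem_faceAt_iff (huv : P.G.Adj u v) :
    s(u, v) ∉ hcol.faceAt h i u ↔ v = hcol.nbr h i u :=
  (hcol.exists_nbr h i u).choose_spec.2 v huv

theorem nbr_injective (v : V) : Function.Injective (hcol.nbr h · v) := by
  intro i j (hij : hcol.nbr h i v = hcol.nbr h j v)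
  have hadj := hcol.adj_nbr h i v
  obtain ⟨f, hf, g, hg, hfg, hef, heg⟩ := exists_faces_of_mem_edgeSet ((mem_edgeSet P.G).2 hadj)
  have col_ne {k} (hk : hcol.nbr h i v = hcol.nbr h k v) {f} (hf : f ∈ P.faces)
      (hef : s(v, hcol.nbr h i v) ∈ f) : col f ≠ k := by
    rintro rfl
    refine (hcol.notMem_faceAt_iff h hadj).2 hk ?_
    rwa [hcol.faceAt_col h hf (mem_verts_of_mem hef (Sym2.mem_mk_left _ _))]
  have := hcol f hf g hg hfg _ hef heg
  have := col_ne rfl hf hef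
  have := col_ne rfl hg heg
  have := col_ne hij hf hef
  have := col_ne hij hg heg
  lia

theorem exists_eq_nbr (huv : P.G.Adj u v) : ∃ i, v = hcol.nbr h i u := by
  by_contra! hne
  have hmem (i : Fin 3) : s(u, v) ∈ hcol.faceAt h i u :=
    not_not.1 fun hi => hne i ((hcol.notMem_faceAt_iff h huv).1 hi)
  have faceAt_ne {i j : Fin 3} (hij : i ≠ j) : hcol.faceAt h i u ≠ hcol.faceAt h j u := fun hf =>
    hij (by rw [← hcol.col_faceAt h i u, hf, hcol.col_faceAt])
  rcases eq_or_eq_of_mem (hcol.faceAt_mem h 0 u) (hcol.faceAt_mem h 1 u) (hcol.faceAt_mem h 2 u)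
    (faceAt_ne (by decide)) (hmem 0) (hmem 1) (hmem 2) with hf | hf
  all_goals exact faceAt_ne (by decide) hf

variable (h3 : P.ThreeConnected)

include h3

theorem faceAt_ne_iff (huv : P.G.Adj u v) :
    hcol.faceAt h i v ≠ hcol.faceAt h i u ↔ v = hcol.nbr h i u := by
  rw [← hcol.notMem_faceAt_iff h huv, ne_eq, hcol.faceAt_eq_iff h, not_iff_not]
  exact ⟨h.mem_of_mem_verts h3 (hcol.faceAt_mem h i u) huv (hcol.mem_verts_faceAt h i u),
    fun he => mem_verts_of_mem he (Sym2.mem_mk_right u v)⟩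

/-- The face system of the plane graph `P` with face colouring `col`, the faces being labelled by
their edge sets. -/
noncomputable def faceSystem : FaceSystem P.G (Finset (Sym2 V)) where
  face := hcol.faceAt h
  nbr := hcol.nbr h
  adj_iff {u v} := ⟨hcol.exists_eq_nbr h, by rintro ⟨i, rfl⟩; exact hcol.adj_nbr h i u⟩
  nbr_nbr i v := by
    have hadj := hcol.adj_nbr h i v
    exact ((hcol.faceAt_ne_iff h h3 hadj.symm).1 ((hcol.faceAt_ne_iff h h3 hadj).2 rfl).symm).symm
  face_nbr_eq_iff {i j v} := by
    rw [← not_iff_not, ← ne_eq, hcol.faceAt_ne_iff h h3 (hcol.adj_nbr h i v), not_not]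
    exact (hcol.nbr_injective h v).eq_iff
  reflTransGen {i u v} huv := by
    have hreach := reachable_fromEdgeSet (hcol.faceAt_mem h i v) ((hcol.faceAt_eq_iff h).1 huv)
      (hcol.mem_verts_faceAt h i v)
    refine Relation.ReflTransGen.mono (fun a b hab => ?_) _ _
      ((reachable_iff_reflTransGen _ _).1 hreach)
    obtain ⟨hmem, hab⟩ := (fromEdgeSet_adj _).1 hab
    have hadj : P.G.Adj a b := mem_edgeSet_of_mem (hcol.faceAt_mem h i v) hmem
    obtain ⟨j, rfl⟩ := hcol.exists_eq_nbr h hadj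
    refine ⟨j, ?_, rfl⟩
    rintro rfl
    refine (hcol.notMem_faceAt_iff h hadj).2 rfl ?_
    rwa [(hcol.faceAt_eq_iff h).2 (mem_verts_of_mem hmem (Sym2.mem_mk_left _ _))]

theorem card_boundary (i : Fin 3) (v : V) :
    #((hcol.faceSystem h h3).boundary i v) = #(hcol.faceAt h i v) := by
  rw [← card_verts (hcol.faceAt_mem h i v)]
  congr 1
  ext u
  rw [FaceSystem.mem_boundary, ← hcol.faceAt_eq_iff h]
  rfl

theorem card_boundary_le_sup_card (i : Fin 3) (v : V) :
    #((hcol.faceSystem h h3).boundary i v) ≤ P.faces.sup card :=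
  hcol.card_boundary h h3 i v ▸ le_sup (hcol.faceAt_mem h i v)

theorem exists_card_boundary_eq_sup_card :
    ∃ i v, #((hcol.faceSystem h h3).boundary i v) = P.faces.sup card := by
  obtain ⟨v⟩ := h3.connected_s12.nonempty
  obtain ⟨f, hf, hsup⟩ := exists_mem_eq_sup P.faces ⟨_, hcol.faceAt_mem h 0 v⟩ card
  obtain ⟨u, hu⟩ := verts_nonempty hf
  exact ⟨col f, u, by rw [hcol.card_boundary, hcol.faceAt_col h hf hu, hsup]⟩

theorem faces_faceSystem (i : Fin 3) :
    (hcol.faceSystem h h3).faces i = {f ∈ P.faces | col f = i} := by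
  ext f
  simp only [FaceSystem.faces, mem_image, mem_univ, true_and, mem_filter]
  constructor
  · rintro ⟨v, rfl⟩
    exact ⟨hcol.faceAt_mem h i v, hcol.col_faceAt h i v⟩
  · rintro ⟨hf, rfl⟩
    obtain ⟨v, hv⟩ := verts_nonempty hf
    exact ⟨v, hcol.faceAt_col h hf hv⟩

theorem card_faces :
    #P.faces = #((hcol.faceSystem h h3).faces 0) + #((hcol.faceSystem h h3).faces 1) +
      #((hcol.faceSystem h h3).faces 2) := by
  simp only [faces_faceSystem]
  rw [card_eq_sum_card_fiberwise (t := univ) (f := col) (by simp), Fin.sum_univ_three]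

theorem isQuadrangular_of_sup_card_eq_four (hsup : P.faces.sup card = 4) {i j k : Fin 3}
    (hij : i ≠ j) (hik : i ≠ k) (hjk : j ≠ k) : (hcol.faceSystem h h3).IsQuadrangular i j k := by
  refine ⟨hij, hik, hjk, fun v => ?_⟩
  have := hsup ▸ hcol.card_boundary_le_sup_card h h3 k v
  obtain ⟨m, hm⟩ := FaceSystem.even_card_boundary (hcol.faceSystem h h3) k v
  have := hcol.card_boundary h h3 k v ▸ three_le_card (hcol.faceAt_mem h k v)
  lia

theorem isQuadrangular (h4 : ∀ f, col f = 2 → #f = 4) :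
    (hcol.faceSystem h h3).IsQuadrangular 0 1 2 :=
  ⟨by decide, by decide, by decide, fun v => by
    rw [hcol.card_boundary, h4 _ (hcol.col_faceAt h 2 v)]⟩

section Quadrangular

variable (hS : (hcol.faceSystem h h3).IsQuadrangular 0 1 2)

include hS

theorem card_faces_eq : #P.faces = 2 * #((hcol.faceSystem h h3).faces 2) + 2 := by
  have := hS.card_eq_four_mul
  have := h.two_mul_card_faces
  lia

theorem card_faces_add_card_faces :
    #((hcol.faceSystem h h3).faces 0) + #((hcol.faceSystem h h3).faces 1) =
      #((hcol.faceSystem h h3).faces 2) + 2 := by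
  have := hcol.card_faces_eq h h3 hS
  have := hcol.card_faces h h3
  lia

theorem exists_sup_card_eq : ∃ d, 1 ≤ d ∧ d + 1 ≤ #((hcol.faceSystem h h3).faces 2) ∧
    P.faces.sup card = 2 * (d + 1) := by
  obtain ⟨i, v, hsup⟩ := hcol.exists_card_boundary_eq_sup_card h h3
  obtain ⟨m, hm⟩ := FaceSystem.even_card_boundary (hcol.faceSystem h h3) i v
  have := FaceSystem.two_mul_card_boundary_le (hcol.faceSystem h h3) i v
  have := hS.card_boundary v ▸ hcol.card_boundary_le_sup_card h h3 2 v
  have := hS.card_eq_four_mul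
  exact ⟨m - 1, by lia, by lia, by lia⟩

theorem card_faces_eq_two_of_sup_card_eq_four (hsup : P.faces.sup card = 4) :
    #((hcol.faceSystem h h3).faces 2) = 2 := by
  have h₀ := hcol.isQuadrangular_of_sup_card_eq_four h h3 hsup (i := 1) (j := 2) (k := 0)
    (by decide) (by decide) (by decide)
  have h₁ := hcol.isQuadrangular_of_sup_card_eq_four h h3 hsup (i := 2) (j := 0) (k := 1)
    (by decide) (by decide) (by decide)
  have := hcol.card_faces_add_card_faces h h3 hS
  have := hS.card_eq_four_mul
  have := h₀.card_eq_four_mul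
  have := h₁.card_eq_four_mul
  lia

end Quadrangular

end IsFaceColoring

end PlaneGraph

/-- A cubic 3-connected bipartite plane graph with a 2-factor of facial 4-cycles
has at least `3^(2|P*|/Δ(P*)²)` different Hamilton cycles, where `|P*|` is the
number of faces and `Δ(P*)` the maximum face boundary length. -/
theorem stmt12 (P : PlaneGraph V)
    (hCubic : P.Cubic) (hBip : P.Bipartite) (h3 : P.ThreeConnected)
    (h2F : P.HasFacialSquareTwoFactor) :
    (3 : ℝ) ^ ((2 * (P.faces.card : ℝ)) / ((P.faces.sup Finset.card : ℕ) : ℝ) ^ 2) ≤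
      ({s : Set (Sym2 V) | ∃ (v : V) (w : P.G.Walk v v),
          w.IsHamiltonianCycle ∧ s = {e | e ∈ w.edges}}.ncard : ℝ) := by
  obtain ⟨col, hcol, hcol4⟩ := hCubic.exists_isFaceColoring h3.connected_s12 h2F
  have hS : (hcol.faceSystem hCubic h3).IsQuadrangular 0 1 2 :=
    hcol.isQuadrangular hCubic h3 hcol4
  obtain ⟨d, hd, hdn, hsup⟩ := hcol.exists_sup_card_eq hCubic h3 hS
  change _ ≤ ((hamiltonCycles P.G).ncard : ℝ)
  rw [hcol.card_faces_eq hCubic h3 hS, hsup]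
  have hle (i : Fin 3) (v : V) : ((hcol.faceSystem hCubic h3).boundary i v).card ≤ 2 * (d + 1) :=
    hsup ▸ hcol.card_boundary_le_sup_card hCubic h3 i v
  obtain rfl | hd := hd.eq_or_lt
  · have h4 : 4 ≤ (hamiltonCycles P.G).ncard := hS.four_le_ncard_hamiltonCycles
      (hcol.isQuadrangular_of_sup_card_eq_four hCubic h3 hsup (by decide) (by decide) (by decide))
      h3.connected_s12
    rw [hcol.card_faces_eq_two_of_sup_card_eq_four hCubic h3 hS hsup]
    calc (3 : ℝ) ^ (2 * ((2 * 2 + 2 : ℕ) : ℝ) / ((2 * (1 + 1) : ℕ) : ℝ) ^ 2)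
        ≤ 3 ^ (1 : ℝ) := Real.rpow_le_rpow_of_exponent_le (by norm_num) (by norm_num)
      _ ≤ 4 := by norm_num
      _ ≤ (hamiltonCycles P.G).ncard := by exact_mod_cast h4
  · exact three_rpow_le_of_two_pow_le_pow hd hdn (hS.two_pow_card_faces_le_pow h3.connected_s12
      (hle 0) (hle 1) (hcol.card_faces_add_card_faces hCubic h3 hS))
end
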